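/- Case B2, all powers: Let l1, l2 be distinct odd primes with l1 ≡ 3 (mod 4) and l1 > 3, let r1, r2 ≥ 1, and let N = l1^{r1} l2^{r2}. Assume the multiplicative order of p modulo l1^{r1} is φ(l1^{r1})/2, the multiplicative order of p modulo l2^{r2} is φ(l2^{r2}), and f = φ(N)/2. Set h1 = h(Q(√-l1)). Then there exist integers a, b with 4p^{h1} = a² + l1 b² and a ≡ -2 p^{(l1-1+2h1)/4} (mod l1) such that for all integers t1, t2 with 0 ≤ t1 < r1 and 0 ≤ t2 < r2: G(χ^{l1^{t1} l2^{t2}}) = p^{f/2} if the Legendre symbol (l2/l1) = 1, while G(χ^{l1^{t1} l2^{t2}}) = p^{f/2 - h1 · l1^{t1} l2^{t2}} · ((a + b √-l1)/2)^{2 l1^{t1} l2^{t2}} if (l2/l1) = -1; G(χ^{l1^{r1} l2^{t2}}) = p^{f/2}; and G(χ^{l1^{t1} l2^{r2}}) = -p^{(f - h1 · l1^{t1} φ(l2^{r2}))/2} · ((a + b √-l1)/2)^{l1^{t1} φ(l2^{r2})}. -/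

import Mathlib

open Complex Polynomial IntermediateField

/-- The complex primitive `p`-th root of unity `exp(2πi/p)`. -/
noncomputable def zetaP (p : ℕ) : ℂ := Complex.exp (2 * Real.pi * Complex.I / p)

/-- The Gauss sum `G(χ^λ) = ∑_{x ∈ F, x ≠ 0} χ^λ(x) ζ_p^{T(x)}`, where
`T` is the trace map from `F` down to `ZMod p`. -/
noncomputable def gaussSumN (p : ℕ) {F : Type} [Field F] [Fintype F] [Algebra (ZMod p) F]
    (χ : MulChar F ℂ) (lam : ℕ) : ℂ :=
  letI : DecidableEq F := Classical.decEq F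
  ∑ x ∈ Finset.univ.filter (fun x : F => x ≠ 0),
    (χ ^ lam) x * zetaP p ^ (Algebra.trace (ZMod p) F x).val

/-- `√-m = i√m ∈ ℂ`. -/
noncomputable def sqrtNeg (m : ℕ) : ℂ := Real.sqrt m * Complex.I

theorem sqrtNeg_sq (m : ℕ) : sqrtNeg m ^ 2 = -(m : ℂ) := by
  have h : ((Real.sqrt m : ℝ) : ℂ) ^ 2 = ((m : ℝ) : ℂ) := by
    rw [← Complex.ofReal_pow, Real.sq_sqrt (by positivity)]
  simp only [sqrtNeg, mul_pow, Complex.I_sq, h]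
  push_cast
  ring

theorem isIntegral_sqrtNeg (m : ℕ) : IsIntegral ℚ (sqrtNeg m) := by
  refine ⟨X ^ 2 + C (m : ℚ), monic_X_pow_add_C _ (by norm_num), ?_⟩
  simp [sqrtNeg_sq]

/-- The class number `h(ℚ(√-m))` of the quadratic field `ℚ(√-m) ⊆ ℂ`. -/
noncomputable def classNumSqrtNeg (m : ℕ) : ℕ :=
  haveI : FiniteDimensional ℚ ℚ⟮sqrtNeg m⟯ :=
    IntermediateField.adjoin.finiteDimensional (isIntegral_sqrtNeg m)
  haveI : CharZero ℚ⟮sqrtNeg m⟯ :=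
    charZero_of_injective_algebraMap (algebraMap ℚ ℚ⟮sqrtNeg m⟯).injective
  haveI : NumberField ℚ⟮sqrtNeg m⟯ := ⟨⟩
  NumberField.classNumber ℚ⟮sqrtNeg m⟯

/-- `√p* = √p` if `p ≡ 1 (mod 4)` and `i√p` if `p ≡ 3 (mod 4)`. -/
noncomputable def sqrtPStar (p : ℕ) : ℂ :=
  if p % 4 = 1 then (Real.sqrt p : ℂ) else (Real.sqrt p : ℂ) * Complex.I

namespace S18
open Filter Topology

lemma rpow_neg_diff_bound {m x y s : ℝ} (hm : 1 ≤ m) (hx : m ≤ x) (hy : m ≤ y) (hxy : |x - y| ≤ 1)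
    (hs : 1 ≤ s) (hs2 : s ≤ 2) : |x ^ (-s) - y ^ (-s)| ≤ 2 * (m ^ 2)⁻¹ := by
  have key := Convex.norm_image_sub_le_of_norm_hasDerivWithin_le (f := fun x : ℝ => x ^ (-s))
    (f' := fun x => (-s) * x ^ (-s - 1)) (s := Set.Ici m) (C := 2 * (m ^ 2)⁻¹) (x := y) (y := x)
    (fun z hz => (Real.hasDerivAt_rpow_const (Or.inl (by
      have : m ≤ z := hz
      linarith))).hasDerivWithinAt) (fun z hz => by
      have hz' : m ≤ z := hz
      have hz0 : 0 < z := by linarith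
      have hm0 : 0 < m := by linarith
      rw [norm_mul, Real.norm_eq_abs, Real.norm_eq_abs, abs_neg, abs_of_nonneg (by linarith),
        abs_of_nonneg (by positivity)]
      have h1 : z ^ (-s - 1) ≤ (m ^ 2)⁻¹ := by
        calc z ^ (-s - 1) ≤ z ^ (-2 : ℝ) :=
              Real.rpow_le_rpow_of_exponent_le (by linarith) (by linarith)
          _ = (z ^ 2)⁻¹ := by
              rw [Real.rpow_neg hz0.le]; norm_num
          _ ≤ (m ^ 2)⁻¹ := by gcongr
      have h2 : 0 ≤ z ^ (-s - 1) := by positivity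
      nlinarith) (convex_Ici m) hy hx
  have hm0 : 0 < m := by linarith
  simp only [Real.norm_eq_abs] at key
  calc _ ≤ _ := key
    _ ≤ _ := mul_le_of_le_one_right (by positivity) hxy

lemma hurwitzOdd_one {a : ℝ} (ha0 : 0 < a) (ha1 : a < 1) :
    HurwitzZeta.hurwitzZetaOdd a 1 = Real.pi / 2 * Complex.cot (Real.pi * a) := by
  have hterm : ∀ (n : ℕ) (s : ℝ), (1 / (n + a : ℂ) ^ (s : ℂ) - 1 / (n + 1 - a : ℂ) ^ (s : ℂ)) / 2
      = (((((n : ℝ) + a) ^ (-s) - ((n : ℝ) + 1 - a) ^ (-s)) / 2 : ℝ) : ℂ) := by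
    intro n s
    have h1 : (0 : ℝ) ≤ n + a := by positivity
    have h2 : (0 : ℝ) ≤ n + 1 - a := by
      have : (0 : ℝ) ≤ n := by positivity
      linarith
    rw [Real.rpow_neg h1, Real.rpow_neg h2]
    push_cast
    rw [Complex.ofReal_cpow h1, Complex.ofReal_cpow h2]
    push_cast
    simp [one_div]
  have hsum : ∀ s : ℝ, 1 < s → HurwitzZeta.hurwitzZetaOdd a s =
      ∑' n : ℕ, (((((n : ℝ) + a) ^ (-s) - ((n : ℝ) + 1 - a) ^ (-s)) / 2 : ℝ) : ℂ) := by
    intro s hs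
    have := (HurwitzZeta.hasSum_nat_hurwitzZetaOdd_of_mem_Icc (a := a) ⟨ha0.le, ha1.le⟩
      (s := (s : ℂ)) (by simpa using hs))
    rw [← this.tsum_eq]
    exact tsum_congr fun n => hterm n s
  have hlim1 : Tendsto (fun s : ℝ => HurwitzZeta.hurwitzZetaOdd a s) (𝓝[>] 1)
      (𝓝 (HurwitzZeta.hurwitzZetaOdd a 1)) := by
    have hc : Continuous (fun s : ℝ => HurwitzZeta.hurwitzZetaOdd a s) :=
      (HurwitzZeta.differentiable_hurwitzZetaOdd a).continuous.comp Complex.continuous_ofReal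
    have := (hc.tendsto 1).mono_left (nhdsWithin_le_nhds (s := Set.Ioi (1 : ℝ)))
    simpa using this
  let bd : ℕ → ℝ := fun n => if n = 0 then (a ^ (-2 : ℝ) + (1 - a) ^ (-2 : ℝ)) else 2 * ((n : ℝ) ^ 2)⁻¹
  have hbd : Summable bd := by
    rw [← summable_nat_add_iff 1]
    have : Summable (fun n : ℕ => 2 * ((n : ℝ) ^ 2)⁻¹) :=
      (Real.summable_nat_pow_inv.mpr (by norm_num)).mul_left 2
    refine ((summable_nat_add_iff 1).mpr this).congr fun n => ?_
    simp [bd]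
  have hdom := tendsto_tsum_of_dominated_convergence (𝓕 := 𝓝[>] (1 : ℝ))
    (f := fun (s : ℝ) (n : ℕ) => (((((n : ℝ) + a) ^ (-s) - ((n : ℝ) + 1 - a) ^ (-s)) / 2 : ℝ) : ℂ))
    (g := fun n : ℕ => (((((n : ℝ) + a) ^ (-1 : ℝ) - ((n : ℝ) + 1 - a) ^ (-1 : ℝ)) / 2 : ℝ) : ℂ))
    hbd (fun n => by
      refine (Complex.continuous_ofReal.tendsto _).comp ?_
      have h1 : (n + a : ℝ) ≠ 0 := by positivity
      have h2 : (n + 1 - a : ℝ) ≠ 0 := by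
        have : (0 : ℝ) ≤ n := by positivity
        linarith
      have hc : Continuous (fun s : ℝ => (((n : ℝ) + a) ^ (-s) - ((n : ℝ) + 1 - a) ^ (-s)) / 2) := by
        have c1 : Continuous (fun s : ℝ => ((n : ℝ) + a) ^ (-s)) :=
          (Real.continuous_const_rpow h1).comp continuous_neg
        have c2 : Continuous (fun s : ℝ => ((n : ℝ) + 1 - a) ^ (-s)) :=
          (Real.continuous_const_rpow h2).comp continuous_neg
        exact (c1.sub c2).div_const 2
      exact (hc.tendsto 1).mono_left nhdsWithin_le_nhds) (by
      have hI : Set.Ioc (1 : ℝ) 2 ∈ 𝓝[>] (1 : ℝ) := Ioc_mem_nhdsGT (by norm_num)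
      filter_upwards [hI] with s hs n
      rw [Complex.norm_real, Real.norm_eq_abs, abs_div, abs_two]
      rcases Nat.eq_zero_or_pos n with rfl | hn
      · simp only [bd, if_true, Nat.cast_zero, zero_add]
        have e1 : a ^ (-s) ≤ a ^ (-2 : ℝ) :=
          Real.rpow_le_rpow_of_exponent_ge ha0 ha1.le (by linarith [hs.2])
        have e2 : (1 - a) ^ (-s) ≤ (1 - a) ^ (-2 : ℝ) :=
          Real.rpow_le_rpow_of_exponent_ge (by linarith) (by linarith) (by linarith [hs.2])
        have e3 : 0 ≤ a ^ (-s) := by positivity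
        have e4 : 0 ≤ (1 - a) ^ (-s) := Real.rpow_nonneg (by linarith) _
        have : |a ^ (-s) - (1 - a) ^ (-s)| ≤ a ^ (-2 : ℝ) + (1 - a) ^ (-2 : ℝ) := by
          rw [abs_le]; constructor <;> linarith
        have := abs_nonneg (a ^ (-s) - (1 - a) ^ (-s))
        linarith
      · have hn1 : (1 : ℝ) ≤ n := by exact_mod_cast hn
        have := rpow_neg_diff_bound (m := n) (x := n + a) (y := n + 1 - a) (s := s) hn1
          (by linarith) (by linarith) (by rw [abs_le]; constructor <;> linarith) hs.1.le hs.2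
        simp only [bd, hn.ne', if_false]
        have h0 := abs_nonneg (((n : ℝ) + a) ^ (-s) - ((n : ℝ) + 1 - a) ^ (-s))
        linarith)
  have heq : HurwitzZeta.hurwitzZetaOdd a 1 =
      ∑' n : ℕ, (((((n : ℝ) + a) ^ (-1 : ℝ) - ((n : ℝ) + 1 - a) ^ (-1 : ℝ)) / 2 : ℝ) : ℂ) := by
    refine tendsto_nhds_unique hlim1 (hdom.congr' ?_)
    filter_upwards [self_mem_nhdsWithin] with s hs
    exact (hsum s hs).symm
  -- summability of the limit
  have hsumm : Summable (fun n : ℕ => (((((n : ℝ) + a) ^ (-1 : ℝ) - ((n : ℝ) + 1 - a) ^ (-1 : ℝ)) / 2 : ℝ) : ℂ)) := by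
    rw [← summable_nat_add_iff 1]
    have hs2 : Summable (fun n : ℕ => 2 * ((n : ℝ) ^ 2)⁻¹) :=
      (Real.summable_nat_pow_inv.mpr (by norm_num)).mul_left 2
    refine Summable.of_norm_bounded ((summable_nat_add_iff 1).mpr hs2) fun n => ?_
    rw [Complex.norm_real, Real.norm_eq_abs, abs_div, abs_two]
    have hn1 : (1 : ℝ) ≤ (n + 1 : ℕ) := by push_cast; linarith [(Nat.cast_nonneg n : (0 : ℝ) ≤ n)]
    have := rpow_neg_diff_bound (m := (n + 1 : ℕ)) (x := (n + 1 : ℕ) + a) (y := (n + 1 : ℕ) + 1 - a) (s := 1) hn1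
      (by linarith) (by linarith) (by rw [abs_le]; constructor <;> linarith) le_rfl (by norm_num)
    have h0 := abs_nonneg ((((n + 1 : ℕ) : ℝ) + a) ^ (-1 : ℝ) - (((n + 1 : ℕ) : ℝ) + 1 - a) ^ (-1 : ℝ))
    linarith
  have hZ : (a : ℂ) ∈ Complex.integerComplement := by
    rintro ⟨n, hn⟩
    have hn' : (n : ℝ) = a := by exact_mod_cast hn
    have h1 : (0 : ℝ) < n := by rw [hn']; exact ha0
    have h2 : (n : ℝ) < 1 := by rw [hn']; exact ha1
    have h1' : 0 < n := by exact_mod_cast h1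
    have h2' : n < 1 := by exact_mod_cast h2
    omega
  have hcot := cot_series_rep' hZ
  have hcs := (summable_cotTerm hZ).hasSum.tendsto_sum_nat
  have hct : Tendsto (fun M => ∑ n ∈ Finset.range M, ((1 / ((a : ℂ) - (n + 1)) + 1 / (a + (n + 1)))))
      atTop (𝓝 (Real.pi * Complex.cot (Real.pi * a) - 1 / a)) := by
    rw [hcot]; exact hcs
  have hA := hsumm.hasSum.tendsto_sum_nat
  rw [← heq] at hA
  have hfin : ∀ M : ℕ, ∑ n ∈ Finset.range M, (((((n : ℝ) + a) ^ (-1 : ℝ) - ((n : ℝ) + 1 - a) ^ (-1 : ℝ)) / 2 : ℝ) : ℂ)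
      = (1 / a + ∑ n ∈ Finset.range M, ((1 / ((a : ℂ) - (n + 1)) + 1 / (a + (n + 1)))) - 1 / ((M : ℂ) + a)) / 2 := by
    intro M
    induction M with
    | zero => simp
    | succ M ih =>
      rw [Finset.sum_range_succ, ih, Finset.sum_range_succ]
      simp only [Real.rpow_neg_one]
      push_cast
      rw [show (a : ℂ) - (M + 1) = - (M + 1 - a) by ring]
      rw [show (a : ℂ) + (M + 1) = (M + 1 + a) by ring]
      simp only [one_div, inv_neg]
      ring
  have hlast : Tendsto (fun M : ℕ => 1 / ((M : ℂ) + a)) atTop (𝓝 0) := by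
    have h1 : Tendsto (fun M : ℕ => ((1 / ((M : ℝ) + a) : ℝ) : ℂ)) atTop (𝓝 ((0 : ℝ) : ℂ)) := by
      refine (Complex.continuous_ofReal.tendsto _).comp ?_
      have : Tendsto (fun M : ℕ => (M : ℝ) + a) atTop atTop :=
        tendsto_atTop_add_const_right _ _ tendsto_natCast_atTop_atTop
      simp only [one_div]
      exact this.inv_tendsto_atTop
    simpa using h1
  have hB : Tendsto (fun M : ℕ => ∑ n ∈ Finset.range M, (((((n : ℝ) + a) ^ (-1 : ℝ) - ((n : ℝ) + 1 - a) ^ (-1 : ℝ)) / 2 : ℝ) : ℂ))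
      atTop (𝓝 ((1 / a + (Real.pi * Complex.cot (Real.pi * a) - 1 / a) - 0) / 2)) := by
    simp_rw [hfin]
    exact ((hct.const_add _).sub hlast).div_const 2
  have := tendsto_nhds_unique hA hB
  rw [this]; ring

end S18

namespace S18
open Filter Topology

noncomputable def chi (l : ℕ) [Fact l.Prime] : MulChar (ZMod l) ℂ :=
  (quadraticChar (ZMod l)).ringHomComp (Int.castRingHom ℂ)

noncomputable def W (l : ℕ) [Fact l.Prime] : ℤ :=
  ∑ j : ZMod l, quadraticChar (ZMod l) j * (j.val : ℤ)

lemma chi_apply (l : ℕ) [Fact l.Prime] (j : ZMod l) :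
    chi l j = ((quadraticChar (ZMod l) j : ℤ) : ℂ) := by
  simp [chi, MulChar.ringHomComp_apply]

lemma ringChar_ne_two {l : ℕ} [Fact l.Prime] (hl : l % 4 = 3) : ringChar (ZMod l) ≠ 2 := by
  rw [ZMod.ringChar_zmod_n]; omega

lemma qc_neg_one {l : ℕ} [Fact l.Prime] (hl : l % 4 = 3) : quadraticChar (ZMod l) (-1) = -1 := by
  rw [quadraticChar_neg_one (ringChar_ne_two hl), ZMod.card, ZMod.χ₄_nat_three_mod_four hl]

lemma chi_ne_one {l : ℕ} [Fact l.Prime] (hl : l % 4 = 3) : chi l ≠ 1 := by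
  rw [chi]
  exact (MulChar.ringHomComp_ne_one_iff (RingHom.injective_int _)).mpr
    (quadraticChar_ne_one (ringChar_ne_two hl))

lemma chi_quad (l : ℕ) [Fact l.Prime] : (chi l).IsQuadratic :=
  (quadraticChar_isQuadratic (ZMod l)).comp _

lemma chi_odd {l : ℕ} [Fact l.Prime] (hl : l % 4 = 3) : Function.Odd (chi l) := by
  intro j
  rw [neg_eq_neg_one_mul, map_mul, chi_apply l (-1), qc_neg_one hl]
  simp

lemma tau_norm {l : ℕ} [Fact l.Prime] (hl : l % 4 = 3) :
    ‖gaussSum (chi l) (ZMod.stdAddChar (N := l))‖ = Real.sqrt l := by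
  have h : gaussSum (chi l) (ZMod.stdAddChar (N := l)) ^ 2 = chi l (-1) * Fintype.card (ZMod l) :=
    gaussSum_sq (chi_ne_one hl) (chi_quad l) (ZMod.isPrimitive_stdAddChar l)
  rw [chi_apply, qc_neg_one hl, ZMod.card] at h
  have h2 := congrArg norm h
  simp only [norm_pow, norm_mul] at h2
  simp at h2
  rw [← h2, Real.sqrt_sq (norm_nonneg _)]

lemma sum_mul_pow_aux (e : ℂ) (n : ℕ) :
    (∑ k ∈ Finset.range n, (k : ℂ) * e ^ k) * (e - 1) =
      n * e ^ n - e * ∑ k ∈ Finset.range n, e ^ k := by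
  induction n with
  | zero => simp
  | succ n ih =>
    rw [Finset.sum_range_succ, add_mul, ih, Finset.sum_range_succ]
    push_cast; ring

lemma sum_zmod_eq_range {M : Type*} [AddCommMonoid M] (n : ℕ) [NeZero n] (f : ℕ → M) :
    ∑ j : ZMod n, f j.val = ∑ k ∈ Finset.range n, f k := by
  refine Finset.sum_bij (fun j _ => j.val) ?_ ?_ ?_ ?_
  · intro j _; exact Finset.mem_range.mpr (ZMod.val_lt j)
  · intro a _ b _ h; exact ZMod.val_injective n h
  · intro k hk; exact ⟨(k : ZMod n), Finset.mem_univ _, ZMod.val_cast_of_lt (Finset.mem_range.mp hk)⟩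
  · intro j _; rfl

lemma inv_sub_one_eq {l : ℕ} [Fact l.Prime] (j : ZMod l) (hj : j ≠ 0) :
    ((l : ℂ) / (ZMod.stdAddChar j - 1)) = ∑ b : ZMod l, (b.val : ℂ) * ZMod.stdAddChar (b * j) := by
  set e := ZMod.stdAddChar j with he
  have he1 : e ≠ 1 := by
    intro h
    apply hj
    apply ZMod.injective_stdAddChar
    rw [← he, h, AddChar.map_zero_eq_one]
  have hel : e ^ l = 1 := by
    rw [he, ← AddChar.map_nsmul_eq_pow]
    simp
  have h1 : ∀ b : ZMod l, (b.val : ℂ) * ZMod.stdAddChar (b * j) = (b.val : ℂ) * e ^ b.val := by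
    intro b
    rw [he, ← AddChar.map_nsmul_eq_pow, nsmul_eq_mul, ZMod.natCast_zmod_val]
  rw [Finset.sum_congr rfl fun b _ => h1 b, sum_zmod_eq_range l (fun k => (k : ℂ) * e ^ k)]
  rw [div_eq_iff (sub_ne_zero.mpr he1), sum_mul_pow_aux, hel]
  have : (∑ k ∈ Finset.range l, e ^ k) = 0 := by
    rw [geom_sum_eq he1, hel]; simp
  rw [this]; ring

lemma cot_eq {l : ℕ} [Fact l.Prime] (j : ZMod l) (hj : j ≠ 0) :
    Complex.cot (Real.pi * ((j.val / l : ℝ) : ℂ)) = I * (1 + 2 / (ZMod.stdAddChar j - 1)) := by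
  have he : Complex.exp (2 * Real.pi * I * ((j.val / l : ℝ) : ℂ)) = ZMod.stdAddChar j := by
    conv_rhs => rw [← ZMod.natCast_zmod_val j]
    have := ZMod.stdAddChar_coe (N := l) (j.val : ℤ)
    push_cast at this
    rw [this]
    congr 1
    push_cast
    ring
  rw [Complex.cot_pi_eq_exp_ratio, he]
  set e := ZMod.stdAddChar j with he
  have he1 : e ≠ 1 := by
    intro h
    apply hj
    apply ZMod.injective_stdAddChar
    rw [← he, h, AddChar.map_zero_eq_one]
  have h1 : e - 1 ≠ 0 := sub_ne_zero.mpr he1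
  have h2 : 1 - e ≠ 0 := sub_ne_zero.mpr he1.symm
  rw [div_eq_iff (mul_ne_zero I_ne_zero h2)]
  rw [show I * (1 + 2 / (e - 1)) * (I * (1 - e)) = (I * I) * ((1 + 2 / (e - 1)) * (1 - e)) by ring,
    I_mul_I]
  field_simp
  ring

theorem LFunction_one_norm (l : ℕ) [Fact l.Prime] (hl : l % 4 = 3) :
    ‖DirichletCharacter.LFunction (chi l) 1‖ = Real.pi * |(W l : ℝ)| / (l * Real.sqrt l) := by
  have hl0 : (l : ℂ) ≠ 0 := by exact_mod_cast (Fact.out : l.Prime).ne_zero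
  have hval : ∀ j : ZMod l, chi l j * HurwitzZeta.hurwitzZetaOdd (ZMod.toAddCircle j) 1 =
      chi l j * (Real.pi / 2 * I) + Real.pi * I / l *
        ∑ b : ZMod l, (b.val : ℂ) * (chi l j * ZMod.stdAddChar (b * j)) := by
    intro j
    by_cases hj : j = 0
    · subst hj
      simp [MulChar.map_zero]
    · rw [ZMod.toAddCircle_apply]
      have hpos : 0 < j.val := Nat.pos_of_ne_zero (by simpa [ZMod.val_eq_zero] using hj)
      have hlpos : (0 : ℝ) < l := by exact_mod_cast (Fact.out : l.Prime).pos
      have h0 : (0 : ℝ) < j.val / l := by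
        have : (0 : ℝ) < j.val := by exact_mod_cast hpos
        positivity
      have h1 : (j.val / l : ℝ) < 1 := by
        rw [div_lt_one hlpos]
        exact_mod_cast ZMod.val_lt j
      rw [hurwitzOdd_one h0 h1, cot_eq j hj]
      have : ∑ b : ZMod l, (b.val : ℂ) * (chi l j * ZMod.stdAddChar (b * j)) =
          chi l j * ((l : ℂ) / (ZMod.stdAddChar j - 1)) := by
        rw [inv_sub_one_eq j hj, Finset.mul_sum]
        exact Finset.sum_congr rfl fun b _ => by ring
      rw [this]
      field_simp
  have hL : DirichletCharacter.LFunction (chi l) 1 = Real.pi * I / (l : ℂ) ^ 2 *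
      (gaussSum (chi l) (ZMod.stdAddChar (N := l)) * W l) := by
    rw [DirichletCharacter.LFunction, ZMod.LFunction_def_odd (chi_odd hl)]
    rw [Finset.sum_congr rfl fun j _ => hval j, Finset.sum_add_distrib, ← Finset.sum_mul,
      MulChar.sum_eq_zero_of_ne_one (chi_ne_one hl), zero_mul, zero_add, ← Finset.mul_sum,
      Finset.sum_comm]
    have h2 : ∀ b : ZMod l, ∑ j : ZMod l, (b.val : ℂ) * (chi l j * ZMod.stdAddChar (b * j)) =
        gaussSum (chi l) (ZMod.stdAddChar (N := l)) * (((quadraticChar (ZMod l) b * (b.val : ℤ)) : ℤ) : ℂ) := by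
      intro b
      by_cases hb : b = 0
      · simp [hb]
      · have h3 := gaussSum_mulShift (chi l) (ZMod.stdAddChar (N := l)) (Units.mk0 b hb)
        have h4 : chi l b * chi l b = 1 := by
          rw [chi_apply, ← Int.cast_mul, ← map_mul, ← pow_two, quadraticChar_sq_one' hb]; simp
        have h5 : gaussSum (chi l) ((ZMod.stdAddChar (N := l)).mulShift b) =
            chi l b * gaussSum (chi l) (ZMod.stdAddChar (N := l)) := by
          rw [← h3, Units.val_mk0, ← mul_assoc, h4, one_mul]
        rw [← Finset.mul_sum]
        have h6 : ∑ j : ZMod l, (chi l j * ZMod.stdAddChar (b * j)) =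
          gaussSum (chi l) ((ZMod.stdAddChar (N := l)).mulShift b) := by
          simp [gaussSum, AddChar.mulShift_apply]
        rw [h6, h5, chi_apply]
        push_cast
        ring
    rw [Finset.sum_congr rfl fun b _ => h2 b, ← Finset.mul_sum, W, Complex.cpow_neg_one]
    push_cast
    field_simp
  rw [hL, norm_mul, norm_mul, tau_norm hl]
  have hlpos : (0 : ℝ) < l := by exact_mod_cast (Fact.out : l.Prime).pos
  have hs : Real.sqrt l * Real.sqrt l = l := Real.mul_self_sqrt hlpos.le
  have hs0 : Real.sqrt l ≠ 0 := (Real.sqrt_pos.mpr hlpos).ne'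
  rw [norm_div, norm_mul, norm_pow, Complex.norm_real, Complex.norm_I, Complex.norm_natCast,
    Complex.norm_intCast, Real.norm_eq_abs, abs_of_pos Real.pi_pos]
  field_simp
  rw [pow_two, hs]
end S18

namespace S18

lemma legendre_neg {l q : ℕ} [Fact l.Prime] [Fact q.Prime] (hl : l % 4 = 3) (hq2 : q ≠ 2) :
    legendreSym q (-(l : ℤ)) = legendreSym l (q : ℤ) := by
  rw [← neg_one_mul, legendreSym.mul, legendreSym.at_neg_one hq2]
  have hodd : q % 2 = 1 := (Nat.Prime.mod_two_eq_one_iff_ne_two Fact.out).mpr hq2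
  have hl2 : l ≠ 2 := by omega
  have h4 : q % 4 = 1 ∨ q % 4 = 3 := by omega
  rcases h4 with h4 | h4
  · rw [ZMod.χ₄_nat_one_mod_four h4, one_mul]
    exact (legendreSym.quadratic_reciprocity_one_mod_four h4 hl2).symm
  · rw [ZMod.χ₄_nat_three_mod_four h4,
      legendreSym.quadratic_reciprocity_three_mod_four hl h4]
    ring

lemma root_iff {l q m : ℕ} [Fact l.Prime] [Fact q.Prime] (hl : l % 4 = 3) (hm : 1 + l = 4 * m)
    (hne : q ≠ l) : (∃ c : ℤ, (q : ℤ) ∣ c ^ 2 - c + m) ↔ legendreSym l (q : ℤ) = 1 := by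
  by_cases hq2 : q = 2
  · subst hq2
    have hl2 : l ≠ 2 := by omega
    have h1 : legendreSym l ((2 : ℕ) : ℤ) = if l % 8 = 7 then 1 else -1 := by
      rw [Nat.cast_ofNat, legendreSym.at_two hl2, ZMod.χ₈_nat_eq_if_mod_eight]
      split_ifs <;> omega
    rw [h1]
    constructor
    · rintro ⟨c, hc⟩
      have h2 : (2 : ℤ) ∣ c ^ 2 - c := by
        rw [pow_two, ← mul_sub_one]; exact (Int.even_mul_pred_self c).two_dvd
      have h3 : (2 : ℤ) ∣ (m : ℤ) := by
        have h := dvd_sub hc h2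
        push_cast at h
        simpa using h
      rw [if_pos]; omega
    · intro h
      refine ⟨0, ?_⟩
      split_ifs at h with h8
      push_cast
      omega
  · rw [← legendre_neg hl hq2]
    have hlq : ((-(l : ℤ) : ℤ) : ZMod q) ≠ 0 := by
      push_cast
      rw [neg_ne_zero]
      exact ZMod.prime_ne_zero q l hne
    rw [legendreSym.eq_one_iff q hlq]
    have hq2' : (2 : ZMod q) ≠ 0 := by
      have := ZMod.prime_ne_zero q 2 hq2
      exact_mod_cast this
    have hm' : (1 : ZMod q) + l = 4 * m := by exact_mod_cast congrArg (Nat.cast : ℕ → ZMod q) hm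
    constructor
    · rintro ⟨c, hc⟩
      have h0 : ((c ^ 2 - c + m : ℤ) : ZMod q) = 0 := (ZMod.intCast_zmod_eq_zero_iff_dvd _ q).mpr hc
      push_cast at h0
      refine ⟨2 * c - 1, ?_⟩
      push_cast
      linear_combination (-4) * h0 - hm'
    · rintro ⟨d, hd⟩
      push_cast at hd
      obtain ⟨c, hc⟩ := ZMod.intCast_surjective ((1 + d) / 2)
      refine ⟨c, (ZMod.intCast_zmod_eq_zero_iff_dvd _ q).mp ?_⟩
      push_cast
      rw [hc]
      have h4 : (4 : ZMod q) ≠ 0 := by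
        rw [show (4 : ZMod q) = 2 * 2 by norm_num]; exact mul_ne_zero hq2' hq2'
      apply mul_left_cancel₀ h4
      field_simp
      linear_combination (-1) * hd - hm'
end S18

namespace S18
open NumberField

lemma int_of_rat_of_complex_integral {r : ℚ} (h : IsIntegral ℤ ((r : ℂ))) : ∃ n : ℤ, (n : ℚ) = r := by
  have h1 : IsIntegral ℤ (algebraMap ℚ ℂ r) := by simpa using h
  have h2 : IsIntegral ℤ r := (isIntegral_algebraMap_iff (algebraMap ℚ ℂ).injective).mp h1
  obtain ⟨n, hn⟩ := IsIntegrallyClosed.isIntegral_iff.mp h2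
  exact ⟨n, by simpa using hn⟩

/-- arithmetic core -/
lemma arith_core {l : ℕ} (hlp : l.Prime) (hl : l % 4 = 3) {u v : ℚ} {A n : ℤ}
    (hA : (A : ℚ) = 2 * u) (hn : (n : ℚ) = u ^ 2 + l * v ^ 2) :
    ∃ a b : ℤ, u = a + b / 2 ∧ v = b / 2 := by
  have hl0 : (l : ℚ) ≠ 0 := by exact_mod_cast hlp.ne_zero
  -- C = 2 l v
  have hsq : (2 * l * v) ^ 2 = ((l * (4 * n - A ^ 2) : ℤ) : ℚ) := by
    push_cast; rw [hA, hn]; ring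
  have hCint : ∃ C : ℤ, (C : ℚ) = 2 * l * v := by
    have h2 : IsIntegral ℤ (2 * l * v : ℚ) := by
      refine IsIntegral.of_pow (n := 2) (by norm_num) ?_
      rw [hsq]; exact isIntegral_algebraMap (R := ℤ) (A := ℚ) (x := _)
    obtain ⟨C, hC⟩ := IsIntegrallyClosed.isIntegral_iff.mp h2
    exact ⟨C, by simpa using hC⟩
  obtain ⟨C, hC⟩ := hCint
  have hC2 : C ^ 2 = l * (4 * n - A ^ 2) := by
    have : ((C ^ 2 : ℤ) : ℚ) = ((l * (4 * n - A ^ 2) : ℤ) : ℚ) := by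
      rw [← hsq, ← hC]; push_cast; ring
    exact_mod_cast this
  have hdiv : (l : ℤ) ∣ C := (Nat.prime_iff_prime_int.mp hlp).dvd_of_dvd_pow (Dvd.intro _ hC2.symm)
  obtain ⟨B, rfl⟩ := hdiv
  have hB : (B : ℚ) = 2 * v := by
    push_cast at hC
    have : (l : ℚ) * B = l * (2 * v) := by rw [hC]; ring
    exact mul_left_cancel₀ hl0 this
  have hBA : A ^ 2 + l * B ^ 2 = 4 * n := by
    have : ((A ^ 2 + l * B ^ 2 : ℤ) : ℚ) = ((4 * n : ℤ) : ℚ) := by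
      push_cast; rw [hA, hB, hn]; ring
    exact_mod_cast this
  have hpar : (A - B) % 2 = 0 := by
    obtain ⟨k, hk⟩ : ∃ k : ℤ, (l : ℤ) = 4 * k + 3 := ⟨(l : ℤ) / 4, by omega⟩
    rw [hk] at hBA
    rcases Int.even_or_odd' A with ⟨x, hx | hx⟩ <;> rcases Int.even_or_odd' B with ⟨y, hy | hy⟩
    · omega
    · exfalso; rw [hx, hy] at hBA
      have : 2 * (2 * (x ^ 2 + (4 * k + 3) * (y ^ 2 + y) + k - n) + 1) + 1 = 0 := by linarith
      omega
    · exfalso; rw [hx, hy] at hBA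
      have : 4 * (x ^ 2 + x + (4 * k + 3) * y ^ 2 - n) + 1 = 0 := by linarith
      omega
    · omega
  refine ⟨(A - B) / 2, B, ?_, ?_⟩
  · have : ((A - B) / 2) * 2 = A - B := by omega
    have h' : (((A - B) / 2 : ℤ) : ℚ) * 2 = A - B := by exact_mod_cast this
    linarith
  · linarith

theorem exists_theta {K : Type*} [Field K] [NumberField K] (hK : Module.finrank ℚ K = 2)
    {l m : ℕ} (hlp : l.Prime) (hl : l % 4 = 3) (hm : 1 + l = 4 * m) (s : K) (hs : s ^ 2 = -(l : K)) :
    ∃ (θ : 𝓞 K) (b : Module.Basis (Fin 2) ℤ (𝓞 K)), θ ^ 2 = θ - m ∧ b 0 = 1 ∧ b 1 = θ ∧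
      (θ : K) = (1 + s) / 2 := by
  have hm' : (1 : K) + l = 4 * m := by exact_mod_cast congrArg (Nat.cast : ℕ → K) hm
  have hθ2 : ((1 + s) / 2) ^ 2 = (1 + s) / 2 - (m : K) := by
    linear_combination hs / 4 - hm' / 4
  have hint : IsIntegral ℤ ((1 + s) / 2) := by
    refine ⟨X ^ 2 - X + C (m : ℤ), by monicity!, ?_⟩
    simp only [eval₂_add, eval₂_sub, eval₂_pow, eval₂_X, eval₂_C, hθ2]
    simp
  let θ : 𝓞 K := ⟨(1 + s) / 2, hint⟩
  -- not rational
  have φ : K →+* ℂ := Classical.choice (inferInstance : Nonempty (K →+* ℂ))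
  have hφs : φ s ^ 2 = -(l : ℂ) := by rw [← map_pow, hs]; simp
  have hlpos : (0 : ℝ) < l := by exact_mod_cast hlp.pos
  have hre : (φ s).re = 0 := by
    have him := congrArg Complex.im hφs
    have hree := congrArg Complex.re hφs
    simp [pow_two] at him hree
    by_contra hne
    have h0 : (φ s).im = 0 := by
      have : 2 * ((φ s).re * (φ s).im) = 0 := by linarith
      rcases mul_eq_zero.mp this with h | h
      · norm_num at h
      · exact (mul_eq_zero.mp h).resolve_left hne
    rw [h0] at hree
    nlinarith [mul_self_nonneg (φ s).re]
  have hconj : starRingEnd ℂ (φ s) = - φ s := by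
    apply Complex.ext <;> simp [hre]
  have hs_ne : ∀ r : ℚ, s ≠ (r : K) := by
    intro r hr
    rw [hr] at hs
    have h1 : ((r ^ 2 : ℚ) : K) = ((-(l : ℚ) : ℚ) : K) := by push_cast; exact hs
    have h2 : r ^ 2 = -(l : ℚ) := by exact_mod_cast h1
    have : (0 : ℚ) < l := by exact_mod_cast hlp.pos
    nlinarith [sq_nonneg r]
  have hli : LinearIndependent ℚ ![(1 : K), s] := by
    rw [LinearIndependent.pair_iff]
    intro a b hab
    have hb : b = 0 := by
      by_contra hb
      apply hs_ne (-a / b)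
      have hbK : (b : K) ≠ 0 := by exact_mod_cast hb
      rw [Algebra.smul_def, Algebra.smul_def] at hab
      simp only [eq_ratCast, mul_one] at hab
      push_cast
      field_simp
      linear_combination hab
    subst hb
    rw [zero_smul, add_zero, Algebra.smul_def, mul_one] at hab
    simp at hab
    exact ⟨hab, rfl⟩
  let bK : Module.Basis (Fin 2) ℚ K := basisOfLinearIndependentOfCardEqFinrank hli (by simp [hK])
  have hrep : ∀ x : K, ∃ u v : ℚ, x = u + v * s := by
    intro x
    refine ⟨bK.repr x 0, bK.repr x 1, ?_⟩
    conv_lhs => rw [← bK.sum_repr x]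
    rw [Fin.sum_univ_two]
    simp [bK, Algebra.smul_def]
  have hspan : ∀ x : 𝓞 K, ∃ a b : ℤ, x = a + b * θ := by
    intro x
    obtain ⟨u, v, huv⟩ := hrep (x : K)
    have hxi : IsIntegral ℤ (φ (x : K)) := x.2.map φ.toIntAlgHom
    have hxc : IsIntegral ℤ (starRingEnd ℂ (φ (x : K))) := hxi.map (starRingEnd ℂ).toIntAlgHom
    have e1 : φ (x : K) = u + v * φ s := by rw [huv]; simp
    have e2 : starRingEnd ℂ (φ (x : K)) = u - v * φ s := by
      rw [e1, map_add, map_mul, hconj]; simp; ring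
    have s1 : ((2 * u : ℚ) : ℂ) = φ (x : K) + starRingEnd ℂ (φ (x : K)) := by
      rw [e2, e1]; push_cast; ring
    have s2 : ((u ^ 2 + l * v ^ 2 : ℚ) : ℂ) = φ (x : K) * starRingEnd ℂ (φ (x : K)) := by
      rw [e2, e1]; push_cast; linear_combination ((v : ℂ) ^ 2) * hφs
    obtain ⟨A, hA⟩ := int_of_rat_of_complex_integral (r := 2 * u) (by rw [s1]; exact hxi.add hxc)
    obtain ⟨n, hn⟩ := int_of_rat_of_complex_integral (r := u ^ 2 + l * v ^ 2)
      (by rw [s2]; exact hxi.mul hxc)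
    obtain ⟨a, b, hu, hv⟩ := arith_core hlp hl hA hn
    refine ⟨a, b, ?_⟩
    apply RingOfIntegers.ext
    rw [huv, hu, hv]
    simp only [map_add, map_mul, map_intCast]
    change _ = (a : K) + b * ((1 + s) / 2)
    push_cast
    ring
  have hliZ : LinearIndependent ℤ ![(1 : 𝓞 K), θ] := by
    rw [LinearIndependent.pair_iff]
    intro a b hab
    have h1 : (a : K) + b * ((1 + s) / 2) = 0 := by
      have := congrArg (algebraMap (𝓞 K) K) hab
      simp [zsmul_eq_mul] at this
      exact this
    have h2 : ((a + b / 2 : ℚ)) • (1 : K) + (b / 2 : ℚ) • s = 0 := by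
      rw [Algebra.smul_def, Algebra.smul_def]
      simp only [eq_ratCast, mul_one]
      push_cast
      linear_combination h1
    have h3 := (LinearIndependent.pair_iff.mp hli) _ _ h2
    have hb : b = 0 := by
      have := h3.2
      have h4 : (b : ℚ) = 0 := by linarith
      exact_mod_cast h4
    subst hb
    have := h3.1
    refine ⟨?_, rfl⟩
    have h4 : (a : ℚ) = 0 := by simpa using this
    exact_mod_cast h4
  let b : Module.Basis (Fin 2) ℤ (𝓞 K) := Module.Basis.mk hliZ (by
    intro x _
    obtain ⟨a, b, h⟩ := hspan x
    rw [h]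
    have : (a : 𝓞 K) + b * θ = a • (1 : 𝓞 K) + b • θ := by simp [zsmul_eq_mul]
    rw [this]
    refine add_mem (Submodule.smul_mem _ _ (Submodule.subset_span ⟨0, rfl⟩))
      (Submodule.smul_mem _ _ (Submodule.subset_span ⟨1, rfl⟩)))
  refine ⟨θ, b, ?_, ?_, ?_, rfl⟩
  · apply RingOfIntegers.ext
    simp only [map_pow, map_sub, map_natCast]
    exact hθ2
  · simp [b]
  · simp [b]
end S18

namespace S18
open NumberField

/-- Data on the ring of integers. -/
structure QData (K : Type*) [Field K] [NumberField K] (l m : ℕ) where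
  θ : 𝓞 K
  b : Module.Basis (Fin 2) ℤ (𝓞 K)
  sq : θ ^ 2 = θ - m
  b0 : b 0 = 1
  b1 : b 1 = θ
  hlp : l.Prime
  hl : l % 4 = 3
  hm : 1 + l = 4 * m

namespace QData
variable {K : Type*} [Field K] [NumberField K] {l m : ℕ} (D : QData K l m)
include D

lemma repr_eq (a b : ℤ) : D.b.repr (a + b * D.θ) = Finsupp.single 0 a + Finsupp.single 1 b := by
  have : (a : 𝓞 K) + b * D.θ = a • D.b 0 + b • D.b 1 := by
    rw [D.b0, D.b1]; simp [zsmul_eq_mul]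
  rw [this, map_add, map_zsmul, map_zsmul, D.b.repr_self, D.b.repr_self]
  simp

lemma exists_repr (x : 𝓞 K) : ∃ a b : ℤ, x = a + b * D.θ := by
  refine ⟨D.b.repr x 0, D.b.repr x 1, ?_⟩
  conv_lhs => rw [← D.b.sum_repr x]
  rw [Fin.sum_univ_two, D.b0, D.b1]
  simp [zsmul_eq_mul]

lemma inj {a b c d : ℤ} (h : (a : 𝓞 K) + b * D.θ = c + d * D.θ) : a = c ∧ b = d := by
  have := congrArg D.b.repr h
  rw [D.repr_eq, D.repr_eq] at this
  have h0 := DFunLike.congr_fun this 0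
  have h1 := DFunLike.congr_fun this 1
  simp at h0 h1
  exact ⟨h0, h1⟩

lemma dvd_coord {n a b : ℤ} (h : (n : 𝓞 K) ∣ a + b * D.θ) : n ∣ a ∧ n ∣ b := by
  obtain ⟨x, hx⟩ := h
  obtain ⟨c, d, rfl⟩ := D.exists_repr x
  have : (a : 𝓞 K) + b * D.θ = ((n * c : ℤ) : 𝓞 K) + ((n * d : ℤ) : 𝓞 K) * D.θ := by
    rw [hx]; push_cast; ring
  obtain ⟨h1, h2⟩ := D.inj this
  exact ⟨⟨c, h1⟩, ⟨d, h2⟩⟩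

lemma lm (R : Type*) [CommRing R] : (1 : R) + l = 4 * m := by
  exact_mod_cast congrArg (Nat.cast : ℕ → R) D.hm

lemma finrank : Module.finrank ℚ K = 2 := by
  rw [← RingOfIntegers.rank K, Module.finrank_eq_card_basis D.b]; simp

lemma mulMatrix (a b : ℤ) : Algebra.leftMulMatrix D.b (a + b * D.θ) = !![a, -(b * m); b, a + b] := by
  ext i j
  rw [Algebra.leftMulMatrix_eq_repr_mul]
  have e0 : ((a : 𝓞 K) + b * D.θ) * D.b 0 = a + b * D.θ := by rw [D.b0, mul_one]
  have e1 : ((a : 𝓞 K) + b * D.θ) * D.b 1 = ((-(b * m) : ℤ) : 𝓞 K) + ((a + b : ℤ) : 𝓞 K) * D.θ := by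
    rw [D.b1]; push_cast; linear_combination (b : 𝓞 K) * D.sq
  fin_cases j
  · simp only [Fin.zero_eta, e0, D.repr_eq]
    fin_cases i <;> simp
  · simp only [Fin.mk_one, e1, D.repr_eq]
    fin_cases i <;> simp

lemma trace_eq (a b : ℤ) : Algebra.trace ℤ (𝓞 K) (a + b * D.θ) = 2 * a + b := by
  rw [Algebra.trace_eq_matrix_trace D.b, D.mulMatrix, Matrix.trace_fin_two_of]; ring

lemma norm_eq (a b : ℤ) : Algebra.norm ℤ ((a : 𝓞 K) + b * D.θ) = a ^ 2 + a * b + m * b ^ 2 := by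
  rw [Algebra.norm_eq_matrix_det D.b, D.mulMatrix, Matrix.det_fin_two_of]; ring

lemma discr_eq : NumberField.discr K = -(l : ℤ) := by
  rw [← NumberField.discr_eq_discr K D.b, Algebra.discr_def, Matrix.det_fin_two]
  simp only [Algebra.traceMatrix_apply, Algebra.traceForm_apply, D.b0, D.b1]
  have h00 : Algebra.trace ℤ (𝓞 K) (1 * 1) = 2 := by
    have := D.trace_eq 1 0; simpa using this
  have h01 : Algebra.trace ℤ (𝓞 K) (1 * D.θ) = 1 := by
    have := D.trace_eq 0 1; simpa using this
  have h10 : Algebra.trace ℤ (𝓞 K) (D.θ * 1) = 1 := by rw [mul_comm]; exact h01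
  have h11 : Algebra.trace ℤ (𝓞 K) (D.θ * D.θ) = 1 - 2 * m := by
    have := D.trace_eq (-m) 1
    rw [← pow_two, D.sq]
    have e : ((-m : ℤ) : 𝓞 K) + ((1 : ℤ) : 𝓞 K) * D.θ = D.θ - m := by push_cast; ring
    rw [e] at this
    rw [this]; ring
  rw [h00, h01, h10, h11]
  have := D.lm ℤ
  linarith

/-- A square root of `-l` in `𝓞 K`. -/
lemma sqrt_sq : (2 * D.θ - 1) ^ 2 = -(l : 𝓞 K) := by
  linear_combination 4 * D.sq + D.lm (𝓞 K)

lemma isTotallyComplex : InfinitePlace.nrRealPlaces K = 0 := by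
  rw [NumberField.nrRealPlaces_eq_zero_iff]
  refine ⟨fun w => ?_⟩
  rw [← InfinitePlace.not_isReal_iff_isComplex]
  intro hw
  obtain ⟨φ, hφ, -⟩ := hw
  have h := congrArg (fun x : 𝓞 K => hφ.embedding (x : K)) D.sqrt_sq
  simp only [map_pow, map_neg, map_natCast] at h
  have : (0 : ℝ) < l := by exact_mod_cast D.hlp.pos
  nlinarith [sq_nonneg (hφ.embedding ((2 * D.θ - 1 : 𝓞 K) : K))]

lemma nrComplex : InfinitePlace.nrComplexPlaces K = 1 := by
  have := InfinitePlace.card_add_two_mul_card_eq_rank K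
  rw [D.isTotallyComplex, D.finrank] at this
  omega

lemma unit_eq (hl3 : 3 < l) (u : (𝓞 K)ˣ) : u = 1 ∨ u = -1 := by
  obtain ⟨a, b, h⟩ := D.exists_repr (u : 𝓞 K)
  have h1 : IsUnit (Algebra.norm ℤ (u : 𝓞 K)) := u.isUnit.map _
  rw [h, D.norm_eq] at h1
  have hlm := D.lm ℤ
  have hpos : 4 * (a ^ 2 + a * b + m * b ^ 2) = (2 * a + b) ^ 2 + l * b ^ 2 := by
    linear_combination (-b ^ 2) * hlm
  have h2 : a ^ 2 + a * b + m * b ^ 2 = 1 := by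
    rcases Int.isUnit_iff.mp h1 with h2 | h2
    · exact h2
    · rw [h2] at hpos
      have : (0 : ℤ) ≤ l * b ^ 2 := by positivity
      nlinarith [sq_nonneg (2 * a + b)]
  rw [h2] at hpos
  have hb : b = 0 := by
    by_contra hb
    have : 1 ≤ b ^ 2 := by
      have := pow_pos (abs_pos.mpr hb) 2
      rw [sq_abs] at this
      omega
    have h3 : (7 : ℤ) ≤ l := by have := D.hl; omega
    nlinarith [sq_nonneg (2 * a + b)]
  subst hb
  have ha : a = 1 ∨ a = -1 := by
    have : a ^ 2 = 1 := by simpa using h2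
    rcases (mul_eq_zero.mp (show (a - 1) * (a + 1) = 0 by linear_combination this)) with h | h
    · left; omega
    · right; omega
  rcases ha with rfl | rfl
  · left; ext; rw [h]; simp
  · right; ext; rw [h]; simp

lemma torsionOrder_eq (hl3 : 3 < l) : NumberField.Units.torsionOrder K = 2 := by
  have hev := NumberField.Units.even_torsionOrder K
  have hpos := NumberField.Units.torsionOrder_pos K
  have hle : NumberField.Units.torsionOrder K ≤ 2 := by
    classical
    rw [NumberField.Units.torsionOrder]
    have hinj : Function.Injective (fun x : NumberField.Units.torsion K =>
        (decide ((x : (𝓞 K)ˣ) = 1) : Bool)) := by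
      intro x y hxy
      simp only [decide_eq_decide] at hxy
      apply Subtype.ext
      rcases D.unit_eq hl3 x with hx | hx
      · rw [hx, hxy.mp hx]
      · rcases D.unit_eq hl3 y with hy | hy
        · rw [hy, hxy.mpr hy]
        · rw [hx, hy]
    have := Nat.card_le_card_of_injective _ hinj
    simpa using this
  obtain ⟨k, hk⟩ := hev
  omega

lemma rank_eq : NumberField.Units.rank K = 0 := by
  rw [NumberField.Units.rank, InfinitePlace.card_eq_nrRealPlaces_add_nrComplexPlaces,
    D.isTotallyComplex, D.nrComplex]

lemma regulator_eq : NumberField.Units.regulator K = 1 := by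
  classical
  rw [NumberField.Units.regulator_eq_det']
  have : IsEmpty {w : InfinitePlace K // w ≠ NumberField.Units.dirichletUnitTheorem.w₀} := by
    have h := Fintype.card_congr (NumberField.Units.equivFinRank K)
    rw [Fintype.card_fin, D.rank_eq] at h
    exact Fintype.card_eq_zero_iff.mp h.symm
  rw [Matrix.det_isEmpty]; simp

lemma residue_eq (hl3 : 3 < l) : NumberField.dedekindZeta_residue K =
    Real.pi * NumberField.classNumber K / Real.sqrt l := by
  rw [NumberField.dedekindZeta_residue_def, D.regulator_eq, D.torsionOrder_eq hl3, D.discr_eq,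
    D.isTotallyComplex, D.nrComplex]
  have : |(((-(l : ℤ)) : ℤ) : ℝ)| = l := by simp
  rw [this]
  push_cast
  rw [show (2 : ℝ) ^ 0 * (2 * Real.pi) ^ 1 * 1 * NumberField.classNumber K
    = 2 * (Real.pi * NumberField.classNumber K) by ring, mul_div_mul_left _ _ (by norm_num)]
end QData
end S18

namespace S18
open NumberField

section gen
variable {K : Type*} [Field K] [NumberField K]

lemma exists_prime_of_dvd_absNorm {I : Ideal (𝓞 K)} (hI : I ≠ ⊥) {q : ℕ} (hq : q.Prime)
    (h : q ∣ Ideal.absNorm I) : ∃ P : Ideal (𝓞 K), P.IsPrime ∧ P ∣ I ∧ (q : 𝓞 K) ∈ P := by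
  have hne : I ⊔ Ideal.span {(q : 𝓞 K)} ≠ ⊤ := by
    intro htop
    have : Finite (𝓞 K ⧸ I) := Ideal.finiteQuotientOfFreeOfNeBot I hI
    haveI := Fact.mk hq
    have h' : q ∣ Nat.card (𝓞 K ⧸ I) := h
    obtain ⟨x, hx⟩ := exists_prime_addOrderOf_dvd_card' q h'
    obtain ⟨y, rfl⟩ := Ideal.Quotient.mk_surjective x
    have h1 : (q : 𝓞 K) * y ∈ I := by
      rw [← Ideal.Quotient.eq_zero_iff_mem, map_mul, map_natCast, ← nsmul_eq_mul, ← hx]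
      exact addOrderOf_nsmul_eq_zero _
    have h2 : (1 : 𝓞 K) ∈ I ⊔ Ideal.span {(q : 𝓞 K)} := by rw [htop]; trivial
    obtain ⟨i, hi, j, hj, hij⟩ := Submodule.mem_sup.mp h2
    obtain ⟨z, rfl⟩ := Ideal.mem_span_singleton'.mp hj
    have h3 : y ∈ I := by
      have : y = i * y + z * (q * y) := by linear_combination (-y) * hij
      rw [this]
      exact I.add_mem (I.mul_mem_right _ hi) (I.mul_mem_left _ h1)
    rw [Ideal.Quotient.eq_zero_iff_mem.mpr h3, addOrderOf_zero] at hx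
    exact hq.one_lt.ne hx
  obtain ⟨M, hM, hle⟩ := Ideal.exists_le_maximal _ hne
  refine ⟨M, hM.isPrime, Ideal.dvd_iff_le.mpr (le_sup_left.trans hle), ?_⟩
  exact hle (Ideal.mem_sup_right (Ideal.mem_span_singleton_self _))

variable (K) in
noncomputable def rc (n : ℕ) : ℕ := {I : Ideal (𝓞 K) | Ideal.absNorm I = n}.ncard

lemma fin_set {n : ℕ} : {I : Ideal (𝓞 K) | Ideal.absNorm I = n}.Finite :=
  Ideal.finite_setOfPred_absNorm_eq n

lemma count_dvd {P : Ideal (𝓞 K)} {k : ℕ} (hP : Ideal.absNorm P = k) (hk : 0 < k) (n : ℕ) :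
    {I : Ideal (𝓞 K) | Ideal.absNorm I = k * n ∧ P ∣ I}.ncard = rc K n := by
  have hP0 : P ≠ 0 := by
    rintro rfl
    simp at hP; omega
  have himg : {I : Ideal (𝓞 K) | Ideal.absNorm I = k * n ∧ P ∣ I} =
      (fun J => P * J) '' {I : Ideal (𝓞 K) | Ideal.absNorm I = n} := by
    ext I
    constructor
    · rintro ⟨h1, J, rfl⟩
      refine ⟨J, ?_, rfl⟩
      rw [map_mul, hP] at h1
      exact Nat.eq_of_mul_eq_mul_left hk h1
    · rintro ⟨J, hJ, rfl⟩
      refine ⟨?_, Dvd.intro _ rfl⟩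
      have hJ' : Ideal.absNorm J = n := hJ
      simp only [map_mul, hP, hJ']
  rw [himg, Set.ncard_image_of_injective]
  · rfl
  · intro a b hab
    exact mul_left_cancel₀ hP0 hab

lemma rc_one : rc K 1 = 1 := by
  rw [rc, Set.ncard_eq_one]
  refine ⟨⊤, ?_⟩
  ext I; simp [Ideal.absNorm_eq_one_iff]

lemma ne_bot_of_norm {I : Ideal (𝓞 K)} {n : ℕ} (h : Ideal.absNorm I = n) (hn : n ≠ 0) : I ≠ ⊥ := by
  rintro rfl
  simp at h
  exact hn h.symm
end gen

namespace QData
variable {K : Type*} [Field K] [NumberField K] {l m : ℕ} (D : QData K l m)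
include D

lemma absNorm_q (q : ℕ) : Ideal.absNorm (Ideal.span {(q : 𝓞 K)}) = q ^ 2 := by
  rw [Ideal.absNorm_span_singleton]
  have := D.norm_eq q 0
  simp only [Int.cast_natCast, Int.cast_zero, zero_mul, add_zero] at this
  rw [this]
  zify; simp

lemma span_ne_bot {q : ℕ} (hq : q.Prime) : Ideal.span {(q : 𝓞 K)} ≠ ⊥ := by
  rw [Ne, Ideal.span_singleton_eq_bot]
  exact_mod_cast hq.ne_zero

lemma not_prime_of_root {q : ℕ} (hq : q.Prime) {c : ℤ} (hc : (q : ℤ) ∣ c ^ 2 - c + m) :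
    ¬ (Ideal.span {(q : 𝓞 K)}).IsPrime := by
  intro hpr
  obtain ⟨k, hk⟩ := hc
  have hk' : (c : 𝓞 K) ^ 2 - c + m = q * k := by exact_mod_cast congrArg (Int.cast : ℤ → 𝓞 K) hk
  have hmem : (D.θ - c) * (D.θ - 1 + c) ∈ Ideal.span {(q : 𝓞 K)} := by
    rw [Ideal.mem_span_singleton']
    exact ⟨-k, by linear_combination hk' - D.sq⟩
  have hq1 : ¬ (q : ℤ) ∣ 1 := by
    intro h
    exact hq.one_lt.ne' (by exact_mod_cast Int.natCast_dvd_natCast.mp (by simpa using h) |> Nat.dvd_one.mp)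
  rcases hpr.mem_or_mem hmem with h | h <;> rw [Ideal.mem_span_singleton] at h
  · have : ((q : ℤ) : 𝓞 K) ∣ ((-c : ℤ) : 𝓞 K) + ((1 : ℤ) : 𝓞 K) * D.θ := by
      push_cast; convert h using 1; ring
    exact hq1 (D.dvd_coord this).2
  · have : ((q : ℤ) : 𝓞 K) ∣ ((c - 1 : ℤ) : 𝓞 K) + ((1 : ℤ) : 𝓞 K) * D.θ := by
      push_cast; convert h using 1; ring
    exact hq1 (D.dvd_coord this).2

lemma split_of_not_prime {q : ℕ} (hq : q.Prime) (h : ¬ (Ideal.span {(q : 𝓞 K)}).IsPrime) :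
    ∃ P Q : Ideal (𝓞 K), P.IsPrime ∧ Q.IsPrime ∧ Ideal.absNorm P = q ∧ Ideal.absNorm Q = q ∧
      Ideal.span {(q : 𝓞 K)} = P * Q := by
  have hN := D.absNorm_q q
  obtain ⟨P, hP, ⟨Q, hQ⟩, -⟩ := exists_prime_of_dvd_absNorm (D.span_ne_bot hq) hq
    (by rw [hN]; exact dvd_pow_self q two_ne_zero)
  have hmul : Ideal.absNorm P * Ideal.absNorm Q = q ^ 2 := by rw [← map_mul, ← hQ, hN]
  have hPN : Ideal.absNorm P ∣ q ^ 2 := Dvd.intro _ hmul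
  obtain ⟨i, hi, hPi⟩ := (Nat.dvd_prime_pow hq).mp hPN
  have hPq : Ideal.absNorm P = q := by
    interval_cases i
    · exfalso
      rw [pow_zero, Ideal.absNorm_eq_one_iff] at hPi
      exact hP.ne_top hPi
    · simpa using hPi
    · exfalso
      rw [hPi] at hmul
      have : Ideal.absNorm Q = 1 := by
        have : 0 < q ^ 2 := pow_pos hq.pos 2
        exact Nat.eq_of_mul_eq_mul_left this (by rw [hmul, mul_one])
      rw [Ideal.absNorm_eq_one_iff] at this
      rw [this, Ideal.mul_top] at hQ
      exact h (hQ ▸ hP)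
  have hQq : Ideal.absNorm Q = q := by
    rw [hPq, pow_two] at hmul
    exact Nat.eq_of_mul_eq_mul_left hq.pos hmul
  exact ⟨P, Q, hP, Ideal.isPrime_of_irreducible_absNorm (by rw [hQq]; exact hq), hPq, hQq, hQ⟩

lemma root_of_norm {q : ℕ} (hq : q.Prime) {P : Ideal (𝓞 K)} (hP : P.IsPrime)
    (hPq : Ideal.absNorm P = q) : ∃ c : ℤ, (q : ℤ) ∣ c ^ 2 - c + m ∧ D.θ - c ∈ P := by
  haveI := Fact.mk hq
  have hcard : Nat.card (𝓞 K ⧸ P) = q := hPq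
  have hqP : (q : 𝓞 K) ∈ P := by rw [← hPq]; exact Ideal.absNorm_mem P
  have hmem : ∀ z : ℤ, (z : 𝓞 K) ∈ P → (q : ℤ) ∣ z := by
    intro z hz
    by_contra hnd
    have hcop : IsCoprime (q : ℤ) z :=
      (Nat.prime_iff_prime_int.mp hq).coprime_iff_not_dvd.mpr hnd
    obtain ⟨u, v, huv⟩ := hcop
    apply hP.ne_top
    rw [Ideal.eq_top_iff_one]
    have h1 : (1 : 𝓞 K) = u * q + v * z := by exact_mod_cast (congrArg (Int.cast : ℤ → 𝓞 K) huv).symm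
    rw [h1]
    exact P.add_mem (P.mul_mem_left _ hqP) (P.mul_mem_left _ hz)
  haveI : CharP (𝓞 K ⧸ P) q := by
    refine ⟨fun x => ?_⟩
    rw [← map_natCast (Ideal.Quotient.mk P), Ideal.Quotient.eq_zero_iff_mem]
    constructor
    · intro h
      exact Int.natCast_dvd_natCast.mp (hmem x (by exact_mod_cast h))
    · rintro ⟨y, rfl⟩
      push_cast
      exact P.mul_mem_right _ hqP
  haveI : Finite (𝓞 K ⧸ P) := Nat.finite_of_card_ne_zero (by rw [hcard]; exact hq.ne_zero)
  have hbij : Function.Bijective (ZMod.castHom (dvd_refl q) (𝓞 K ⧸ P)) := by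
    haveI : Fintype (𝓞 K ⧸ P) := Fintype.ofFinite _
    exact ZMod.castHom_bijective _ (by rw [← Nat.card_eq_fintype_card, hcard])
  obtain ⟨z, hz⟩ := hbij.2 (Ideal.Quotient.mk P D.θ)
  obtain ⟨c, rfl⟩ := ZMod.intCast_surjective z
  rw [map_intCast] at hz
  have hc : D.θ - c ∈ P := by
    rw [← Ideal.Quotient.eq_zero_iff_mem, map_sub, map_intCast, ← hz, sub_self]
  refine ⟨c, hmem _ ?_, hc⟩
  have : ((c ^ 2 - c + m : ℤ) : 𝓞 K) = -(D.θ - c) * (D.θ + c - 1) := by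
    push_cast; linear_combination D.sq
  rw [this]
  exact P.mul_mem_right _ (P.neg_mem hc)

lemma ramified_imp {q : ℕ} (hq : q.Prime) {P : Ideal (𝓞 K)} (hP : P.IsPrime)
    (hPq : Ideal.absNorm P = q) (hPP : Ideal.span {(q : 𝓞 K)} = P * P) : q = l := by
  obtain ⟨c, hc, hcP⟩ := D.root_of_norm hq hP hPq
  have h2 : (D.θ - c) * (D.θ - c) ∈ Ideal.span {(q : 𝓞 K)} := by
    rw [hPP]; exact Ideal.mul_mem_mul hcP hcP
  rw [Ideal.mem_span_singleton] at h2
  have h3 : ((q : ℤ) : 𝓞 K) ∣ ((c ^ 2 - m : ℤ) : 𝓞 K) + ((1 - 2 * c : ℤ) : 𝓞 K) * D.θ := by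
    push_cast; convert h2 using 1; linear_combination (-1 : 𝓞 K) * D.sq
  have h4 := (D.dvd_coord h3).2
  have h5 : (q : ℤ) ∣ (l : ℤ) := by
    have : (l : ℤ) = 4 * (c ^ 2 - c + m) - (1 - 2 * c) * (1 - 2 * c) := by
      have := D.lm ℤ
      linarith
    rw [this]
    exact dvd_sub (Dvd.dvd.mul_left hc _) (Dvd.dvd.mul_left h4 _)
  exact (Nat.prime_dvd_prime_iff_eq hq D.hlp).mp (Int.natCast_dvd_natCast.mp h5)

lemma ramified_l : ∃ P : Ideal (𝓞 K), P.IsPrime ∧ Ideal.absNorm P = l ∧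
    Ideal.span {(l : 𝓞 K)} = P * P := by
  have hroot : (l : ℤ) ∣ (2 * m : ℤ) ^ 2 - (2 * m : ℤ) + m := by
    refine ⟨m, ?_⟩
    have := D.lm ℤ
    linear_combination (-(m : ℤ)) * this
  obtain ⟨P, Q, hP, hQ, hPl, hQl, hPQ⟩ :=
    D.split_of_not_prime D.hlp (D.not_prime_of_root D.hlp hroot)
  by_cases h : P = Q
  · subst h; exact ⟨P, hP, hPl, hPQ⟩
  exfalso
  have hmem : ∀ R : Ideal (𝓞 K), R.IsPrime → Ideal.absNorm R = l → 2 * D.θ - 1 ∈ R := by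
    intro R hR hRl
    apply hR.mem_of_pow_mem 2
    rw [D.sqrt_sq]
    apply R.neg_mem
    rw [← hRl]; exact Ideal.absNorm_mem R
  have hPm : P.IsMaximal := hP.isMaximal (ne_bot_of_norm hPl D.hlp.ne_zero)
  have hQm : Q.IsMaximal := hQ.isMaximal (ne_bot_of_norm hQl D.hlp.ne_zero)
  have hcop : IsCoprime P Q := Ideal.isCoprime_iff_sup_eq.mpr (hPm.coprime_of_ne hQm h)
  have hin : 2 * D.θ - 1 ∈ P * Q := by
    rw [Ideal.mul_eq_inf_of_coprime (Ideal.isCoprime_iff_sup_eq.mp hcop)]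
    exact ⟨hmem P hP hPl, hmem Q hQ hQl⟩
  rw [← hPQ, Ideal.mem_span_singleton] at hin
  have h3 : ((l : ℤ) : 𝓞 K) ∣ ((-1 : ℤ) : 𝓞 K) + ((2 : ℤ) : 𝓞 K) * D.θ := by
    push_cast; convert hin using 1; ring
  have h4 := (D.dvd_coord h3).1
  have h5 : (l : ℤ) ∣ 1 := by simpa using h4
  have := D.hlp.one_lt
  have := Int.le_of_dvd one_pos h5
  omega

lemma prime_over {q : ℕ} {P Q R : Ideal (𝓞 K)} (hPQ : Ideal.span {(q : 𝓞 K)} = P * Q)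
    (hP : P.IsPrime) (hQ : Q.IsPrime) (hR : R.IsPrime) (hq : q.Prime)
    (hqR : (q : 𝓞 K) ∈ R) (hPq : Ideal.absNorm P = q) (hQq : Ideal.absNorm Q = q) : R = P ∨ R = Q := by
  have hle : P * Q ≤ R := by rw [← hPQ, Ideal.span_singleton_le_iff_mem]; exact hqR
  have hPm : P.IsMaximal := hP.isMaximal (ne_bot_of_norm hPq hq.ne_zero)
  have hQm : Q.IsMaximal := hQ.isMaximal (ne_bot_of_norm hQq hq.ne_zero)
  rcases hR.mul_le.mp hle with h | h
  · left; exact (hPm.eq_of_le hR.ne_top h).symm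
  · right; exact (hQm.eq_of_le hR.ne_top h).symm

end QData
end S18

namespace S18
open NumberField

lemma zetaMul_prime_pow {N : ℕ} [NeZero N] (χ : DirichletCharacter ℂ N) {q : ℕ} (hq : q.Prime) (k : ℕ) :
    χ.zetaMul (q ^ k) = ∑ i ∈ Finset.range (k + 1), χ (q : ZMod N) ^ i := by
  rw [DirichletCharacter.zetaMul, ArithmeticFunction.coe_zeta_mul_apply,
    Nat.sum_divisors_prime_pow hq]
  refine Finset.sum_congr rfl fun i _ => ?_
  rw [← DirichletCharacter.apply_eq_toArithmeticFunction_apply _ (pow_ne_zero i hq.ne_zero)]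
  push_cast
  rw [map_pow]

namespace QData
variable {K : Type*} [Field K] [NumberField K] {l m : ℕ} (D : QData K l m)
include D

lemma inert_dvd {q : ℕ} (hq : q.Prime) (h : (Ideal.span {(q : 𝓞 K)}).IsPrime)
    {I : Ideal (𝓞 K)} (hI : I ≠ ⊥) (hd : q ∣ Ideal.absNorm I) : Ideal.span {(q : 𝓞 K)} ∣ I := by
  obtain ⟨P, hP, hPI, hqP⟩ := exists_prime_of_dvd_absNorm hI hq hd
  have hm : (Ideal.span {(q : 𝓞 K)}).IsMaximal := h.isMaximal (D.span_ne_bot hq)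
  have := hm.eq_of_le hP.ne_top ((Ideal.span_singleton_le_iff_mem _).mpr hqP)
  rw [this]; exact hPI

lemma inert_two {q n : ℕ} (hq : q.Prime) (h : (Ideal.span {(q : 𝓞 K)}).IsPrime) (hn : n ≠ 0) :
    rc K (q ^ 2 * n) = rc K n := by
  rw [← count_dvd (D.absNorm_q q) (pow_pos hq.pos 2) n, rc]
  congr 1
  ext I
  simp only [Set.mem_setOf_eq]
  refine ⟨fun hI => ⟨hI, ?_⟩, fun hI => hI.1⟩
  refine D.inert_dvd hq h (ne_bot_of_norm hI ?_) ?_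
  · exact mul_ne_zero (pow_ne_zero 2 hq.ne_zero) hn
  · rw [hI, pow_two, mul_assoc]; exact Dvd.intro _ rfl

lemma inert_one {q n : ℕ} (hq : q.Prime) (h : (Ideal.span {(q : 𝓞 K)}).IsPrime) (hn : ¬ q ∣ n) :
    rc K (q * n) = 0 := by
  rw [rc, Set.ncard_eq_zero (fin_set)]
  ext I
  simp only [Set.mem_setOf_eq, Set.mem_empty_iff_false, iff_false]
  intro hI
  have hn0 : n ≠ 0 := by rintro rfl; exact hn (dvd_zero q)
  have := D.inert_dvd hq h (ne_bot_of_norm hI (mul_ne_zero hq.ne_zero hn0)) (by rw [hI]; exact Dvd.intro _ rfl)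
  obtain ⟨J, rfl⟩ := this
  rw [map_mul, D.absNorm_q, pow_two, mul_assoc] at hI
  exact hn ⟨_, (Nat.eq_of_mul_eq_mul_left hq.pos hI).symm⟩

lemma ram_one {q n : ℕ} (hq : q.Prime) {P : Ideal (𝓞 K)} (hP : P.IsPrime)
    (hPq : Ideal.absNorm P = q) (hPP : Ideal.span {(q : 𝓞 K)} = P * P) (hn : n ≠ 0) :
    rc K (q * n) = rc K n := by
  rw [← count_dvd hPq hq.pos n, rc]
  congr 1
  ext I
  simp only [Set.mem_setOf_eq]
  refine ⟨fun hI => ⟨hI, ?_⟩, fun hI => hI.1⟩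
  obtain ⟨R, hR, hRI, hqR⟩ := exists_prime_of_dvd_absNorm
    (ne_bot_of_norm hI (mul_ne_zero hq.ne_zero hn)) hq (by rw [hI]; exact Dvd.intro _ rfl)
  rcases D.prime_over hPP hP hP hR hq hqR hPq hPq with rfl | rfl <;> exact hRI

lemma split_one {q n : ℕ} (hq : q.Prime) {P Q : Ideal (𝓞 K)} (hP : P.IsPrime) (hQ : Q.IsPrime)
    (hPq : Ideal.absNorm P = q) (hQq : Ideal.absNorm Q = q)
    (hPQ : Ideal.span {(q : 𝓞 K)} = P * Q) (hne : P ≠ Q) (hn : n ≠ 0) :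
    rc K (q * n) + {I : Ideal (𝓞 K) | Ideal.absNorm I = q * n ∧ Ideal.span {(q : 𝓞 K)} ∣ I}.ncard
      = 2 * rc K n := by
  have hPm : P.IsMaximal := hP.isMaximal (ne_bot_of_norm hPq hq.ne_zero)
  have hQm : Q.IsMaximal := hQ.isMaximal (ne_bot_of_norm hQq hq.ne_zero)
  have hcop : IsCoprime P Q := Ideal.isCoprime_iff_sup_eq.mpr (hPm.coprime_of_ne hQm hne)
  have hun : {I : Ideal (𝓞 K) | Ideal.absNorm I = q * n} =
      {I : Ideal (𝓞 K) | Ideal.absNorm I = q * n ∧ P ∣ I} ∪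
      {I : Ideal (𝓞 K) | Ideal.absNorm I = q * n ∧ Q ∣ I} := by
    ext I
    simp only [Set.mem_setOf_eq, Set.mem_union]
    constructor
    · intro hI
      obtain ⟨R, hR, hRI, hqR⟩ := exists_prime_of_dvd_absNorm
        (ne_bot_of_norm hI (mul_ne_zero hq.ne_zero hn)) hq (by rw [hI]; exact Dvd.intro _ rfl)
      rcases D.prime_over hPQ hP hQ hR hq hqR hPq hQq with rfl | rfl
      · exact Or.inl ⟨hI, hRI⟩
      · exact Or.inr ⟨hI, hRI⟩
    · rintro (h | h) <;> exact h.1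
  have hint : {I : Ideal (𝓞 K) | Ideal.absNorm I = q * n ∧ Ideal.span {(q : 𝓞 K)} ∣ I} =
      {I : Ideal (𝓞 K) | Ideal.absNorm I = q * n ∧ P ∣ I} ∩
      {I : Ideal (𝓞 K) | Ideal.absNorm I = q * n ∧ Q ∣ I} := by
    ext I
    simp only [Set.mem_setOf_eq, Set.mem_inter_iff]
    rw [hPQ]
    constructor
    · rintro ⟨h1, h2⟩
      exact ⟨⟨h1, (Dvd.intro _ rfl).trans h2⟩, ⟨h1, (Dvd.intro_left _ rfl).trans h2⟩⟩
    · rintro ⟨⟨h1, h2⟩, -, h3⟩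
      exact ⟨h1, hcop.mul_dvd h2 h3⟩
  have f1 : {I : Ideal (𝓞 K) | Ideal.absNorm I = q * n ∧ P ∣ I}.Finite :=
    fin_set.subset fun I hI => hI.1
  have f2 : {I : Ideal (𝓞 K) | Ideal.absNorm I = q * n ∧ Q ∣ I}.Finite :=
    fin_set.subset fun I hI => hI.1
  have := Set.ncard_union_add_ncard_inter _ _ f1 f2
  rw [← hun, ← hint, count_dvd hPq hq.pos, count_dvd hQq hq.pos] at this
  rw [rc, this]; ring

lemma qc_cases [Fact l.Prime] {q : ℕ} (hq : q.Prime) :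
    (chi l (q : ZMod l) = -1 ∧ (Ideal.span {(q : 𝓞 K)}).IsPrime) ∨
    (chi l (q : ZMod l) = 0 ∧ ∃ P : Ideal (𝓞 K), P.IsPrime ∧ Ideal.absNorm P = q ∧
      Ideal.span {(q : 𝓞 K)} = P * P) ∨
    (chi l (q : ZMod l) = 1 ∧ ∃ P Q : Ideal (𝓞 K), P.IsPrime ∧ Q.IsPrime ∧ Ideal.absNorm P = q ∧
      Ideal.absNorm Q = q ∧ Ideal.span {(q : 𝓞 K)} = P * Q ∧ P ≠ Q) := by
  haveI := Fact.mk hq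
  have hchi : chi l (q : ZMod l) = ((legendreSym l (q : ℤ) : ℤ) : ℂ) := by
    rw [chi_apply]; simp [legendreSym]
  by_cases hql : q = l
  · subst hql
    right; left
    refine ⟨by simp [MulChar.map_zero], D.ramified_l⟩
  have hq0 : ((q : ℤ) : ZMod l) ≠ 0 := by
    have := ZMod.prime_ne_zero l q (Ne.symm hql)
    exact_mod_cast this
  rcases legendreSym.eq_one_or_neg_one l hq0 with h | h
  · right; right
    obtain ⟨c, hc⟩ := (root_iff D.hl D.hm hql).mpr h
    obtain ⟨P, Q, hP, hQ, hPq, hQq, hPQ⟩ :=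
      D.split_of_not_prime hq (D.not_prime_of_root hq hc)
    refine ⟨by rw [hchi, h]; simp, P, Q, hP, hQ, hPq, hQq, hPQ, ?_⟩
    rintro rfl
    exact hql (D.ramified_imp hq hP hPq hPQ)
  · left
    refine ⟨by rw [hchi, h]; simp, ?_⟩
    by_contra hnp
    obtain ⟨P, Q, hP, hQ, hPq, hQq, hPQ⟩ := D.split_of_not_prime hq hnp
    obtain ⟨c, hc, -⟩ := D.root_of_norm hq hP hPq
    have := (root_iff D.hl D.hm hql).mp ⟨c, hc⟩
    rw [this] at h
    norm_num at h

lemma rc_pow [Fact l.Prime] {q n : ℕ} (hq : q.Prime) (hn : ¬ q ∣ n) (k : ℕ) :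
    (rc K (q ^ k * n) : ℂ) = (∑ i ∈ Finset.range (k + 1), chi l (q : ZMod l) ^ i) * rc K n := by
  have hn0 : n ≠ 0 := by rintro rfl; exact hn (dvd_zero q)
  have hq0 : ∀ j, q ^ j * n ≠ 0 := fun j => mul_ne_zero (pow_ne_zero _ hq.ne_zero) hn0
  rcases D.qc_cases hq with ⟨hc, h⟩ | ⟨hc, P, hP, hPq, hPP⟩ | ⟨hc, P, Q, hP, hQ, hPq, hQq, hPQ, hne⟩
  · rw [hc]
    induction k using Nat.strong_induction_on with
    | _ k ih =>
      match k with
      | 0 => simp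
      | 1 =>
        rw [pow_one, D.inert_one hq h hn]
        simp [Finset.sum_range_succ]
      | k + 2 =>
        rw [show q ^ (k + 2) * n = q ^ 2 * (q ^ k * n) by ring, D.inert_two hq h (hq0 k),
          ih k (by omega), Finset.sum_range_succ _ (k + 2), Finset.sum_range_succ _ (k + 1)]
        ring
  · rw [hc]
    have : ∀ k, rc K (q ^ k * n) = rc K n := by
      intro k
      induction k with
      | zero => simp
      | succ k ih =>
        rw [show q ^ (k + 1) * n = q * (q ^ k * n) by ring, D.ram_one hq hP hPq hPP (hq0 k), ih]
    rw [this, Finset.sum_range_succ']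
    simp
  · rw [hc]
    have : ∀ k, rc K (q ^ k * n) = (k + 1) * rc K n := by
      intro k
      induction k using Nat.strong_induction_on with
      | _ k ih =>
        match k with
        | 0 => simp
        | 1 =>
          have := D.split_one hq hP hQ hPq hQq hPQ hne hn0
          have h0 : {I : Ideal (𝓞 K) | Ideal.absNorm I = q * n ∧ Ideal.span {(q : 𝓞 K)} ∣ I} = ∅ := by
            ext I
            simp only [Set.mem_setOf_eq, Set.mem_empty_iff_false, iff_false]
            rintro ⟨hI, J, rfl⟩
            rw [map_mul, D.absNorm_q, pow_two, mul_assoc] at hI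
            exact hn ⟨_, (Nat.eq_of_mul_eq_mul_left hq.pos hI).symm⟩
          rw [h0, Set.ncard_empty] at this
          rw [pow_one]; linarith
        | k + 2 =>
          have := D.split_one hq hP hQ hPq hQq hPQ hne (hq0 (k + 1))
          have h2 : q * (q ^ (k + 1) * n) = q ^ 2 * (q ^ k * n) := by ring
          rw [h2, count_dvd (D.absNorm_q q) (pow_pos hq.pos 2), ih (k + 1) (by omega),
            ih k (by omega), ← h2] at this
          rw [show q ^ (k + 2) * n = q * (q ^ (k + 1) * n) by ring]
          linarith
    rw [this]; simp

theorem rc_eq_zetaMul [Fact l.Prime] (n : ℕ) (hn : n ≠ 0) :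
    (rc K n : ℂ) = DirichletCharacter.zetaMul (chi l) n := by
  induction n using Nat.strong_induction_on with
  | _ n ih =>
    by_cases h1 : n = 1
    · subst h1
      rw [rc_one, (DirichletCharacter.isMultiplicative_zetaMul (chi l)).map_one]; simp
    · obtain ⟨q, hq, hqn⟩ := Nat.exists_prime_and_dvd h1
      obtain ⟨k, n', hn', rfl⟩ := Nat.exists_eq_pow_mul_and_not_dvd hn q hq.ne_one
      have hn0 : n' ≠ 0 := by rintro rfl; exact hn' (dvd_zero q)
      have hk : k ≠ 0 := by
        rintro rfl
        rw [pow_zero, one_mul] at hqn; exact hn' hqn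
      have hlt : n' < q ^ k * n' := by
        have : 1 < q ^ k := Nat.one_lt_pow hk hq.one_lt
        nlinarith [Nat.pos_of_ne_zero hn0]
      rw [D.rc_pow hq hn' k, ih n' hlt hn0,
        (DirichletCharacter.isMultiplicative_zetaMul (chi l)).map_mul_of_coprime
          (Nat.Coprime.pow_left k ((Nat.Prime.coprime_iff_not_dvd hq).mpr hn')), zetaMul_prime_pow _ hq]

theorem dedekind_eq [Fact l.Prime] {s : ℂ} (hs : 1 < s.re) :
    NumberField.dedekindZeta K s = riemannZeta s * DirichletCharacter.LFunction (chi l) s := by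
  have h1 : NumberField.dedekindZeta K s = LSeries (DirichletCharacter.zetaMul (chi l)) s := by
    rw [NumberField.dedekindZeta]
    apply LSeries_congr
    intro n hn
    rw [← D.rc_eq_zetaMul n hn]
    rfl
  rw [h1, DirichletCharacter.zetaMul, ArithmeticFunction.LSeries_mul']
  · rw [DirichletCharacter.LFunction_eq_LSeries (chi l) hs,
      ← ArithmeticFunction.LSeries_zeta_eq_riemannZeta hs]
    congr 1
    apply LSeries_congr
    intro n hn
    exact (DirichletCharacter.apply_eq_toArithmeticFunction_apply (chi l) hn).symm
  · exact ArithmeticFunction.LSeriesSummable_zeta_iff.mpr hs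
  · refine LSeriesSummable_of_bounded_of_one_lt_re (m := 1) (fun n hn ↦ ?_) hs
    rw [← DirichletCharacter.apply_eq_toArithmeticFunction_apply (chi l) hn]
    exact DirichletCharacter.norm_le_one (chi l) _

end QData
end S18

namespace S18
open NumberField Filter Topology

namespace QData
variable {K : Type*} [Field K] [NumberField K] {l m : ℕ} (D : QData K l m)
include D

theorem L_one [Fact l.Prime] (hl3 : 3 < l) :
    DirichletCharacter.LFunction (chi l) 1 = ((dedekindZeta_residue K : ℝ) : ℂ) := by
  have h1 := NumberField.tendsto_sub_one_mul_dedekindZeta_nhdsGT K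
  have hc : Tendsto (fun s : ℝ => (s : ℂ)) (𝓝[>] 1) (𝓝[≠] 1) := by
    refine tendsto_nhdsWithin_of_tendsto_nhds_of_eventually_within _ ?_ ?_
    · exact (Complex.continuous_ofReal.tendsto' 1 1 (by simp)).mono_left nhdsWithin_le_nhds
    · filter_upwards [self_mem_nhdsWithin] with s hs
      have : (1:ℝ) < s := hs
      simp only [Set.mem_compl_iff, Set.mem_singleton_iff]
      intro h
      have : s = 1 := by exact_mod_cast h
      linarith
  have h2 := riemannZeta_residue_one.comp hc
  have h3 : Tendsto (fun s : ℝ => DirichletCharacter.LFunction (chi l) (s:ℂ)) (𝓝[>] 1)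
      (𝓝 (DirichletCharacter.LFunction (chi l) 1)) := by
    have := (DirichletCharacter.differentiable_LFunction (chi_ne_one D.hl)).continuous
    exact ((this.tendsto 1).mono_left nhdsWithin_le_nhds).comp hc
  have h4 := h2.mul h3
  rw [one_mul] at h4
  refine tendsto_nhds_unique h4 (h1.congr' ?_)
  filter_upwards [self_mem_nhdsWithin] with s hs
  have : (1:ℝ) < s := hs
  rw [D.dedekind_eq (by simpa using this)]
  simp [mul_assoc]

theorem W_abs [Fact l.Prime] (hl3 : 3 < l) : |W l| = l * classNumber K := by
  have h := LFunction_one_norm l D.hl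
  rw [D.L_one hl3, D.residue_eq hl3] at h
  have hpos : (0:ℝ) < l := by exact_mod_cast (by omega : 0 < l)
  have hs : 0 < √(l:ℝ) := Real.sqrt_pos.mpr hpos
  have hpi := Real.pi_pos
  rw [Complex.norm_real, Real.norm_of_nonneg (by positivity)] at h
  field_simp at h
  have h2 : ((|W l| : ℤ) : ℝ) = ((l * classNumber K : ℤ) : ℝ) := by
    push_cast; linarith
  exact_mod_cast h2
end QData

lemma W_odd {l : ℕ} [Fact l.Prime] (hl : l % 4 = 3) : Odd (W l) := by
  have h : (W l) % 2 = (∑ j : ZMod l, (j.val : ℤ)) % 2 := by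
    have h0 := (ZMod.intCast_eq_intCast_iff (W l) (∑ j : ZMod l, (j.val : ℤ)) 2).mp ?_
    · exact h0
    rw [W]
    push_cast
    refine Finset.sum_congr rfl fun j _ => ?_
    by_cases hj : j = 0
    · simp [hj]
    · rcases quadraticChar_dichotomy hj with h | h <;> rw [h] <;> simp
  rw [sum_zmod_eq_range l (fun k => (k:ℤ)), ] at h
  have h2 : (∑ k ∈ Finset.range l, (k:ℤ)) * 2 = l * (l - 1) := by
    have := Finset.sum_range_id_mul_two l
    have hl1 : 1 ≤ l := by omega
    zify [hl1] at this
    exact_mod_cast this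
  rw [Int.odd_iff, h]
  obtain ⟨k, rfl⟩ : ∃ k, l = 4 * k + 3 := ⟨l / 4, by omega⟩
  have h3 : (∑ k ∈ Finset.range (4*k+3), (k:ℤ)) = (4 * k + 3) * (2 * k + 1) := by
    push_cast at h2; nlinarith
  rw [h3]
  have : ((4 * k + 3) * (2 * k + 1) : ℤ) = 2 * (4 * k^2 + 5 * k + 1) + 1 := by ring
  omega

section
variable (l : ℕ)
instance fdK : FiniteDimensional ℚ ℚ⟮sqrtNeg l⟯ :=
  IntermediateField.adjoin.finiteDimensional (isIntegral_sqrtNeg l)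
instance nfK : NumberField ℚ⟮sqrtNeg l⟯ := ⟨⟩

lemma cn_eq : classNumSqrtNeg l = classNumber ℚ⟮sqrtNeg l⟯ := rfl

lemma finrankK (hlp : l.Prime) : Module.finrank ℚ ℚ⟮sqrtNeg l⟯ = 2 := by
  have hpos : (0:ℝ) < l := by exact_mod_cast hlp.pos
  rw [IntermediateField.adjoin.finrank (isIntegral_sqrtNeg l)]
  have hirr : Irreducible (X ^ 2 + C (l:ℚ)) := by
    refine Polynomial.irreducible_of_degree_le_three_of_not_isRoot ?_ ?_
    · have : (X ^ 2 + C (l:ℚ)).natDegree = 2 := natDegree_X_pow_add_C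
      rw [this]; decide
    · intro x hx
      simp only [IsRoot.def, eval_add, eval_pow, eval_X, eval_C] at hx
      have : (0:ℚ) < l := by exact_mod_cast hlp.pos
      nlinarith [sq_nonneg x]
  rw [← minpoly.eq_of_irreducible_of_monic hirr (by simp [sqrtNeg_sq])
    (monic_X_pow_add_C _ (by norm_num))]
  exact natDegree_X_pow_add_C

lemma exists_QData (hlp : l.Prime) (hl : l % 4 = 3) : ∃ m, ∃ D : QData ℚ⟮sqrtNeg l⟯ l m,
    ((algebraMap ℚ⟮sqrtNeg l⟯ ℂ) (D.θ : ℚ⟮sqrtNeg l⟯)) = (1 + sqrtNeg l) / 2 := by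
  obtain ⟨m, hm⟩ : ∃ m, 1 + l = 4 * m := ⟨(1 + l) / 4, by omega⟩
  obtain ⟨θ, b, h1, h2, h3, h4⟩ := exists_theta (K := ℚ⟮sqrtNeg l⟯) (finrankK l hlp) hlp hl hm
    (AdjoinSimple.gen ℚ (sqrtNeg l)) (by
      apply (algebraMap ℚ⟮sqrtNeg l⟯ ℂ).injective
      simp [sqrtNeg_sq])
  refine ⟨m, ⟨θ, b, h1, h2, h3, hlp, hl, hm⟩, ?_⟩
  simp only [h4]
  rw [map_div₀, map_add, map_one, AdjoinSimple.algebraMap_gen, map_ofNat]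
end

lemma W_abs_cn {l : ℕ} [hF : Fact l.Prime] (hl : l % 4 = 3) (hl3 : 3 < l) :
    |W l| = l * classNumSqrtNeg l := by
  obtain ⟨m, D, -⟩ := exists_QData l hF.out hl
  rw [D.W_abs hl3, cn_eq]

lemma cn_odd {l : ℕ} [hF : Fact l.Prime] (hl : l % 4 = 3) (hl3 : 3 < l) :
    Odd (classNumSqrtNeg l) := by
  have h1 := W_odd hl
  rw [← odd_abs, W_abs_cn hl hl3, Int.odd_mul] at h1
  exact_mod_cast h1.2
end S18

namespace S18
open NumberField

theorem exists_ab0 {l p : ℕ} [hF : Fact l.Prime] (hl : l % 4 = 3) (hp : p.Prime)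
    (hpl : quadraticChar (ZMod l) (p : ZMod l) = 1) :
    ∃ a b : ℤ, 4 * (p:ℤ) ^ classNumSqrtNeg l = a ^ 2 + l * b ^ 2 ∧ ¬ (p:ℤ) ∣ a := by
  obtain ⟨m, D, -⟩ := exists_QData l hF.out hl
  set K := ℚ⟮sqrtNeg l⟯
  set h := classNumSqrtNeg l with hh
  have hhpos : h ≠ 0 := by rw [hh, cn_eq]; exact (classNumber_pos K).ne'
  rcases D.qc_cases hp with h1 | h1 | h1
  · rw [chi_apply, hpl] at h1; norm_num at h1
  · rw [chi_apply, hpl] at h1; norm_num at h1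
  obtain ⟨-, P, Q, hP, hQ, hPp, hQp, hPQ, hne⟩ := h1
  have hP0 : P ≠ ⊥ := ne_bot_of_norm hPp hp.ne_zero
  have hQ0 : Q ≠ ⊥ := ne_bot_of_norm hQp hp.ne_zero
  have hprin : (P ^ h).IsPrincipal := by
    have hP' : P ∈ nonZeroDivisors (Ideal (𝓞 K)) := mem_nonZeroDivisors_of_ne_zero hP0
    have hc : (ClassGroup.mk0 ⟨P, hP'⟩) ^ h = 1 := by
      have : h = Fintype.card (ClassGroup (𝓞 K)) := by rw [hh, cn_eq]; rfl
      rw [this, pow_card_eq_one]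
    rw [← map_pow] at hc
    have := (ClassGroup.mk0_eq_one_iff (I := P ^ h) (pow_mem hP' h)).mp
    exact this hc
  obtain ⟨π, hπ⟩ := hprin.principal
  rw [Ideal.submodule_span_eq] at hπ
  obtain ⟨x, y, rfl⟩ := D.exists_repr π
  have hn : x ^ 2 + x * y + m * y ^ 2 = (p:ℤ) ^ h := by
    have h2 : Ideal.absNorm (P ^ h) = p ^ h := by rw [map_pow, hPp]
    rw [hπ, Ideal.absNorm_span_singleton, D.norm_eq] at h2
    have h3 : 0 ≤ x ^ 2 + x * y + m * y ^ 2 := by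
      have : (1:ℤ) ≤ m := by have := D.hm; have := D.hl; omega
      nlinarith [sq_nonneg (2 * x + y), sq_nonneg y]
    have h4 := Int.natAbs_of_nonneg h3
    rw [h2] at h4
    rw [← h4]; push_cast; ring
  refine ⟨2 * x + y, y, ?_, ?_⟩
  · rw [← hn]
    have : (l:ℤ) = 4 * m - 1 := by have := D.hm; omega
    rw [this]; ring
  · rintro ⟨c, hc⟩
    have hsq : ((x:𝓞 K) + y * D.θ) ^ 2 = p * (c * (x + y * D.θ) - p ^ (h - 1)) := by
      have e1 : ((x:𝓞 K) + y * D.θ) ^ 2 = ((2 * x + y : ℤ) : 𝓞 K) * (x + y * D.θ)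
        - ((x ^ 2 + x * y + m * y ^ 2 : ℤ) : 𝓞 K) := by
        push_cast
        linear_combination (y:𝓞 K)^2 * D.sq
      rw [e1, hn, hc]
      obtain ⟨k, hk⟩ := Nat.exists_eq_succ_of_ne_zero hhpos
      rw [hk]; push_cast; simp only [Nat.succ_sub_one, pow_succ]; ring
    have hd : Ideal.span {(p:𝓞 K)} ∣ (P ^ h) ^ 2 := by
      rw [hπ, Ideal.span_singleton_pow, hsq, Ideal.dvd_span_singleton]
      exact Ideal.mul_mem_right _ _ (Ideal.mem_span_singleton_self _)
    rw [hPQ, ← pow_mul] at hd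
    have hQP : Q ∣ P := (Ideal.prime_of_isPrime hQ0 hQ).dvd_of_dvd_pow ((Dvd.intro_left _ rfl).trans hd)
    have hPmax := hP.isMaximal hP0
    exact hne (hPmax.eq_of_le hQ.ne_top (Ideal.dvd_iff_le.mp hQP))

theorem exists_ab {l p : ℕ} [hF : Fact l.Prime] (hl : l % 4 = 3) (hl3 : 3 < l) (hp : p.Prime)
    (hpl : quadraticChar (ZMod l) (p : ZMod l) = 1) :
    ∃ a b : ℤ, 4 * (p:ℤ) ^ classNumSqrtNeg l = a ^ 2 + l * b ^ 2 ∧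
      a ≡ -2 * (p : ℤ) ^ ((l - 1 + 2 * classNumSqrtNeg l) / 4) [ZMOD (l : ℤ)] ∧ ¬ (p:ℤ) ∣ a := by
  obtain ⟨a, b, h1, h2⟩ := exists_ab0 hl hp hpl
  have hodd := cn_odd hl hl3
  set h := classNumSqrtNeg l
  set E := (l - 1 + 2 * h) / 4 with hE
  have hE2 : 2 * E = l / 2 + h := by
    obtain ⟨k, hk⟩ := hodd
    omega
  have hp1 : (p : ZMod l) ^ (l / 2) = 1 := by
    have h3 : legendreSym l (p:ℤ) = 1 := by simpa [legendreSym] using hpl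
    have := legendreSym.eq_pow l (p:ℤ)
    rw [h3] at this; simpa using this.symm
  have h3 : ((a:ZMod l) - 2 * p ^ E) * (a + 2 * p ^ E) = 0 := by
    have h4 : (4 * (p:ZMod l) ^ h) = a ^ 2 := by
      have := congrArg (Int.cast : ℤ → ZMod l) h1
      push_cast at this
      simpa using this
    have h5 : (p:ZMod l) ^ (2 * E) = p ^ h := by rw [hE2, pow_add, hp1, one_mul]
    rw [pow_mul'] at h5
    linear_combination -h4 - 4 * h5
  rcases mul_eq_zero.mp h3 with h4 | h4
  · refine ⟨-a, b, by rw [h1]; ring, ?_, by rwa [dvd_neg]⟩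
    rw [← ZMod.intCast_eq_intCast_iff]
    push_cast
    linear_combination -h4
  · refine ⟨a, b, h1, ?_, h2⟩
    rw [← ZMod.intCast_eq_intCast_iff]
    push_cast
    linear_combination h4
end S18

namespace S18

theorem exists_val {p : ℕ} (hp : p.Prime) : ∃ V : ValuationSubring ℂ, V.valuation (p:ℂ) < 1 := by
  set A : Subring ℂ := (Int.castRingHom ℂ).range
  have hpA : (p:ℂ) ∈ A := ⟨p, by simp⟩
  obtain ⟨V, hV, hI⟩ := Ideal.image_subset_nonunits_valuationSubring (A := A)
    (Ideal.span {(⟨p, hpA⟩ : A)}) (by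
      rw [Ne, Ideal.span_singleton_eq_top]
      intro hu
      obtain ⟨⟨_, b, rfl⟩, hb⟩ := hu.exists_right_inv
      have h1 : (p:ℂ) * (b:ℂ) = 1 := by simpa using congrArg Subtype.val hb
      have h2 : (p:ℤ) * b = 1 := by exact_mod_cast h1
      have h3 : (p:ℤ) ∣ 1 := ⟨b, h2.symm⟩
      have h4 : p ∣ 1 := by exact_mod_cast h3
      exact hp.one_lt.ne' (Nat.dvd_one.mp h4))
  refine ⟨V, ?_⟩
  have : (p:ℂ) ∈ V.nonunits := hI ⟨⟨p, hpA⟩, Ideal.mem_span_singleton_self _, rfl⟩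
  exact (ValuationSubring.mem_nonunits_iff V).mp this

section
variable {V : ValuationSubring ℂ}

lemma val_le_one {x : ℂ} (hx : IsIntegral ℤ x) : V.valuation x ≤ 1 := by
  rw [V.valuation_le_one_iff]
  have h1 : IsIntegral V x := by
    obtain ⟨P, hP, hP2⟩ := hx
    exact ⟨P.map (algebraMap ℤ V), hP.map _, by
      rw [eval₂_map, RingHom.ext_int ((algebraMap V ℂ).comp (algebraMap ℤ V)) (algebraMap ℤ ℂ)]
      exact hP2⟩
  obtain ⟨y, hy⟩ := (IsIntegrallyClosed.isIntegral_iff (R := V) (K := ℂ)).mp h1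
  rw [← hy]; exact y.2

lemma val_int (m : ℤ) : V.valuation (m:ℂ) ≤ 1 :=
  val_le_one (isIntegral_algebraMap (R := ℤ) (A := ℂ) (x := m))

lemma val_nat (m : ℕ) : V.valuation (m:ℂ) ≤ 1 := by
  simpa using val_int (V := V) m

lemma val_int_eq_one {p : ℕ} (hp : p.Prime) (hV : V.valuation (p:ℂ) < 1) {m : ℤ}
    (hm : ¬ (p:ℤ) ∣ m) : V.valuation (m:ℂ) = 1 := by
  refine le_antisymm (val_int m) (not_lt.mp fun hlt => ?_)
  have hc : IsCoprime (p:ℤ) m := (Nat.prime_iff_prime_int.mp hp).coprime_iff_not_dvd.mpr hm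
  obtain ⟨a, b, hab⟩ := hc
  have h1 : (a:ℂ) * p + b * m = 1 := by exact_mod_cast hab
  have h2 : V.valuation ((a:ℂ) * p + b * m) < 1 := by
    refine Valuation.map_add_lt _ ?_ ?_
    · rw [map_mul]; exact (mul_le_of_le_one_left' (val_int a)).trans_lt hV
    · rw [map_mul]; exact (mul_le_of_le_one_left' (val_int b)).trans_lt hlt
  rw [h1, map_one] at h2
  exact lt_irrefl _ h2

lemma val_lt_iff {p : ℕ} (hp : p.Prime) (hV : V.valuation (p:ℂ) < 1) {m : ℤ} :
    V.valuation (m:ℂ) < 1 ↔ (p:ℤ) ∣ m := by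
  constructor
  · intro h
    by_contra hc
    rw [val_int_eq_one hp hV hc] at h
    exact lt_irrefl _ h
  · rintro ⟨c, rfl⟩
    push_cast
    rw [map_mul]
    exact (mul_le_of_le_one_right' (val_int c)).trans_lt hV

lemma val_p_ne {p : ℕ} (hp : p.Prime) : V.valuation (p:ℂ) ≠ 0 := by
  rw [Valuation.ne_zero_iff]; exact_mod_cast hp.ne_zero

lemma val_p_pos {p : ℕ} (hp : p.Prime) : 0 < V.valuation (p:ℂ) := zero_lt_iff.mpr (val_p_ne hp)

lemma dvd_of_val_le {p : ℕ} (hp : p.Prime) (hV : V.valuation (p:ℂ) < 1) (k : ℕ) {m : ℤ}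
    (h : V.valuation (m:ℂ) ≤ V.valuation (p:ℂ) ^ k) : (p:ℤ) ^ k ∣ m := by
  by_cases hm : m = 0
  · simp [hm]
  have hfin : FiniteMultiplicity (p:ℤ) m := Int.finiteMultiplicity_iff.mpr
    ⟨by simpa using hp.ne_one, hm⟩
  obtain ⟨c, hc, hc2⟩ := hfin.exists_eq_pow_mul_and_not_dvd
  rw [hc] at h
  push_cast at h
  rw [map_mul, map_pow, val_int_eq_one hp hV hc2, mul_one,
    pow_le_pow_iff_right_of_lt_one₀ (val_p_pos hp) hV] at h
  rw [hc]
  exact (pow_dvd_pow _ h).trans (Dvd.intro _ rfl)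

lemma charP_res {p : ℕ} (hp : p.Prime) (hV : V.valuation (p:ℂ) < 1) :
    CharP (IsLocalRing.ResidueField V) p := by
  haveI := Fact.mk hp
  refine (CharP.charP_iff_prime_eq_zero hp).mpr ?_
  have h : IsLocalRing.residue V (p : V) = 0 := by
    rw [IsLocalRing.residue_eq_zero_iff, V.valuation_lt_one_iff]
    simpa using hV
  simpa using h

lemma res_eq_iff {x y : V} : IsLocalRing.residue V x = IsLocalRing.residue V y ↔
    V.valuation ((x:ℂ) - y) < 1 := by
  rw [← sub_eq_zero, ← map_sub, IsLocalRing.residue_eq_zero_iff, V.valuation_lt_one_iff]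
  simp

lemma frob_sum {p : ℕ} (hp : p.Prime) (hV : V.valuation (p:ℂ) < 1) {ι : Type*} (s : Finset ι)
    (a : ι → ℂ) (ha : ∀ i ∈ s, V.valuation (a i) ≤ 1) (k : ℕ) :
    V.valuation ((∑ i ∈ s, a i) ^ p ^ k - ∑ i ∈ s, a i ^ p ^ k) < 1 := by
  haveI := Fact.mk hp
  haveI := charP_res hp hV
  classical
  set b : ι → V := fun i => if h : V.valuation (a i) ≤ 1 then ⟨a i, V.mem_of_valuation_le_one _ h⟩ else 0
  have hb : ∀ i ∈ s, ((b i : V) : ℂ) = a i := fun i hi => by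
    simp only [b, dif_pos (ha i hi)]
  have h : IsLocalRing.residue V ((∑ i ∈ s, b i) ^ p ^ k) = IsLocalRing.residue V (∑ i ∈ s, b i ^ p ^ k) := by
    rw [map_pow, map_sum, map_sum, sum_pow_char_pow]
    simp
  rw [res_eq_iff] at h
  convert h using 3
  · push_cast
    rw [Finset.sum_congr rfl fun i hi => (hb i hi).symm]
  · push_cast
    exact Finset.sum_congr rfl fun i hi => by rw [hb i hi]

instance algClosed_res : IsAlgClosed (IsLocalRing.ResidueField V) := by
  refine IsAlgClosed.of_exists_root _ fun P hP hirr => ?_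
  obtain ⟨Q, hQ, hdeg, hmon⟩ := Polynomial.lifts_and_degree_eq_and_monic
    (Polynomial.mem_lifts_of_surjective (f := IsLocalRing.residue V)
      IsLocalRing.residue_surjective P) hP
  have hdeg2 : (Q.map (algebraMap V ℂ)).degree ≠ 0 := by
    rw [hmon.degree_map, hdeg]
    exact (Polynomial.degree_pos_of_irreducible hirr).ne'
  obtain ⟨x, hx⟩ := IsAlgClosed.exists_root _ hdeg2
  have hi : IsIntegral V x := ⟨Q, hmon, by rwa [IsRoot.def, eval_map] at hx⟩
  obtain ⟨y, hy⟩ := (IsIntegrallyClosed.isIntegral_iff (R := V) (K := ℂ)).mp hi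
  refine ⟨IsLocalRing.residue V y, ?_⟩
  have h0 : Q.eval y = 0 := by
    apply (map_eq_zero_iff (algebraMap V ℂ) (FaithfulSMul.algebraMap_injective V ℂ)).mp
    rw [IsRoot.def, ← hy, eval_map, eval₂_at_apply] at hx
    exact hx
  rw [← hQ, eval_map, eval₂_at_apply, h0, map_zero]
end
end S18

namespace S18

lemma zetaP_prim {p : ℕ} (hp : p ≠ 0) : IsPrimitiveRoot (zetaP p) p :=
  Complex.isPrimitiveRoot_exp p hp

section
variable (p : ℕ) [hpF : Fact p.Prime] (F : Type) [Field F] [Fintype F] [Algebra (ZMod p) F]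

noncomputable def psi : AddChar F ℂ :=
  (AddChar.zmodChar p ((zetaP_prim hpF.out.ne_zero).pow_eq_one)).compAddMonoidHom
    (Algebra.trace (ZMod p) F).toAddMonoidHom

lemma psi_apply (x : F) : psi p F x = zetaP p ^ (Algebra.trace (ZMod p) F x).val := rfl

lemma charPF : CharP F p := charP_of_injective_algebraMap (algebraMap (ZMod p) F).injective p

lemma psi_ne_one : psi p F ≠ 1 := by
  intro h
  obtain ⟨x, hx⟩ := Algebra.trace_surjective (ZMod p) F 1
  have h1 := DFunLike.congr_fun h x
  haveI : Fact (1 < p) := ⟨hpF.out.one_lt⟩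
  rw [psi_apply, hx, ZMod.val_one, pow_one, AddChar.one_apply] at h1
  exact (zetaP_prim hpF.out.ne_zero).ne_one hpF.out.one_lt h1

lemma psi_prim : (psi p F).IsPrimitive := AddChar.IsPrimitive.of_ne_one (psi_ne_one p F)

lemma psi_pow_p (x : F) : psi p F (x ^ p) = psi p F x := by
  have h := Algebra.trace_eq_of_algEquiv (FiniteField.frobeniusAlgEquivOfAlgebraic (ZMod p) F) x
  rw [psi_apply, psi_apply]
  congr 2
  rw [← h]
  rw [FiniteField.coe_frobeniusAlgEquivOfAlgebraic]
  simp only [ZMod.card]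

lemma psi_integral (x : F) : IsIntegral ℤ (psi p F x) := by
  refine IsIntegral.of_pow hpF.out.pos ?_
  rw [psi_apply, ← pow_mul, mul_comm, pow_mul, (zetaP_prim hpF.out.ne_zero).pow_eq_one, one_pow]
  exact isIntegral_one

variable {F}
lemma chi_integral (χ : MulChar F ℂ) (x : F) : IsIntegral ℤ (χ x) := by
  by_cases hx : x = 0
  · rw [hx, MulChar.map_zero]; exact isIntegral_zero
  · refine IsIntegral.of_pow χ.orderOf_pos ?_
    rw [← MulChar.pow_apply' _ χ.orderOf_pos.ne', pow_orderOf_eq_one,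
      MulChar.one_apply (isUnit_iff_ne_zero.mpr hx)]
    exact isIntegral_one

noncomputable def G (χ : MulChar F ℂ) : ℂ := gaussSum χ (psi p F)

lemma gaussSumN_eq (χ : MulChar F ℂ) (k : ℕ) : gaussSumN p χ k = G p (χ ^ k) := by
  rw [gaussSumN, G, gaussSum]
  letI : DecidableEq F := Classical.decEq F
  refine Finset.sum_subset_zero_on_sdiff (Finset.subset_univ _) ?_ ?_
  · intro x hx
    have : x = 0 := by simpa using hx
    rw [this, MulChar.map_zero, zero_mul]
  · intro x _; rw [psi_apply]

lemma G_integral (χ : MulChar F ℂ) : IsIntegral ℤ (G p χ) :=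
  IsIntegral.sum _ fun x _ => (chi_integral χ x).mul (psi_integral p F x)

lemma G_one : G p (1 : MulChar F ℂ) = -1 := gaussSum_one_left (psi_ne_one p F)

lemma G_pow_p (χ : MulChar F ℂ) : G p (χ ^ p) = G p χ := by
  haveI := charPF p F
  haveI : ExpChar F p := ExpChar.prime hpF.out
  rw [G, G, gaussSum, gaussSum]
  have hb : Function.Bijective (frobenius F p) :=
    Finite.injective_iff_bijective.mp (frobenius_inj F p)
  refine Fintype.sum_bijective _ hb _ _ fun x => ?_
  rw [frobenius_def, psi_pow_p, MulChar.pow_apply' _ hpF.out.ne_zero, map_pow]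

lemma G_pow_p_pow (χ : MulChar F ℂ) (i : ℕ) : G p (χ ^ p ^ i) = G p χ := by
  induction i with
  | zero => simp
  | succ k ih => rw [pow_succ, pow_mul, G_pow_p, ih]

lemma chi_neg_one {χ : MulChar F ℂ} (h : Odd (orderOf χ)) : χ (-1) = 1 := by
  have h1 : χ (-1) ^ orderOf χ = 1 := by
    rw [← MulChar.pow_apply' _ χ.orderOf_pos.ne', pow_orderOf_eq_one,
      MulChar.one_apply (by simp)]
  have h2 : χ (-1) * χ (-1) = 1 := by rw [← map_mul]; simp
  rcases mul_self_eq_one_iff.mp h2 with h | h <;> simp_all [Odd.neg_one_pow]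

lemma G_conj {χ : MulChar F ℂ} (h : Odd (orderOf χ)) : star (G p χ) = G p χ⁻¹ := by
  rw [G, star_gaussSum_eq, G]
  have := mul_gaussSum_inv_eq_gaussSum χ⁻¹ (psi p F)
  rw [chi_neg_one (by rwa [orderOf_inv]), one_mul] at this
  exact this

lemma G_mul_inv {χ : MulChar F ℂ} (h : Odd (orderOf χ)) (h1 : χ ≠ 1) :
    G p χ * G p χ⁻¹ = Fintype.card F := by
  have := gaussSum_mul_gaussSum_eq_card h1 (psi_prim p F)
  rw [← star_gaussSum_eq] at this
  rw [← G_conj p h]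
  exact this

variable {V : ValuationSubring ℂ}

lemma g_le (χ : MulChar F ℂ) : V.valuation (G p χ) ≤ 1 := val_le_one (G_integral p χ)

lemma g_mul (χ φ : MulChar F ℂ) :
    V.valuation (G p χ) * V.valuation (G p φ) ≤ V.valuation (G p (χ * φ)) := by
  by_cases h : χ * φ = 1
  · rw [h, G_one, Valuation.map_neg, map_one]
    exact mul_le_one' (g_le p χ) (g_le p φ)
  · rw [← map_mul, G, G, ← jacobiSum_mul_nontrivial h, map_mul]
    refine mul_le_of_le_one_right' (val_le_one ?_)
    exact IsIntegral.sum _ fun x _ => (chi_integral χ x).mul (chi_integral φ _)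

lemma g_pow (χ : MulChar F ℂ) (k : ℕ) : V.valuation (G p χ) ^ k ≤ V.valuation (G p (χ ^ k)) := by
  induction k with
  | zero => simp [G_one, Valuation.map_neg]
  | succ k ih => rw [pow_succ, pow_succ]; exact (mul_le_mul_left ih _).trans (g_mul p _ _)

lemma stick_ineq (ω : MulChar F ℂ) (N c : ℕ) (hN : 0 < N) (i : ℕ) :
    V.valuation (G p ω) ^ (∑ j ∈ Finset.range i, p * (p ^ j * c % N) / N) ≤
      V.valuation (G p (ω ^ (p ^ i * c / N))) * 1 ∨ N ≤ c := by
  by_cases hc : N ≤ c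
  · exact Or.inr hc
  left
  rw [mul_one]
  induction i with
  | zero => simp [Nat.div_eq_of_lt (not_le.mp hc), G_one, Valuation.map_neg]
  | succ k ih =>
    have e : p ^ (k + 1) * c / N = p * (p ^ k * c / N) + p * (p ^ k * c % N) / N := by
      have : p ^ (k + 1) * c = p * (p ^ k * c % N) + N * (p * (p ^ k * c / N)) := by
        have := Nat.div_add_mod (p ^ k * c) N
        calc p ^ (k + 1) * c = p * (p ^ k * c) := by ring
          _ = p * (N * (p ^ k * c / N) + p ^ k * c % N) := by rw [this]
          _ = _ := by ring
      rw [this, Nat.add_mul_div_left _ _ hN, add_comm]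
    rw [e, Finset.sum_range_succ, pow_add, pow_add, mul_comm p (p ^ k * c / N), pow_mul]
    refine le_trans ?_ (g_mul p _ _)
    rw [G_pow_p]
    exact mul_le_mul' ih (g_pow p _ _)

end
end S18

namespace S18

section
variable (p : ℕ) [hpF : Fact p.Prime] (F : Type) [Field F] [Fintype F] [Algebra (ZMod p) F]
  {V : ValuationSubring ℂ}

lemma exists_iota (hV : V.valuation (p:ℂ) < 1) : Nonempty (F →+* IsLocalRing.ResidueField V) := by
  haveI := charP_res hpF.out hV
  letI : Algebra (ZMod p) (IsLocalRing.ResidueField V) := ZMod.algebra _ p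
  exact ⟨(IsAlgClosed.lift (R := ZMod p) (S := F) (M := IsLocalRing.ResidueField V)).toRingHom⟩

variable {F}

lemma exists_rootV {n : ℕ} (hn : 0 < n) (y : IsLocalRing.ResidueField V) (hy : y ^ n = 1) :
    ∃ z : V, z ^ n = 1 ∧ IsLocalRing.residue V z = y := by
  have he := Complex.isPrimitiveRoot_exp n hn.ne'
  have hi : IsIntegral ℤ (Complex.exp (2 * Real.pi * Complex.I / n)) :=
    IsIntegral.of_pow hn (by rw [he.pow_eq_one]; exact isIntegral_one)
  have hmem := (V.valuation_le_one_iff _).mp (val_le_one (V := V) hi)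
  have he' : IsPrimitiveRoot (⟨_, hmem⟩ : V) n :=
    IsPrimitiveRoot.of_map_of_injective (f := V.subtype) he (V.subtype_injective)
  have h1 := congrArg (fun P => Polynomial.eval₂ (IsLocalRing.residue V) y P)
    (X_pow_sub_one_eq_prod hn he')
  simp only [eval₂_sub, eval₂_X_pow, eval₂_one, hy, sub_self, eval₂_finset_prod, eval₂_X, eval₂_C] at h1
  obtain ⟨z, hz, hz2⟩ := Finset.prod_eq_zero_iff.mp h1.symm
  exact ⟨z, (mem_nthRootsFinset hn _).mp hz, (sub_eq_zero.mp hz2).symm⟩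

lemma exists_teich (ι : F →+* IsLocalRing.ResidueField V) :
    ∃ ω : MulChar F V, ∀ x, IsLocalRing.residue V (ω x) = ι x := by
  classical
  obtain ⟨g, hg⟩ := IsCyclic.exists_generator (α := Fˣ)
  obtain ⟨z, hz, hz2⟩ := exists_rootV (V := V) (n := Fintype.card Fˣ) Fintype.card_pos (ι g) (by
    rw [← map_pow, ← Units.val_pow_eq_pow_val, pow_card_eq_one]; simp)
  set zu : Vˣ := Units.ofPowEqOne z _ hz Fintype.card_ne_zero
  have hzu : zu ∈ rootsOfUnity (Fintype.card Fˣ) V := by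
    rw [_root_.mem_rootsOfUnity]; ext; simp [zu, hz]
  refine ⟨MulChar.ofRootOfUnity hzu hg, fun x => ?_⟩
  by_cases hx : x = 0
  · simp [hx, MulChar.map_zero]
  obtain ⟨k, hk⟩ := (mem_powers_iff_mem_zpowers.mpr (hg (Units.mk0 x hx)))
  have hk' : x = (g:F) ^ k := by
    have := congrArg Units.val hk; simpa using this.symm
  rw [hk', map_pow, map_pow, map_pow, MulChar.ofRootOfUnity_spec]
  simp [zu, hz2]

lemma sum_inv_trace : ∑ x : F, x⁻¹ * algebraMap (ZMod p) F (Algebra.trace (ZMod p) F x) = -1 := by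
  classical
  haveI := charPF p F
  simp_rw [FiniteField.algebraMap_trace_eq_sum_pow, Finset.mul_sum, Nat.card_zmod]
  rw [Finset.sum_comm]
  have hfr : Fintype.card F = p ^ Module.finrank (ZMod p) F := by
    rw [Module.card_eq_pow_finrank (K := ZMod p), ZMod.card]
  have hpos : 0 < Module.finrank (ZMod p) F := Module.finrank_pos
  rw [Finset.sum_eq_single_of_mem 0 (Finset.mem_range.mpr hpos)]
  · have : ∀ x : F, x⁻¹ * x ^ p ^ 0 = 1 - if x = 0 then 1 else 0 := fun x => by
      by_cases hx : x = 0
      · simp [hx]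
      · simp [hx]
    simp_rw [this]
    simp [Finset.sum_sub_distrib]
  · intro i hi hi0
    have h1 : 1 < p ^ i := Nat.one_lt_pow hi0 hpF.out.one_lt
    have : ∀ x : F, x⁻¹ * x ^ p ^ i = x ^ (p ^ i - 1) := fun x => by
      by_cases hx : x = 0
      · simp [hx, Nat.sub_eq_zero_iff_le, h1]
      · obtain ⟨k, hk⟩ := Nat.exists_eq_add_of_lt h1
        rw [hk, show 0 + 1 + k + 1 - 1 = k + 1 by omega] at *
        rw [show 1 + k + 1 = k + 1 + 1 by omega, pow_succ]
        field_simp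
        try simp
    simp_rw [this]
    refine FiniteField.sum_pow_lt_card_sub_one F _ ?_
    rw [hfr]
    have := Nat.pow_lt_pow_right hpF.out.one_lt (Finset.mem_range.mp hi)
    omega

lemma w_le (V : ValuationSubring ℂ) :
    V.valuation (p:ℂ) ≤ V.valuation (zetaP p - 1) ^ (p - 1) := by
  obtain ⟨n, hn⟩ : ∃ n, p = n + 1 := ⟨p - 1, by have := hpF.out.pos; omega⟩
  have hz := zetaP_prim hpF.out.ne_zero
  have h1 : IsPrimitiveRoot (zetaP p) (n + 1) := hn ▸ hz
  have h := h1.prod_one_sub_pow_eq_order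
  have h2 : (p:ℂ) = n + 1 := by rw [hn]; push_cast; ring
  have hint : IsIntegral ℤ (zetaP p) :=
    IsIntegral.of_pow hpF.out.pos (by rw [hz.pow_eq_one]; exact isIntegral_one)
  rw [h2, ← h, map_prod, show p - 1 = n by omega]
  refine (Finset.prod_le_pow_card _ _ (V.valuation (zetaP p - 1)) fun k _ => ?_).trans_eq (by simp)
  rw [← Valuation.map_neg, neg_sub, ← mul_geom_sum, map_mul]
  refine mul_le_of_le_one_right' (val_le_one ?_)
  exact IsIntegral.sum _ fun i _ => hint.pow i

lemma exp_two {A : Type*} [CommRing A] (Z : A) (t : ℕ) : ∃ r, (Z + 1) ^ t = 1 + t * Z + Z ^ 2 * r := by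
  induction t with
  | zero => exact ⟨0, by simp⟩
  | succ k ih =>
    obtain ⟨r, hr⟩ := ih
    exact ⟨r * Z + r + k, by rw [pow_succ, hr]; push_cast; ring⟩

lemma teich_gauss (hV : V.valuation (p:ℂ) < 1) (ι : F →+* IsLocalRing.ResidueField V)
    (ω : MulChar F V) (hω : ∀ x, IsLocalRing.residue V (ω x) = ι x) (hq : 2 < Fintype.card F) :
    V.valuation (zetaP p - 1) ≤ V.valuation (G p (ω.ringHomComp V.subtype)⁻¹) := by
  classical
  haveI := charP_res hpF.out hV
  have hz := zetaP_prim hpF.out.ne_zero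
  have hint : IsIntegral ℤ (zetaP p) :=
    IsIntegral.of_pow hpF.out.pos (by rw [hz.pow_eq_one]; exact isIntegral_one)
  have hmem := (V.valuation_le_one_iff _).mp (val_le_one (V := V) hint)
  set ζ : V := ⟨zetaP p, hmem⟩ with hζ
  set Z : V := ζ - 1 with hZ
  have hZres : IsLocalRing.residue V Z = 0 := by
    have h1 : ζ ^ p = 1 := Subtype.ext hz.pow_eq_one
    have h2 : (IsLocalRing.residue V Z) ^ p = 0 := by
      rw [hZ, map_sub, map_one, sub_pow_char, ← map_pow, h1]; simp
    exact pow_eq_zero_iff hpF.out.ne_zero |>.mp h2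
  have hω1 : ω⁻¹ ≠ 1 := by
    intro h
    have h1 : ω = 1 := inv_eq_one.mp h
    obtain ⟨x, hx⟩ := Finset.exists_mem_notMem_of_card_lt_card
      (s := ({0, 1} : Finset F)) (t := Finset.univ) (by
        rw [Finset.card_univ]; exact (Finset.card_le_two).trans_lt hq)
    simp only [Finset.mem_univ, Finset.mem_insert, Finset.mem_singleton, not_or, true_and] at hx
    have h2 := hω x
    rw [h1, MulChar.one_apply (isUnit_iff_ne_zero.mpr hx.1), map_one] at h2
    exact hx.2 (ι.injective (by rw [← h2, map_one]))
  choose r hr using fun t => exp_two Z t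
  set t : F → ℕ := fun x => (Algebra.trace (ZMod p) F x).val
  set S : V := ∑ x, ω⁻¹ x * t x
  set R : V := ∑ x, ω⁻¹ x * r (t x)
  have hG : G p (ω.ringHomComp V.subtype)⁻¹ = ((Z * (S + Z * R) : V) : ℂ) := by
    have e : Z * (S + Z * R) = ∑ x, ω⁻¹ x * ζ ^ t x := by
      have : ∀ x, ω⁻¹ x * ζ ^ t x = ω⁻¹ x + Z * (ω⁻¹ x * t x) + Z ^ 2 * (ω⁻¹ x * r (t x)) := fun x => by
        have : ζ = Z + 1 := by rw [hZ]; ring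
        rw [this, hr]; ring
      simp_rw [this, Finset.sum_add_distrib, ← Finset.mul_sum]
      rw [MulChar.sum_eq_zero_of_ne_one hω1]
      ring
    rw [e, G, gaussSum]
    push_cast
    refine Finset.sum_congr rfl fun x _ => ?_
    rw [psi_apply, MulChar.inv_apply', MulChar.inv_apply', MulChar.ringHomComp_apply]
    rfl
  have hS : IsLocalRing.residue V (S + Z * R) = -1 := by
    rw [map_add, map_mul, hZres, zero_mul, add_zero, map_sum]
    have h3 : ∀ x : F, IsLocalRing.residue V (ω⁻¹ x * t x) =
        ι (x⁻¹ * algebraMap (ZMod p) F (Algebra.trace (ZMod p) F x)) := fun x => by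
      rw [map_mul, map_mul, MulChar.inv_apply', hω, map_natCast]
      congr 1
      have : algebraMap (ZMod p) F (Algebra.trace (ZMod p) F x) = (t x : F) := by
        conv_lhs => rw [← ZMod.natCast_zmod_val (Algebra.trace (ZMod p) F x)]
        rw [map_natCast]
      rw [this, map_natCast]
    simp_rw [h3, ← map_sum]
    rw [sum_inv_trace p, map_neg, map_one]
  have hu : V.valuation ((S + Z * R : V) : ℂ) = 1 := by
    rw [← V.valuation_eq_one_iff]
    by_contra hnu
    have := (IsLocalRing.residue_eq_zero_iff (S + Z * R)).mpr ((IsLocalRing.mem_maximalIdeal _).mpr hnu)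
    rw [hS] at this
    norm_num at this
  rw [hG]
  push_cast
  push_cast at hu
  rw [map_mul, hu, mul_one]
  simp [hZ, hζ]

lemma teich_order (ι : F →+* IsLocalRing.ResidueField V)
    (ω : MulChar F V) (hω : ∀ x, IsLocalRing.residue V (ω x) = ι x) :
    orderOf (ω.ringHomComp V.subtype) = Fintype.card F - 1 := by
  classical
  refine Nat.dvd_antisymm (MulChar.orderOf_dvd_card_sub_one F _) ?_
  set j := orderOf (ω.ringHomComp V.subtype)
  have hj : j ≠ 0 := (MulChar.orderOf_pos _).ne'
  obtain ⟨g, hg⟩ := IsCyclic.exists_generator (α := Fˣ)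
  rw [← Fintype.card_units, ← Nat.card_eq_fintype_card, ← orderOf_eq_card_of_forall_mem_zpowers hg]
  apply orderOf_dvd_of_pow_eq_one
  have h1 : ((ω.ringHomComp V.subtype) ^ j) (g:F) = 1 := by
    rw [pow_orderOf_eq_one, MulChar.one_apply g.isUnit]
  rw [MulChar.pow_apply' _ hj, MulChar.ringHomComp_apply, ← map_pow] at h1
  have h2 : (ω (g:F)) ^ j = 1 := V.subtype_injective (by rw [h1, map_one])
  have h3 : ι ((g:F) ^ j) = ι 1 := by rw [map_pow, ← hω, ← map_pow, h2, map_one, map_one]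
  ext
  simpa using ι.injective h3

lemma exists_pow_eq {ω : MulChar F ℂ} (hω : orderOf ω = Fintype.card F - 1) (χ : MulChar F ℂ) :
    ∃ j : ℕ, χ = ω ^ j := by
  classical
  have hc : Nat.card (MulChar F ℂ) = orderOf ω := by
    rw [Nat.card_congr (MulChar.equiv_rootsOfUnity F ℂ).toEquiv, hω, ← Fintype.card_units,
      Complex.card_rootsOfUnity]
  haveI : Finite (MulChar F ℂ) := Nat.finite_of_card_ne_zero (by rw [hc]; exact ω.orderOf_pos.ne')
  have htop : Subgroup.zpowers ω = ⊤ := by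
    apply Subgroup.eq_top_of_card_eq
    rw [Nat.card_zpowers, hc]
  have : χ ∈ Subgroup.zpowers ω := htop ▸ Subgroup.mem_top χ
  obtain ⟨j, hj⟩ := mem_powers_iff_mem_zpowers.mpr this
  exact ⟨j, hj.symm⟩
end
end S18

namespace S18

/-- Stickelberger exponent sum. -/
def T (p f N c : ℕ) : ℕ := ∑ i ∈ Finset.range f, p ^ i * c % N

lemma T_mod (p f N c : ℕ) : T p f N (c % N) = T p f N c := by
  unfold T
  refine Finset.sum_congr rfl fun i _ => ?_
  simp [Nat.mul_mod]

lemma T_add {p f N : ℕ} (hp : Nat.Coprime N p) {c d : ℕ} (hc : ¬ N ∣ c) (h : N ∣ c + d) :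
    T p f N c + T p f N d = f * N := by
  unfold T
  rw [← Finset.sum_add_distrib]
  rw [Finset.sum_congr rfl (g := fun _ => N)]
  · simp
  intro i _
  have h1 : ¬ N ∣ p ^ i * c := fun h => hc ((hp.pow_right i).dvd_of_dvd_mul_left h)
  have h2 : N ∣ p ^ i * c % N + p ^ i * d % N := by
    rw [Nat.dvd_iff_mod_eq_zero, ← Nat.add_mod, ← mul_add]
    exact Nat.mod_eq_zero_of_dvd (h.mul_left _)
  have hN : 0 < N := Nat.pos_of_ne_zero (by
    rintro rfl
    simp only [zero_dvd_iff, Nat.add_eq_zero_iff] at h hc; exact hc h.1)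
  have h3 := Nat.mod_lt (p ^ i * c) hN
  have h4 := Nat.mod_lt (p ^ i * d) hN
  have h5 : p ^ i * c % N ≠ 0 := fun h => h1 (Nat.dvd_of_mod_eq_zero h)
  obtain ⟨m, hm⟩ := h2
  have : m = 1 := by
    have : m < 2 := by by_contra h; nlinarith
    have : m ≠ 0 := by rintro rfl; omega
    omega
  rw [hm, this, mul_one]

lemma T_S {p f N c : ℕ} (hp : 0 < p) (hq : p ^ f ≡ 1 [MOD N]) :
    N * (∑ j ∈ Finset.range f, p * (p ^ j * c % N) / N) = (p - 1) * T p f N c := by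
  have h1 : ∀ j, N * (p * (p ^ j * c % N) / N) + p ^ (j + 1) * c % N = p * (p ^ j * c % N) := by
    intro j
    have := Nat.div_add_mod (p * (p ^ j * c % N)) N
    rw [Nat.mul_mod_mod, ← mul_assoc, ← pow_succ'] at this
    exact this
  have h2 : N * (∑ j ∈ Finset.range f, p * (p ^ j * c % N) / N) +
      ∑ j ∈ Finset.range f, p ^ (j + 1) * c % N = p * T p f N c := by
    rw [Finset.mul_sum, ← Finset.sum_add_distrib, T, Finset.mul_sum]
    exact Finset.sum_congr rfl fun j _ => h1 j
  have h3 : ∑ j ∈ Finset.range f, p ^ (j + 1) * c % N = T p f N c := by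
    have ha := Finset.sum_range_succ (fun j => p ^ j * c % N) f
    have hb := Finset.sum_range_succ' (fun j => p ^ j * c % N) f
    have hc : p ^ f * c % N = p ^ 0 * c % N := by
      rw [pow_zero]; exact hq.mul_right c
    rw [ha, hc] at hb
    unfold T; omega
  rw [h3] at h2
  obtain ⟨m, rfl⟩ : ∃ m, p = m + 1 := ⟨p - 1, by omega⟩
  rw [add_mul, one_mul] at h2
  simpa using h2

section
variable (p : ℕ) [hpF : Fact p.Prime] {F : Type} [Field F] [Fintype F] [Algebra (ZMod p) F]
  {V : ValuationSubring ℂ}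

lemma stick (hV : V.valuation (p:ℂ) < 1) {χ : MulChar F ℂ} {N f : ℕ} (hχ : orderOf χ = N)
    (hodd : Odd N) (h1 : 1 < N) (hcard : Fintype.card F = p ^ f) (hcop : Nat.Coprime N p) :
    ∃ u, Nat.Coprime u N ∧ ∀ k, ¬ N ∣ k →
      V.valuation (G p (χ ^ k)) ^ N = V.valuation (p:ℂ) ^ (T p f N (u * k)) := by
  classical
  have hNq : N ∣ Fintype.card F - 1 := hχ ▸ MulChar.orderOf_dvd_card_sub_one F χ
  have hq1 : 1 < Fintype.card F := Fintype.one_lt_card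
  have hq : 2 < Fintype.card F := by
    have := Nat.le_of_dvd (by omega) hNq
    obtain ⟨k, hk⟩ := hodd
    omega
  obtain ⟨ι⟩ := exists_iota p F hV
  obtain ⟨ω, hω⟩ := exists_teich ι
  have hg := teich_gauss p hV ι ω hω hq
  have ho := teich_order ι ω hω
  rw [← orderOf_inv] at ho
  set θ := (ω.ringHomComp V.subtype)⁻¹
  obtain ⟨M, hM⟩ := hNq
  have hM0 : 0 < M := Nat.pos_of_ne_zero (by rintro rfl; omega)
  obtain ⟨j, hj⟩ := exists_pow_eq ho χ
  have hmod : p ^ f ≡ 1 [MOD N] := by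
    refine (Nat.ModEq.symm ?_)
    rw [Nat.modEq_iff_dvd' (by rw [← hcard]; omega), ← hcard]; exact ⟨M, hM⟩
  have key : ∀ k, V.valuation (p:ℂ) ^ T p f N k ≤ V.valuation (G p ((θ ^ M) ^ k)) ^ N := by
    have : ∀ c < N, V.valuation (p:ℂ) ^ T p f N c ≤ V.valuation (G p ((θ ^ M) ^ c)) ^ N := by
      intro c hc
      have hs := (stick_ineq (V := V) p θ N c (by omega) f).resolve_right (by omega)
      have e : p ^ f * c / N = M * c := by
        have : p ^ f * c = c + N * (M * c) := by
          have : p ^ f = N * M + 1 := by rw [← hcard]; omega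
          rw [this]; ring
        rw [this, Nat.add_mul_div_left _ _ (by omega), Nat.div_eq_of_lt hc, zero_add]
      rw [e, mul_one, pow_mul] at hs
      calc V.valuation (p:ℂ) ^ T p f N c ≤ (V.valuation (zetaP p - 1) ^ (p - 1)) ^ T p f N c :=
            pow_le_pow_left' (w_le p V) _
        _ = (V.valuation (zetaP p - 1) ^ (∑ j ∈ Finset.range f, p * (p ^ j * c % N) / N)) ^ N := by
            rw [← pow_mul, ← pow_mul, ← T_S hpF.out.pos hmod, mul_comm N]
        _ ≤ _ := pow_le_pow_left' ((pow_le_pow_left' hg _).trans hs) _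
    intro k
    have := this (k % N) (Nat.mod_lt _ (by omega))
    rw [T_mod] at this
    have hN1 : (θ ^ M) ^ N = 1 := by
      rw [← pow_mul, mul_comm M, ← hM, ← ho, pow_orderOf_eq_one]
    rw [pow_eq_pow_mod k hN1]
    exact this
  have key2 : ∀ k, ¬ N ∣ k → V.valuation (G p ((θ ^ M) ^ k)) ^ N = V.valuation (p:ℂ) ^ T p f N k := by
    intro k hk
    obtain ⟨k', hk'⟩ : ∃ k', N ∣ k + k' := ⟨(N - 1) * k, ⟨k, by
      obtain ⟨n, rfl⟩ : ∃ n, N = n + 1 := ⟨N - 1, by omega⟩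
      simp; ring⟩⟩
    have hT := T_add (f := f) hcop hk hk'
    have hord : orderOf (θ ^ M) = N := by
      rw [orderOf_pow_of_dvd hM0.ne' ⟨N, by rw [ho, hM, mul_comm]⟩, ho, hM,
        Nat.mul_div_cancel _ hM0]
    have hne : (θ ^ M) ^ k ≠ 1 := fun h => hk (hord ▸ orderOf_dvd_of_pow_eq_one h)
    have hodd' : Odd (orderOf ((θ ^ M) ^ k)) := by
      refine Odd.of_dvd_nat hodd ?_
      have := orderOf_pow_dvd (x := θ ^ M) k
      rwa [hord] at this
    have hinv : ((θ ^ M) ^ k)⁻¹ = (θ ^ M) ^ k' := by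
      rw [inv_eq_iff_mul_eq_one, ← pow_add]
      exact orderOf_dvd_iff_pow_eq_one.mp (hord ▸ hk')
    have hmul := G_mul_inv p hodd' hne
    rw [hinv, hcard] at hmul
    have h3 : V.valuation (G p ((θ ^ M) ^ k)) ^ N * V.valuation (G p ((θ ^ M) ^ k')) ^ N =
        V.valuation (p:ℂ) ^ T p f N k * V.valuation (p:ℂ) ^ T p f N k' := by
      rw [← mul_pow, ← map_mul, hmul, ← pow_add, hT, pow_mul]
      push_cast
      rw [map_pow]
    refine le_antisymm ?_ (key k)
    by_contra hlt
    push Not at hlt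
    have hp0 := val_p_pos (V := V) hpF.out
    have := mul_lt_mul_of_lt_of_le_of_pos_of_nonneg hlt (key k') (by exact pow_pos hp0 _) zero_le'
    rw [h3] at this
    exact lt_irrefl _ this
  have hgcd : (Fintype.card F - 1) / Nat.gcd (Fintype.card F - 1) j = N := by
    rw [← ho, ← orderOf_pow, ← hj, hχ]
  have hgM : Nat.gcd (Fintype.card F - 1) j = M := by
    have h2 := Nat.div_mul_cancel (Nat.gcd_dvd_left (Fintype.card F - 1) j)
    rw [hgcd] at h2
    have : 0 < N := by omega
    exact Nat.eq_of_mul_eq_mul_left this (h2.trans hM)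
  obtain ⟨u, hu⟩ : M ∣ j := hgM ▸ Nat.gcd_dvd_right _ _
  refine ⟨u, ?_, fun k hk => ?_⟩
  · rw [hM, hu, mul_comm N, Nat.gcd_mul_left] at hgM
    have : Nat.gcd N u = 1 := Nat.eq_of_mul_eq_mul_left hM0 (by rw [hgM, mul_one])
    rw [Nat.coprime_comm]; exact this
  · have huN : Nat.Coprime u N := by
      rw [hM, hu, mul_comm N, Nat.gcd_mul_left] at hgM
      have : Nat.gcd N u = 1 := Nat.eq_of_mul_eq_mul_left hM0 (by rw [hgM, mul_one])
      rw [Nat.coprime_comm]; exact this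
    rw [hj, hu, pow_mul θ, ← pow_mul]
    exact key2 _ fun h => hk (huN.symm.dvd_of_dvd_mul_left h)
end
end S18

namespace S18

structure Hyp (p l m r1 r2 N f : ℕ) : Prop where
  hp : p.Prime
  hl : l.Prime
  hm : m.Prime
  hne : l ≠ m
  hl4 : l % 4 = 3
  hl3 : 3 < l
  hm2 : m % 2 = 1
  hr1 : 1 ≤ r1
  hr2 : 1 ≤ r2
  hN : N = l ^ r1 * m ^ r2
  hcop : Nat.Coprime N p
  ho1 : orderOf (p : ZMod (l ^ r1)) = Nat.totient (l ^ r1) / 2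
  ho2 : orderOf (p : ZMod (m ^ r2)) = Nat.totient (m ^ r2)
  hof : orderOf (p : ZMod N) = f
  hf : f = Nat.totient N / 2

namespace Hyp
variable {p l m r1 r2 N f : ℕ} [hF : Fact l.Prime] (D : Hyp p l m r1 r2 N f)
include D

lemma N_pos : 0 < N := by
  rw [D.hN]; exact Nat.mul_pos (pow_pos D.hl.pos _) (pow_pos D.hm.pos _)

lemma l_dvd : l ∣ N := by
  rw [D.hN]; exact (dvd_pow_self l (by have := D.hr1; omega)).mul_right _

lemma m_dvd : m ∣ N := by
  rw [D.hN]; exact (dvd_pow_self m (by have := D.hr2; omega)).mul_left _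

lemma N_odd : Odd N := by
  rw [D.hN]
  have : Odd l := Nat.odd_iff.mpr (by have := D.hl4; omega)
  exact this.pow.mul (Nat.odd_iff.mpr D.hm2).pow

lemma cop_lm : Nat.Coprime l m := (Nat.coprime_primes D.hl D.hm).mpr D.hne

lemma m3 : 3 ≤ m := by have := D.hm.two_le; have := D.hm2; omega

lemma N_gt : 1 < N := (by have := D.hl3; omega : 1 < l).trans_le (Nat.le_of_dvd D.N_pos D.l_dvd)

/-- half totient of the first factor -/
lemma totA : ∃ A, Odd A ∧ Nat.totient (l ^ r1) = 2 * A ∧ Nat.totient (l ^ r1) / 2 = A := by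
  obtain ⟨s, rfl⟩ : ∃ s, r1 = s + 1 := ⟨r1 - 1, by have := D.hr1; omega⟩
  have h4 := D.hl4
  obtain ⟨k, rfl⟩ : ∃ k, l = 4 * k + 3 := ⟨l / 4, by omega⟩
  refine ⟨(4 * k + 3) ^ s * (2 * k + 1), ?_, ?_⟩
  · exact (Odd.pow ⟨2 * k + 1, by ring⟩).mul ⟨k, by ring⟩
  · have : Nat.totient ((4 * k + 3) ^ (s + 1)) = 2 * ((4 * k + 3) ^ s * (2 * k + 1)) := by
      rw [Nat.totient_prime_pow_succ D.hl, show 4 * k + 3 - 1 = 2 * (2 * k + 1) by omega]; ring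
    exact ⟨this, by rw [this]; simp⟩

lemma totB : ∃ B, 0 < B ∧ Nat.totient (m ^ r2) = 2 * B ∧ Nat.totient (m ^ r2) / 2 = B := by
  obtain ⟨s, rfl⟩ : ∃ s, r2 = s + 1 := ⟨r2 - 1, by have := D.hr2; omega⟩
  have h4 := D.hm2
  have h3 := D.m3
  obtain ⟨k, rfl⟩ : ∃ k, m = 2 * k + 1 := ⟨m / 2, by omega⟩
  refine ⟨(2 * k + 1) ^ s * k, ?_, ?_⟩
  · have : 0 < k := by omega
    positivity
  · have : Nat.totient ((2 * k + 1) ^ (s + 1)) = 2 * ((2 * k + 1) ^ s * k) := by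
      rw [Nat.totient_prime_pow_succ D.hm, show 2 * k + 1 - 1 = 2 * k by omega]; ring
    exact ⟨this, by rw [this]; simp⟩

lemma tot_N : Nat.totient N = Nat.totient (l ^ r1) * Nat.totient (m ^ r2) := by
  rw [D.hN, Nat.totient_mul (D.cop_lm.pow _ _)]

lemma two_f : 2 * f = Nat.totient N := by
  obtain ⟨A, -, hA, -⟩ := D.totA
  rw [D.hf, D.tot_N, hA, mul_assoc]; simp

/-- `f/2 = A*B`. -/
lemma f_AB : f = 2 * ((Nat.totient (l ^ r1) / 2) * (Nat.totient (m ^ r2) / 2)) := by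
  obtain ⟨A, -, hA, hA2⟩ := D.totA
  obtain ⟨B, -, hB, hB2⟩ := D.totB
  have := D.two_f
  rw [D.tot_N, hA, hB] at this
  rw [hA2, hB2]
  nlinarith

lemma pow1 : (p : ZMod (l ^ r1)) ^ (Nat.totient (l ^ r1) / 2) = 1 := by
  rw [← D.ho1, pow_orderOf_eq_one]

lemma pow1l : (p : ZMod l) ^ (Nat.totient (l ^ r1) / 2) = 1 := by
  have h := congrArg (ZMod.castHom (dvd_pow_self l (by have := D.hr1; omega : r1 ≠ 0)) (ZMod l)) D.pow1
  rwa [map_pow, map_natCast, map_one] at h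

lemma eta_p : quadraticChar (ZMod l) (p : ZMod l) = 1 := by
  obtain ⟨A, hA, -, hA2⟩ := D.totA
  have h := congrArg (quadraticChar (ZMod l)) D.pow1l
  rw [map_pow, map_one, hA2] at h
  have h0 : (p : ZMod l) ≠ 0 := by
    rw [Ne, ZMod.natCast_eq_zero_iff]
    intro hd
    have := (D.hcop.coprime_dvd_left D.l_dvd)
    exact D.hl.one_lt.ne' (Nat.eq_one_of_dvd_coprimes this dvd_rfl hd)
  rcases quadraticChar_dichotomy h0 with h1 | h1
  · exact h1
  · rw [h1, hA.neg_one_pow] at h; norm_num at h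

/-- The unit residues are plus minus powers of `p`. -/
lemma unit_sum {R : Type*} [AddCommMonoid R] (g : ℕ → R) :
    ∑ c ∈ (Finset.range N).filter (fun c => N.Coprime c), g c =
      ∑ i ∈ Finset.range f, (g (p ^ i % N) + g ((N - 1) * p ^ i % N)) := by
  classical
  have hN0 := D.N_pos
  haveI : NeZero N := ⟨hN0.ne'⟩
  have hNm : ((N - 1 : ℕ) : ZMod N) = -1 := by
    rw [Nat.cast_sub (by omega)]; simp
  have hNml : ((N - 1 : ℕ) : ZMod l) = -1 := by
    have : (N : ZMod l) = 0 := (ZMod.natCast_eq_zero_iff _ _).mpr D.l_dvd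
    rw [Nat.cast_sub (by omega), this]; simp
  have castl : ∀ x : ℕ, ((x % N : ℕ) : ZMod l) = x := fun x => by
    rw [ZMod.natCast_eq_natCast_iff]
    exact (Nat.mod_modEq x N).of_dvd D.l_dvd
  set S := (Finset.range f).image (fun i => p ^ i % N) with hS
  set S' := (Finset.range f).image (fun i => (N - 1) * p ^ i % N) with hS'
  have inj0 : ∀ i ∈ Finset.range f, ∀ j ∈ Finset.range f, (p : ZMod N) ^ i = p ^ j → i = j := by
    intro i hi j hj h
    have hu : IsUnit (p : ZMod N) := (ZMod.isUnit_iff_coprime _ _).mpr D.hcop.symm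
    refine pow_injOn_Iio_orderOf (x := (p : ZMod N)) ?_ ?_ h
    · simpa [D.hof] using hi
    · simpa [D.hof] using hj
  have inj1 : Set.InjOn (fun i => p ^ i % N) (Finset.range f) := by
    intro i hi j hj h
    apply inj0 i hi j hj
    have h2 := (ZMod.natCast_eq_natCast_iff (p ^ i) (p ^ j) N).mpr h
    simpa using h2
  have inj2 : Set.InjOn (fun i => (N - 1) * p ^ i % N) (Finset.range f) := by
    intro i hi j hj h
    apply inj0 i hi j hj
    have h2 := (ZMod.natCast_eq_natCast_iff ((N - 1) * p ^ i) ((N - 1) * p ^ j) N).mpr h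
    rw [Nat.cast_mul, Nat.cast_mul, hNm] at h2
    simpa using h2
  have hdisj : Disjoint S S' := by
    rw [Finset.disjoint_left]
    intro x hx hx'
    obtain ⟨i, -, rfl⟩ := Finset.mem_image.mp hx
    obtain ⟨j, -, h⟩ := Finset.mem_image.mp hx'
    have h2 := congrArg (fun x : ℕ => quadraticChar (ZMod l) (x : ZMod l)) h
    simp only [castl, Nat.cast_mul, Nat.cast_pow, map_mul, map_pow, hNml, D.eta_p,
      qc_neg_one D.hl4] at h2
    norm_num at h2
  have hsub : S ∪ S' ⊆ (Finset.range N).filter (fun c => N.Coprime c) := by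
    intro x hx
    rw [Finset.mem_filter, Finset.mem_range]
    rcases Finset.mem_union.mp hx with hx | hx
    · obtain ⟨i, -, rfl⟩ := Finset.mem_image.mp hx
      refine ⟨Nat.mod_lt _ hN0, ?_⟩
      rw [Nat.coprime_comm, Nat.Coprime, ← Nat.gcd_rec, Nat.gcd_comm] 
      exact (D.hcop.pow_right i).symm
    · obtain ⟨i, -, rfl⟩ := Finset.mem_image.mp hx
      refine ⟨Nat.mod_lt _ hN0, ?_⟩
      rw [Nat.coprime_comm, Nat.Coprime, ← Nat.gcd_rec]
      refine Nat.Coprime.mul_right ?_ (D.hcop.pow_right i)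
      have := Nat.coprime_self_sub_right (m := 1) (n := N) (by omega)
      simpa using this
  have heq : S ∪ S' = (Finset.range N).filter (fun c => N.Coprime c) := by
    refine Finset.eq_of_subset_of_card_le hsub ?_
    rw [← Nat.totient_eq_card_coprime, Finset.card_union_of_disjoint hdisj,
      Finset.card_image_of_injOn inj1, Finset.card_image_of_injOn inj2, Finset.card_range,
      ← D.two_f]
    omega
  rw [← heq, Finset.sum_union hdisj, Finset.sum_image inj1, Finset.sum_image inj2,
    Finset.sum_add_distrib]

end Hyp
end S18

namespace S18

lemma sum_range_mul_block {R : Type*} [AddCommMonoid R] (n k : ℕ) (g : ℕ → R) :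
    ∑ c ∈ Finset.range (n * k), g c = ∑ b ∈ Finset.range k, ∑ a ∈ Finset.range n, g (n * b + a) := by
  induction k with
  | zero => simp
  | succ k ih => rw [mul_add, mul_one, Finset.sum_range_add, ih, Finset.sum_range_succ]

lemma perm_block {R : Type*} [AddCommMonoid R] (n k m : ℕ) (hm : Nat.Coprime m n) (hn : 0 < n)
    (g : ℕ → R) (hg : ∀ c, g (c % n) = g c) :
    ∑ c ∈ Finset.range (n * k), g (m * c) = ∑ c ∈ Finset.range (n * k), g c := by
  haveI : NeZero n := ⟨hn.ne'⟩
  rw [sum_range_mul_block, sum_range_mul_block]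
  refine Finset.sum_congr rfl fun b _ => ?_
  have h1 : ∀ a, g (n * b + a) = g a := fun a => by rw [← hg]; simp [hg]
  have h2 : ∀ a, g (m * (n * b + a)) = g (m * a) := fun a => by
    rw [← hg, show m * (n * b + a) = m * a + n * (m * b) by ring, Nat.add_mul_mod_self_left, hg]
  simp_rw [h1, h2]
  rw [← sum_zmod_eq_range n g, ← sum_zmod_eq_range n (fun a => g (m * a))]
  refine Fintype.sum_equiv (Units.mulLeft (ZMod.unitOfCoprime m hm)) _ _ fun x => ?_
  simp only [Units.mulLeft_apply, ZMod.coe_unitOfCoprime]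
  rw [ZMod.val_mul, hg, ZMod.val_natCast, ← hg, ← hg (m % n * _), Nat.mod_mul_mod]

section
variable {l : ℕ} [hF : Fact l.Prime]

lemma sum_eta (hl4 : l % 4 = 3) (b : ℕ) :
    ∑ a ∈ Finset.range l, quadraticChar (ZMod l) ((l * b + a : ℕ) : ZMod l) = 0 := by
  have h := quadraticChar_sum_zero (ringChar_ne_two hl4)
  rw [← h, ← sum_zmod_eq_range l (fun a => quadraticChar (ZMod l) ((l * b + a : ℕ) : ZMod l))]
  refine Finset.sum_congr rfl fun j _ => ?_
  simp

lemma sum_etaW (b : ℕ) :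
    ∑ a ∈ Finset.range l, quadraticChar (ZMod l) ((l * b + a : ℕ) : ZMod l) * (a : ℤ) = W l := by
  rw [W, ← sum_zmod_eq_range l (fun a => quadraticChar (ZMod l) ((l * b + a : ℕ) : ZMod l) * (a : ℤ))]
  refine Finset.sum_congr rfl fun j _ => ?_
  simp

lemma sumY (hl4 : l % 4 = 3) (s k : ℕ) :
    ∑ c ∈ Finset.range (l * s * k), quadraticChar (ZMod l) (c : ZMod l) * ((c % (l * s) : ℕ) : ℤ)
      = s * k * W l := by
  rw [sum_range_mul_block]
  have : ∀ b ∈ Finset.range k, ∑ a ∈ Finset.range (l * s),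
      quadraticChar (ZMod l) ((l * s * b + a : ℕ) : ZMod l) * (((l * s * b + a) % (l * s) : ℕ) : ℤ)
      = s * W l := by
    intro b _
    have h1 : ∀ a ∈ Finset.range (l * s), quadraticChar (ZMod l) ((l * s * b + a : ℕ) : ZMod l) *
        (((l * s * b + a) % (l * s) : ℕ) : ℤ) = quadraticChar (ZMod l) (a : ZMod l) * (a : ℤ) := by
      intro a ha
      rw [Nat.mul_add_mod, Nat.mod_eq_of_lt (Finset.mem_range.mp ha)]
      simp
    rw [Finset.sum_congr rfl h1, sum_range_mul_block]
    have h2 : ∀ b ∈ Finset.range s, ∑ a ∈ Finset.range l,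
        quadraticChar (ZMod l) ((l * b + a : ℕ) : ZMod l) * ((l * b + a : ℕ) : ℤ) = W l := by
      intro b _
      have := sum_etaW (l := l) b
      rw [← this]
      have h0 := congrArg (fun x => x * ((l * b : ℕ) : ℤ)) (sum_eta hl4 b)
      simp only [zero_mul, Finset.sum_mul] at h0
      rw [← sub_eq_zero, ← Finset.sum_sub_distrib, ← h0]
      refine Finset.sum_congr rfl fun a _ => ?_
      push_cast; ring
    rw [Finset.sum_congr rfl h2]; simp
  rw [Finset.sum_congr rfl this]; simp; ring
end

namespace Hyp
variable {p l m r1 r2 N f : ℕ} [hF : Fact l.Prime] (D : Hyp p l m r1 r2 N f)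
include D

lemma cop_iff (c : ℕ) : N.Coprime c ↔ ¬ l ∣ c ∧ ¬ m ∣ c := by
  have h1 := D.hr1
  have h2 := D.hr2
  rw [D.hN, Nat.coprime_mul_iff_left, Nat.coprime_pow_left_iff (by omega),
    Nat.coprime_pow_left_iff (by omega), D.hl.coprime_iff_not_dvd, D.hm.coprime_iff_not_dvd]

lemma incl_excl (κ : MulChar (ZMod l) ℤ) {R : Type*} [CommRing R] (g : ℕ → R) :
    ∑ c ∈ (Finset.range N).filter (fun c => N.Coprime c), (κ (c : ZMod l) : R) * g c =
      ∑ c ∈ Finset.range N, (κ (c : ZMod l) : R) * g c -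
        (κ (m : ZMod l) : R) * ∑ c ∈ Finset.range (N / m), (κ (c : ZMod l) : R) * g (m * c) := by
  classical
  have h1 : ∑ c ∈ (Finset.range N).filter (fun c => N.Coprime c), (κ (c : ZMod l) : R) * g c =
      ∑ c ∈ (Finset.range N).filter (fun c => ¬ m ∣ c), (κ (c : ZMod l) : R) * g c := by
    refine Finset.sum_subset ?_ ?_
    · intro c hc
      rw [Finset.mem_filter] at hc ⊢
      exact ⟨hc.1, ((D.cop_iff c).mp hc.2).2⟩
    · intro c hc hc'
      rw [Finset.mem_filter] at hc hc'
      have : l ∣ c := by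
        by_contra h
        exact hc' ⟨hc.1, (D.cop_iff c).mpr ⟨h, hc.2⟩⟩
      rw [(ZMod.natCast_eq_zero_iff c l).mpr this, MulChar.map_zero]; simp
  have h2 := Finset.sum_filter_add_sum_filter_not (Finset.range N) (fun c => m ∣ c)
    (fun c => (κ (c : ZMod l) : R) * g c)
  have h3 : ∑ c ∈ (Finset.range N).filter (fun c => m ∣ c), (κ (c : ZMod l) : R) * g c =
      (κ (m : ZMod l) : R) * ∑ c ∈ Finset.range (N / m), (κ (c : ZMod l) : R) * g (m * c) := by
    have : (Finset.range N).filter (fun c => m ∣ c) = (Finset.range (N / m)).image (fun c => m * c) := by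
      ext c
      simp only [Finset.mem_filter, Finset.mem_range, Finset.mem_image]
      constructor
      · rintro ⟨hc, k, rfl⟩
        exact ⟨k, (Nat.lt_div_iff_mul_lt' D.m_dvd k).mpr hc, rfl⟩
      · rintro ⟨k, hk, rfl⟩
        exact ⟨(Nat.lt_div_iff_mul_lt' D.m_dvd k).mp hk, dvd_mul_right _ _⟩
    rw [this, Finset.sum_image (fun a _ b _ h => Nat.eq_of_mul_eq_mul_left D.hm.pos h), Finset.mul_sum]
    refine Finset.sum_congr rfl fun c _ => ?_
    push_cast
    rw [map_mul]; push_cast; ring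
  rw [h1, ← h2, h3]; ring

/-- the twisted sum -/
lemma Dsum_A {t1 t2 : ℕ} (h1 : t1 < r1) (h2 : t2 < r2) :
    (l : ℤ) * ∑ c ∈ (Finset.range N).filter (fun c => N.Coprime c),
      quadraticChar (ZMod l) (c : ZMod l) * ((c * (l ^ t1 * m ^ t2) % N : ℕ) : ℤ) =
    N * W l * ((l : ℤ) ^ t1 * (m : ℤ) ^ t2 * (1 - quadraticChar (ZMod l) (m : ZMod l))) := by
  have h := D.incl_excl (quadraticChar (ZMod l)) (R := ℤ)
    (fun c => ((c * (l ^ t1 * m ^ t2) % N : ℕ) : ℤ))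
  simp only [Int.cast_id] at h
  rw [h]
  obtain ⟨a, rfl⟩ := Nat.exists_eq_add_of_lt h1
  obtain ⟨b, rfl⟩ := Nat.exists_eq_add_of_lt h2
  set lam := l ^ t1 * m ^ t2 with hlam
  have hlp := D.hl.pos
  have hmp := D.hm.pos
  have hN : N = l * (l ^ a * m ^ b * m) * lam := by rw [D.hN, hlam]; ring
  have hNm : N / m = l * (l ^ a * m ^ b) * lam := by
    rw [hN]; exact Nat.div_eq_of_eq_mul_left hmp (by ring)
  have e1 : ∀ c, c * lam % N = lam * (c % (l * (l ^ a * m ^ b * m))) := fun c => by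
    rw [hN, mul_comm c, mul_comm _ lam, Nat.mul_mod_mul_left]
  have e2 : ∀ c, m * c * lam % N = lam * (m * (c % (l * (l ^ a * m ^ b)))) := fun c => by
    rw [e1, show l * (l ^ a * m ^ b * m) = m * (l * (l ^ a * m ^ b)) by ring, Nat.mul_mod_mul_left]
  simp_rw [e2, e1]
  rw [hNm]
  conv_lhs => rw [hN]
  have y1 := sumY D.hl4 (l ^ a * m ^ b * m) lam
  have y2 := sumY D.hl4 (l ^ a * m ^ b) lam
  have z1 : ∑ c ∈ Finset.range (l * (l ^ a * m ^ b * m) * lam), quadraticChar (ZMod l) (c : ZMod l) *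
      ((lam * (c % (l * (l ^ a * m ^ b * m))) : ℕ) : ℤ) =
      lam * (((l ^ a * m ^ b * m : ℕ) : ℤ) * lam * W l) := by
    rw [← y1, Finset.mul_sum]
    exact Finset.sum_congr rfl fun c _ => by push_cast; ring
  have z2 : ∑ c ∈ Finset.range (l * (l ^ a * m ^ b) * lam), quadraticChar (ZMod l) (c : ZMod l) *
      ((lam * (m * (c % (l * (l ^ a * m ^ b)))) : ℕ) : ℤ) =
      lam * m * (((l ^ a * m ^ b : ℕ) : ℤ) * lam * W l) := by
    rw [← y2, Finset.mul_sum]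
    exact Finset.sum_congr rfl fun c _ => by push_cast; ring
  rw [z1, z2]
  have e3 : (lam : ℤ) = (l : ℤ) ^ t1 * (m : ℤ) ^ t2 := by rw [hlam]; push_cast; ring
  have e4 : (N : ℤ) = l * (l ^ a * m ^ b * m) * lam := by rw [hN]; push_cast; ring
  rw [e4, ← e3]
  push_cast; ring

lemma Dsum_B {t1 : ℕ} (h1 : t1 < r1) :
    (l : ℤ) * ∑ c ∈ (Finset.range N).filter (fun c => N.Coprime c),
      quadraticChar (ZMod l) (c : ZMod l) * ((c * (l ^ t1 * m ^ r2) % N : ℕ) : ℤ) =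
    N * W l * ((l : ℤ) ^ t1 * (Nat.totient (m ^ r2) : ℤ)) := by
  have h := D.incl_excl (quadraticChar (ZMod l)) (R := ℤ)
    (fun c => ((c * (l ^ t1 * m ^ r2) % N : ℕ) : ℤ))
  simp only [Int.cast_id] at h
  rw [h]
  obtain ⟨a, rfl⟩ := Nat.exists_eq_add_of_lt h1
  obtain ⟨b, rfl⟩ : ∃ b, r2 = b + 1 := ⟨r2 - 1, by have := D.hr2; omega⟩
  set lam := l ^ t1 * m ^ (b + 1) with hlam
  have hlp := D.hl.pos
  have hmp := D.hm.pos
  have hN : N = l * l ^ a * lam := by rw [D.hN, hlam]; ring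
  have hNm : N / m = l * l ^ a * (l ^ t1 * m ^ b) := by
    rw [hN]; exact Nat.div_eq_of_eq_mul_left hmp (by rw [hlam]; ring)
  have e1 : ∀ c, c * lam % N = lam * (c % (l * l ^ a)) := fun c => by
    rw [hN, mul_comm c, mul_comm _ lam, Nat.mul_mod_mul_left]
  simp_rw [e1]
  rw [hNm]
  conv_lhs => rw [hN]
  have y1 := sumY D.hl4 (l ^ a) lam
  have y2 := sumY D.hl4 (l ^ a) (l ^ t1 * m ^ b)
  have hcop : Nat.Coprime m (l * l ^ a) := by
    rw [← pow_succ']; exact D.cop_lm.symm.pow_right _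
  rw [← perm_block (l * l ^ a) _ m hcop (by positivity) (fun c =>
    quadraticChar (ZMod l) (c : ZMod l) * ((c % (l * l ^ a) : ℕ) : ℤ)) (fun c => by
      have : ((c % (l * l ^ a) : ℕ) : ZMod l) = c := by
        rw [ZMod.natCast_eq_natCast_iff]
        exact (Nat.mod_modEq c _).of_dvd (dvd_mul_right _ _)
      simp only [this, Nat.mod_mod])] at y2
  have z1 : ∑ c ∈ Finset.range (l * l ^ a * lam), quadraticChar (ZMod l) (c : ZMod l) *
      ((lam * (c % (l * l ^ a)) : ℕ) : ℤ) =
      lam * (((l ^ a : ℕ) : ℤ) * lam * W l) := by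
    rw [← y1, Finset.mul_sum]
    exact Finset.sum_congr rfl fun c _ => by push_cast; ring
  have z2 : quadraticChar (ZMod l) (m : ZMod l) * ∑ c ∈ Finset.range (l * l ^ a * (l ^ t1 * m ^ b)),
      quadraticChar (ZMod l) (c : ZMod l) *
      ((lam * (m * c % (l * l ^ a)) : ℕ) : ℤ) =
      lam * (((l ^ a : ℕ) : ℤ) * (l ^ t1 * m ^ b : ℕ) * W l) := by
    rw [← y2, Finset.mul_sum, Finset.mul_sum]
    exact Finset.sum_congr rfl fun c _ => by push_cast; rw [map_mul]; ring
  rw [z1, z2]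
  have e4 : (N : ℤ) = l * l ^ a * lam := by rw [hN]; push_cast; ring
  have e5 : (Nat.totient (m ^ (b + 1)) : ℤ) = m ^ b * (m - 1) := by
    rw [Nat.totient_prime_pow_succ D.hm]; push_cast [hmp]; ring
  rw [e4, e5, hlam]
  push_cast; ring

lemma T_formula {u lam : ℕ} {n : ℤ} (hu : Nat.Coprime u N) (hlam : ¬ N ∣ lam)
    (hD : (l : ℤ) * ∑ c ∈ (Finset.range N).filter (fun c => N.Coprime c),
      quadraticChar (ZMod l) (c : ZMod l) * ((c * lam % N : ℕ) : ℤ) = N * W l * n) :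
    (2 * l * T p f N (u * lam) : ℤ) =
      l * f * N + quadraticChar (ZMod l) (u : ZMod l) * (N * W l * n) := by
  classical
  have hN0 := D.N_pos
  have castl : ∀ x : ℕ, ((x % N : ℕ) : ZMod l) = x := fun x => by
    rw [ZMod.natCast_eq_natCast_iff]
    exact (Nat.mod_modEq x N).of_dvd D.l_dvd
  have hNml : ((N - 1 : ℕ) : ZMod l) = -1 := by
    have : (N : ZMod l) = 0 := (ZMod.natCast_eq_zero_iff _ _).mpr D.l_dvd
    rw [Nat.cast_sub (by omega), this]; simp
  have hT := T_add (f := f) D.hcop (c := u * lam) (d := (N - 1) * (u * lam))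
    (fun h => hlam (hu.symm.dvd_of_dvd_mul_left h)) ⟨u * lam, by
      obtain ⟨n, rfl⟩ : ∃ n, N = n + 1 := ⟨N - 1, by omega⟩
      simp; ring⟩
  have hU := D.unit_sum (fun c => quadraticChar (ZMod l) (c : ZMod l) * ((c * (u * lam) % N : ℕ) : ℤ))
  simp only [castl, Nat.cast_mul, Nat.cast_pow, map_mul, map_pow, hNml, D.eta_p,
      qc_neg_one D.hl4, one_pow, one_mul, Nat.mod_mul_mod] at hU
  have hT1 : ∑ i ∈ Finset.range f, (((p ^ i * (u * lam) % N : ℕ) : ℤ) +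
      -1 * 1 * (((N - 1) * p ^ i * (u * lam) % N : ℕ) : ℤ)) =
      T p f N (u * lam) - T p f N ((N - 1) * (u * lam)) := by
    rw [T, T]; push_cast
    rw [← Finset.sum_sub_distrib]
    refine Finset.sum_congr rfl fun i _ => ?_
    rw [show ((N - 1 : ℕ) : ℤ) * (p:ℤ) ^ i * (u * lam) = p ^ i * ((N - 1 : ℕ) * (u * lam)) by ring]; ring
  have hP := perm_block N 1 u hu hN0 (fun c => if N.Coprime c then
    quadraticChar (ZMod l) (c : ZMod l) * ((c * lam % N : ℕ) : ℤ) else 0) (fun c => by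
      have : N.Coprime (c % N) ↔ N.Coprime c := by
        rw [Nat.coprime_comm, Nat.Coprime, ← Nat.gcd_rec]
      simp only [castl, this, Nat.mod_mul_mod])
  have hcu : ∀ c, N.Coprime (u * c) ↔ N.Coprime c := fun c => by
    rw [Nat.coprime_mul_iff_right]; exact ⟨fun h => h.2, fun h => ⟨hu.symm, h⟩⟩
  simp only [mul_one, hcu] at hP
  rw [← Finset.sum_filter, ← Finset.sum_filter] at hP
  have hu0 : (u : ZMod l) ≠ 0 := by
    rw [Ne, ZMod.natCast_eq_zero_iff]
    exact ((D.cop_iff u).mp hu.symm).1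
  have hu2 := quadraticChar_sq_one hu0
  have hX : ∑ c ∈ (Finset.range N).filter (fun c => N.Coprime c),
      quadraticChar (ZMod l) (c : ZMod l) * ((c * (u * lam) % N : ℕ) : ℤ) =
      quadraticChar (ZMod l) (u : ZMod l) * ∑ c ∈ (Finset.range N).filter (fun c => N.Coprime c),
      quadraticChar (ZMod l) (c : ZMod l) * ((c * lam % N : ℕ) : ℤ) := by
    rw [← hP, Finset.mul_sum]
    refine Finset.sum_congr rfl fun c _ => ?_
    rw [show u * c * lam = c * (u * lam) by ring]
    push_cast
    rw [map_mul]
    linear_combination -(quadraticChar (ZMod l) (c : ZMod l) * ((c : ℤ) * (u * lam) % N)) * hu2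
  have hT' : (T p f N (u * lam) : ℤ) + T p f N ((N - 1) * (u * lam)) = f * N := by exact_mod_cast hT
  have hU' : ∑ c ∈ (Finset.range N).filter (fun c => N.Coprime c),
      quadraticChar (ZMod l) (c : ZMod l) * ((c * (u * lam) % N : ℕ) : ℤ) =
      T p f N (u * lam) - T p f N ((N - 1) * (u * lam)) := by
    rw [← hT1]; exact_mod_cast hU
  rw [hX] at hU'
  linear_combination (l:ℤ) * hT' - (l:ℤ) * hU' + quadraticChar (ZMod l) (u : ZMod l) * hD
end Hyp
end S18

namespace S18
namespace Hyp
variable {p l m r1 r2 N f : ℕ} [hF : Fact l.Prime] (D : Hyp p l m r1 r2 N f)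

/-- `lam` has Stickelberger defect `n`. -/
def GD (l N lam n : ℕ) [Fact l.Prime] : Prop := ¬ N ∣ lam ∧
  (l : ℤ) * ∑ c ∈ (Finset.range N).filter (fun c => N.Coprime c),
      quadraticChar (ZMod l) (c : ZMod l) * ((c * lam % N : ℕ) : ℤ) = N * W l * n

include D

lemma val_G [hpF : Fact p.Prime] {F : Type} [Field F] [Fintype F] [Algebra (ZMod p) F]
    (hcard : Fintype.card F = p ^ f) {χ : MulChar F ℂ} (hχ : orderOf χ = N) :
    ∃ (V : ValuationSubring ℂ) (ε : ℤ), V.valuation (p:ℂ) < 1 ∧ (ε = 1 ∨ ε = -1) ∧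
      ∀ lam n : ℕ, GD l N lam n → classNumSqrtNeg l * n ≤ f ∧
        V.valuation (G p (χ ^ lam)) ^ 2 =
          V.valuation (p:ℂ) ^ ((f : ℤ) + ε * (classNumSqrtNeg l * n : ℕ)) := by
  obtain ⟨V, hV⟩ := exists_val D.hp
  obtain ⟨u, hu, hs⟩ := stick p hV hχ D.N_odd D.N_gt hcard D.hcop
  set h := classNumSqrtNeg l
  obtain ⟨ε0, he0, hW⟩ : ∃ ε0 : ℤ, (ε0 = 1 ∨ ε0 = -1) ∧ W l = ε0 * (l * h) := by
    rcases abs_eq (by positivity) |>.mp (W_abs_cn D.hl4 D.hl3) with h | h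
    · exact ⟨1, Or.inl rfl, by rw [h]; ring⟩
    · exact ⟨-1, Or.inr rfl, by rw [h]; ring⟩
  have hu0 : (u : ZMod l) ≠ 0 := by
    rw [Ne, ZMod.natCast_eq_zero_iff]
    exact ((D.cop_iff u).mp hu.symm).1
  obtain ⟨ε, he⟩ : ∃ ε, ε = quadraticChar (ZMod l) (u : ZMod l) * ε0 := ⟨_, rfl⟩
  have he1 : ε = 1 ∨ ε = -1 := by
    rcases quadraticChar_dichotomy hu0 with h | h <;> rcases he0 with h' | h' <;> simp [he, h, h']
  refine ⟨V, ε, hV, he1, fun lam n hg => ?_⟩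
  have hT := D.T_formula hu hg.1 hg.2
  have hl0 : (l : ℤ) ≠ 0 := by exact_mod_cast D.hl.ne_zero
  have hN0 : (0:ℤ) < N := by exact_mod_cast D.N_pos
  have h2T : (2 * T p f N (u * lam) : ℤ) = N * (f + ε * (h * n : ℕ)) := by
    apply mul_left_cancel₀ hl0
    rw [hW] at hT
    push_cast
    rw [he]
    linear_combination hT
  have hle : T p f N (u * lam) ≤ f * N := by
    have := T_add (f := f) D.hcop (c := u * lam) (d := (N - 1) * (u * lam))
      (fun h => hg.1 (hu.symm.dvd_of_dvd_mul_left h)) ⟨u * lam, by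
        obtain ⟨n, hn⟩ : ∃ n, N = n + 1 := ⟨N - 1, by have := D.N_pos; omega⟩
        rw [hn]; simp; ring⟩
    omega
  have hle' : (T p f N (u * lam) : ℤ) ≤ f * N := by exact_mod_cast hle
  have hb1 : 0 ≤ (f : ℤ) + ε * (h * n : ℕ) := by
    by_contra hc; push Not at hc; nlinarith
  have hb2 : (f : ℤ) + ε * (h * n : ℕ) ≤ 2 * f := by
    by_contra hc; push Not at hc; nlinarith
  refine ⟨by rcases he1 with h | h <;> rw [h] at hb1 hb2 <;> omega, ?_⟩
  obtain ⟨E, hE⟩ := Int.eq_ofNat_of_zero_le hb1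
  rw [hE] at h2T ⊢
  have h2 : 2 * T p f N (u * lam) = N * E := by exact_mod_cast h2T
  rw [zpow_natCast]
  refine (pow_left_inj₀ zero_le' zero_le' D.N_pos.ne').mp ?_
  rw [← pow_mul, mul_comm 2, pow_mul, hs lam hg.1, ← pow_mul, ← pow_mul, mul_comm _ 2, h2, mul_comm]

lemma not_dvd_A {t1 t2 : ℕ} (h1 : t1 < r1) : ¬ N ∣ l ^ t1 * m ^ t2 := by
  intro h
  have h2 : l ^ r1 ∣ l ^ t1 * m ^ t2 := (by rw [D.hN]; exact dvd_mul_right _ _ : l ^ r1 ∣ N).trans h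
  have h3 := (D.cop_lm.pow r1 t2).dvd_of_dvd_mul_right h2
  exact absurd ((Nat.pow_dvd_pow_iff_le_right D.hl.one_lt).mp h3) (by omega)

lemma GD_A1 {t1 t2 : ℕ} (h1 : t1 < r1) (h2 : t2 < r2)
    (h : quadraticChar (ZMod l) (m : ZMod l) = 1) : GD l N (l ^ t1 * m ^ t2) 0 :=
  ⟨D.not_dvd_A h1, by rw [D.Dsum_A h1 h2, h]; simp⟩

lemma GD_A2 {t1 t2 : ℕ} (h1 : t1 < r1) (h2 : t2 < r2)
    (h : quadraticChar (ZMod l) (m : ZMod l) = -1) : GD l N (l ^ t1 * m ^ t2) (2 * (l ^ t1 * m ^ t2)) :=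
  ⟨D.not_dvd_A h1, by rw [D.Dsum_A h1 h2, h]; push_cast; ring⟩

lemma GD_B {t1 : ℕ} (h1 : t1 < r1) : GD l N (l ^ t1 * m ^ r2) (l ^ t1 * Nat.totient (m ^ r2)) :=
  ⟨D.not_dvd_A h1, by rw [D.Dsum_B h1]; push_cast; ring⟩
end Hyp
end S18

namespace S18
section
variable {l : ℕ} [hF : Fact l.Prime]

/-- basic sums over one period are integral multiples of `δ`. -/
def PerInt (κ : MulChar (ZMod l) ℤ) (δ : ℂ) : Prop :=
  ∀ z : ℂ, z ^ l = 1 → ∃ k : ℤ, ∑ a ∈ Finset.range l, (κ (a : ZMod l) : ℂ) * z ^ a = k * δ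

lemma perInt_one : PerInt (1 : MulChar (ZMod l) ℤ) 1 := by
  intro z hz
  have h1 : ∀ a ∈ Finset.range l, (((1 : MulChar (ZMod l) ℤ) (a : ZMod l) : ℤ) : ℂ) * z ^ a =
      z ^ a - if a = 0 then 1 else 0 := by
    intro a ha
    by_cases h : a = 0
    · simp [h, MulChar.map_zero]
    · have : (a : ZMod l) ≠ 0 := by
        rw [Ne, ZMod.natCast_eq_zero_iff]
        exact fun hd => absurd (Nat.le_of_dvd (by omega) hd) (by have := Finset.mem_range.mp ha; omega)
      rw [MulChar.one_apply this.isUnit]; simp [h]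
  rw [Finset.sum_congr rfl h1, Finset.sum_sub_distrib]
  have h0 : ∑ a ∈ Finset.range l, (if a = 0 then (1:ℂ) else 0) = 1 := by
    rw [Finset.sum_ite_eq' (Finset.range l) 0 (fun _ => (1:ℂ))]
    simp [hF.out.pos]
  rw [h0]
  by_cases hz1 : z = 1
  · exact ⟨l - 1, by simp [hz1]⟩
  · refine ⟨-1, ?_⟩
    rw [geom_sum_eq hz1, hz]; simp

lemma perInt_eta (hl4 : l % 4 = 3) : PerInt (quadraticChar (ZMod l)) (sqrtNeg l) := by
  intro z hz
  by_cases hz1 : z = 1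
  · refine ⟨0, ?_⟩
    have h := sum_eta (l := l) hl4 0
    simp only [mul_zero, zero_add] at h
    have h' := congrArg (fun x : ℤ => (x : ℂ)) h
    push_cast at h'
    simp only [hz1, one_pow, mul_one, h']; simp
  · have hprim : IsPrimitiveRoot z l := by
      rw [IsPrimitiveRoot.iff_orderOf]
      exact orderOf_eq_prime hz hz1
    haveI : NeZero l := ⟨hF.out.ne_zero⟩
    have hs : gaussSum (chi l) (AddChar.zmodChar l hprim.pow_eq_one) ^ 2 =
        chi l (-1) * Fintype.card (ZMod l) := gaussSum_sq (chi_ne_one hl4) (chi_quad l)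
      (AddChar.zmodChar_primitive_of_primitive_root l hprim)
    rw [chi_apply, qc_neg_one hl4, ZMod.card] at hs
    have he : gaussSum (chi l) (AddChar.zmodChar l hprim.pow_eq_one) =
        ∑ a ∈ Finset.range l, ((quadraticChar (ZMod l) (a : ZMod l) : ℤ) : ℂ) * z ^ a := by
      rw [← sum_zmod_eq_range l, gaussSum]
      refine Finset.sum_congr rfl fun j _ => ?_
      rw [chi_apply, AddChar.zmodChar_apply]
      simp
    rw [he] at hs
    have h2 : (∑ a ∈ Finset.range l, ((quadraticChar (ZMod l) (a : ZMod l) : ℤ) : ℂ) * z ^ a) ^ 2 =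
        sqrtNeg l ^ 2 := by
      rw [hs, sqrtNeg_sq]; push_cast; ring
    rcases sq_eq_sq_iff_eq_or_eq_neg.mp h2 with h | h
    · exact ⟨1, by rw [h]; simp⟩
    · exact ⟨-1, by rw [h]; simp⟩

lemma perInt_mul {κ : MulChar (ZMod l) ℤ} {δ : ℂ} (hκ : PerInt κ δ) (s : ℕ) (z : ℂ)
    (hz : z ^ (l * s) = 1) :
    ∃ k : ℤ, ∑ a ∈ Finset.range (l * s), (κ (a : ZMod l) : ℂ) * z ^ a = k * δ := by
  have h1 : ∑ a ∈ Finset.range (l * s), (κ (a : ZMod l) : ℂ) * z ^ a =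
      (∑ b ∈ Finset.range s, (z ^ l) ^ b) * ∑ a ∈ Finset.range l, (κ (a : ZMod l) : ℂ) * z ^ a := by
    rw [sum_range_mul_block, Finset.sum_mul]
    refine Finset.sum_congr rfl fun b _ => ?_
    rw [Finset.mul_sum]
    refine Finset.sum_congr rfl fun a _ => ?_
    simp only [Nat.cast_add, Nat.cast_mul, CharP.cast_eq_zero, zero_mul, zero_add]
    ring
  rw [h1]
  by_cases hzl : z ^ l = 1
  · obtain ⟨k, hk⟩ := hκ z hzl
    exact ⟨s * k, by rw [hk, hzl]; simp; ring⟩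
  · refine ⟨0, ?_⟩
    rw [geom_sum_eq hzl, ← pow_mul, hz]; simp
end

lemma cop_pm1 {q r s p : ℕ} (hq : q.Prime) (hp : 1 ≤ p) (hs : 1 < s)
    (ho : orderOf (p : ZMod (q ^ (r + 1))) = q ^ r * s) : ¬ q ∣ p - 1 := by
  intro hd
  have h1 : (q : ℤ) ∣ (p : ℤ) - 1 := by
    have : ((p - 1 : ℕ) : ℤ) = (p : ℤ) - 1 := by push_cast [hp]; ring
    rw [← this]; exact_mod_cast hd
  have h2 := dvd_sub_pow_of_dvd_sub h1 r
  rw [one_pow] at h2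
  have h3 : (p : ZMod (q ^ (r + 1))) ^ q ^ r = 1 := by
    have := (ZMod.intCast_eq_intCast_iff_dvd_sub 1 ((p:ℤ) ^ q ^ r) (q ^ (r + 1))).mpr (by exact_mod_cast h2)
    push_cast at this
    exact this.symm
  have h4 := orderOf_dvd_of_pow_eq_one h3
  rw [ho] at h4
  have hq0 : 0 < q ^ r := pow_pos hq.pos _
  have := Nat.le_of_dvd hq0 h4
  nlinarith

namespace Hyp
variable {p l m r1 r2 N f : ℕ} [hF : Fact l.Prime] (D : Hyp p l m r1 r2 N f)
include D

lemma cop_p1 : Nat.Coprime N (p - 1) := by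
  rw [D.cop_iff]
  have hp := D.hp.pos
  constructor
  · obtain ⟨s, hs⟩ : ∃ s, r1 = s + 1 := ⟨r1 - 1, by have := D.hr1; omega⟩
    have ho := D.ho1
    have h4 := D.hl4
    have h3 := D.hl3
    rw [hs, Nat.totient_prime_pow_succ D.hl] at ho
    refine cop_pm1 D.hl hp (s := (l - 1) / 2) (by omega) (ho.trans ?_)
    rw [Nat.mul_div_assoc]; omega
  · obtain ⟨s, hs⟩ : ∃ s, r2 = s + 1 := ⟨r2 - 1, by have := D.hr2; omega⟩
    have ho := D.ho2
    have h3 := D.m3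
    rw [hs, Nat.totient_prime_pow_succ D.hm] at ho
    exact cop_pm1 D.hm hp (s := m - 1) (by omega) ho

lemma R_int {κ : MulChar (ZMod l) ℤ} {δ : ℂ} (hκ : PerInt κ δ) (z : ℂ) (hz : z ^ N = 1) :
    ∃ k : ℤ, ∑ c ∈ (Finset.range N).filter (fun c => N.Coprime c), (κ (c : ZMod l) : ℂ) * z ^ c
      = k * δ := by
  rw [D.incl_excl κ (fun c => z ^ c)]
  obtain ⟨s, hs⟩ := D.l_dvd
  have hml : m ∣ s := by
    have := D.m_dvd
    rw [hs] at this
    exact D.cop_lm.symm.dvd_of_dvd_mul_left this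
  obtain ⟨s', rfl⟩ := hml
  have hNm : N / m = l * s' := by
    rw [hs]; exact Nat.div_eq_of_eq_mul_left D.hm.pos (by ring)
  rw [hNm]
  obtain ⟨k1, h1⟩ := perInt_mul hκ (m * s') z (by rw [← hs, hz])
  obtain ⟨k2, h2⟩ := perInt_mul hκ s' (z ^ m) (by
    rw [← pow_mul, ← hz, hs]; congr 1; ring)
  refine ⟨k1 - κ (m : ZMod l) * k2, ?_⟩
  simp_rw [← pow_mul] at h2
  rw [← hs] at h1
  rw [h1, h2]; push_cast; ring

section
variable [hpF : Fact p.Prime] {F : Type} [Field F] [Fintype F] [Algebra (ZMod p) F]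
    {χ : MulChar F ℂ} (hχ : orderOf χ = N)
include hχ

lemma chi_prime (k : ℕ) {a : ZMod p} (ha : a ≠ 0) : (χ ^ k) (algebraMap (ZMod p) F a) = 1 := by
  have hu : IsUnit (algebraMap (ZMod p) F a) := (ha.isUnit).map _
  have h1 : χ (algebraMap (ZMod p) F a) ^ N = 1 := by
    rw [← MulChar.pow_apply' _ D.N_pos.ne', ← hχ, pow_orderOf_eq_one, MulChar.one_apply hu]
  have h2 : χ (algebraMap (ZMod p) F a) ^ (p - 1) = 1 := by
    rw [← map_pow, ← map_pow, ZMod.pow_card_sub_one_eq_one ha, map_one, map_one]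
  have h3 := pow_gcd_eq_one.mpr ⟨h1, h2⟩
  rw [D.cop_p1, pow_one] at h3
  by_cases hk : k = 0
  · rw [hk, pow_zero, MulChar.one_apply hu]
  · rw [MulChar.pow_apply' _ hk, h3, one_pow]

lemma G_shift (k : ℕ) {a : ZMod p} (ha : a ≠ 0) :
    ∑ x : F, (χ ^ k) x * psi p F (algebraMap (ZMod p) F a * x) = G p (χ ^ k) := by
  have hu : algebraMap (ZMod p) F a ≠ 0 := by simpa using ha
  have h := gaussSum_mulShift (χ ^ k) (psi p F) (Units.mk0 _ hu)
  rw [Units.val_mk0, D.chi_prime hχ k ha, one_mul] at h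
  rw [G, ← h, gaussSum]
  rfl
end
end Hyp

section
variable (p : ℕ) [hpF : Fact p.Prime] {F : Type} [Field F] [Fintype F] [Algebra (ZMod p) F]

lemma kx_int (x : F) : ∃ k : ℤ, ∑ a ∈ Finset.univ.filter (fun a : ZMod p => a ≠ 0),
    psi p F (algebraMap (ZMod p) F a * x) = k := by
  classical
  set φ : AddChar (ZMod p) ℂ := (psi p F).compAddMonoidHom
    ((AddMonoidHom.mulRight x).comp (algebraMap (ZMod p) F).toAddMonoidHom) with hφ
  have h := AddChar.sum_eq_ite φ
  have h2 := Finset.sum_filter_add_sum_filter_not Finset.univ (fun a : ZMod p => a ≠ 0) φ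
  have h3 : ∑ a ∈ Finset.univ.filter (fun a : ZMod p => ¬ a ≠ 0), φ a = 1 := by
    have : Finset.univ.filter (fun a : ZMod p => ¬ a ≠ 0) = {0} := by ext; simp
    rw [this]; simp
  have h4 : ∀ a, φ a = psi p F (algebraMap (ZMod p) F a * x) := fun a => rfl
  simp_rw [← h4]
  rw [h3, h] at h2
  refine ⟨(if φ = 0 then (Fintype.card (ZMod p) : ℤ) else 0) - 1, ?_⟩
  rw [eq_sub_of_add_eq h2]; push_cast; split_ifs <;> simp
end
end S18

namespace S18
namespace Hyp
variable {p l m r1 r2 N f : ℕ} [hF : Fact l.Prime] (D : Hyp p l m r1 r2 N f)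
include D
variable [hpF : Fact p.Prime] {F : Type} [Field F] [Fintype F] [Algebra (ZMod p) F]
    {χ : MulChar F ℂ} (hχ : orderOf χ = N)
include hχ

lemma inv_pow (lam : ℕ) : (χ ^ lam) ^ (N - 1) = (χ ^ lam)⁻¹ := by
  rw [eq_inv_iff_mul_eq_one, ← pow_succ, Nat.sub_add_cancel D.N_pos, ← pow_mul, mul_comm, pow_mul,
    ← hχ, pow_orderOf_eq_one, one_pow]

lemma rat {κ : MulChar (ZMod l) ℤ} {δ : ℂ} (hκ : PerInt κ δ) (hκp : κ (p : ZMod l) = 1) (lam : ℕ) :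
    ∃ k : ℤ, ((f * (p - 1) : ℕ) : ℂ) * (G p (χ ^ lam) + κ (-1) * G p (χ ^ lam)⁻¹) = k * δ := by
  classical
  have hN0 := D.N_pos
  have castl : ∀ x : ℕ, ((x % N : ℕ) : ZMod l) = x := fun x => by
    rw [ZMod.natCast_eq_natCast_iff]
    exact (Nat.mod_modEq x N).of_dvd D.l_dvd
  have hNml : ((N - 1 : ℕ) : ZMod l) = -1 := by
    have : (N : ZMod l) = 0 := (ZMod.natCast_eq_zero_iff _ _).mpr D.l_dvd
    rw [Nat.cast_sub (by omega), this]; simp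
  have hχN : (χ ^ lam) ^ N = 1 := by
    rw [← pow_mul, mul_comm, pow_mul, ← hχ, pow_orderOf_eq_one, one_pow]
  have hU := D.unit_sum (fun c => (κ (c : ZMod l) : ℂ) * G p ((χ ^ lam) ^ c))
  simp only [castl, ← pow_eq_pow_mod _ hχN] at hU
  have e1 : ∀ i, (χ ^ lam) ^ ((N - 1) * p ^ i) = ((χ ^ lam)⁻¹) ^ p ^ i := fun i => by
    rw [pow_mul, D.inv_pow hχ]
  simp only [e1, G_pow_p_pow, Nat.cast_mul, Nat.cast_pow, map_mul, map_pow, hNml, hκp, one_pow,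
    mul_one, Int.cast_one, one_mul, Finset.sum_const, Finset.card_range, nsmul_eq_mul] at hU
  have e2 : ∀ k, ((p - 1 : ℕ) : ℂ) * G p (χ ^ k) = ∑ x : F, (χ ^ k) x *
      ∑ a ∈ Finset.univ.filter (fun a : ZMod p => a ≠ 0), psi p F (algebraMap (ZMod p) F a * x) := by
    intro k
    simp_rw [Finset.mul_sum]
    rw [Finset.sum_comm, Finset.sum_congr rfl (g := fun _ => G p (χ ^ k))]
    · rw [Finset.sum_const, nsmul_eq_mul]
      congr 2
      rw [Finset.filter_ne', Finset.card_erase_of_mem (Finset.mem_univ _), Finset.card_univ, ZMod.card]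
    · intro a ha
      exact D.G_shift hχ k (Finset.mem_filter.mp ha).2
  choose kx hkx using fun x : F => kx_int p x
  simp_rw [hkx] at e2
  have e3 : ∀ x : F, ∃ k : ℤ, ∑ c ∈ (Finset.range N).filter (fun c => N.Coprime c),
      (κ (c : ZMod l) : ℂ) * ((χ ^ lam) ^ c) x = k * δ := by
    intro x
    by_cases hx : x = 0
    · exact ⟨0, by simp [hx, MulChar.map_zero]⟩
    · obtain ⟨u, rfl⟩ := (isUnit_iff_ne_zero.mpr hx)
      obtain ⟨k, hk⟩ := D.R_int hκ ((χ ^ lam) u) (by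
        rw [← MulChar.pow_apply_coe, hχN, MulChar.one_apply_coe])
      exact ⟨k, by rw [← hk]; simp only [MulChar.pow_apply_coe]⟩
  choose kr hkr using e3
  refine ⟨∑ x, kx x * kr x, ?_⟩
  have e4 : ((p - 1 : ℕ) : ℂ) * ∑ c ∈ (Finset.range N).filter (fun c => N.Coprime c),
      (κ (c : ZMod l) : ℂ) * G p ((χ ^ lam) ^ c) = (∑ x, kx x * kr x : ℤ) * δ := by
    rw [Finset.mul_sum]
    have : ∀ c : ℕ, ((p - 1 : ℕ) : ℂ) * ((κ (c : ZMod l) : ℂ) * G p ((χ ^ lam) ^ c)) =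
        ∑ x : F, kx x * ((κ (c : ZMod l) : ℂ) * ((χ ^ lam) ^ c) x) := fun c => by
      rw [mul_left_comm, ← pow_mul, e2, Finset.mul_sum]
      exact Finset.sum_congr rfl fun x _ => by ring
    simp_rw [this]
    rw [Finset.sum_comm]
    simp_rw [← Finset.mul_sum, hkr]
    push_cast
    rw [Finset.sum_mul]
    exact Finset.sum_congr rfl fun x _ => by ring
  rw [hU] at e4
  rw [← e4]; push_cast; ring

lemma f_pos : 0 < f := by
  have := D.two_f
  have := Nat.totient_pos.mpr D.N_pos
  omega

/-- The Gauss sum lies in the quadratic field. -/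
lemma quad (lam : ℕ) : ∃ r s : ℚ, G p (χ ^ lam) = r + s * sqrtNeg l ∧
    G p (χ ^ lam)⁻¹ = r - s * sqrtNeg l := by
  have hpu : (p : ZMod l) ≠ 0 := fun h => by
    have := D.eta_p; rw [h, MulChar.map_zero] at this; norm_num at this
  obtain ⟨k1, h1⟩ := D.rat hχ perInt_one (MulChar.one_apply hpu.isUnit) lam
  obtain ⟨k2, h2⟩ := D.rat hχ (perInt_eta D.hl4) D.eta_p lam
  rw [MulChar.one_apply isUnit_neg_one] at h1
  rw [qc_neg_one D.hl4] at h2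
  have hc : f * (p - 1) ≠ 0 := Nat.mul_ne_zero (D.f_pos hχ).ne' (by have := D.hp.two_le; omega)
  set c := f * (p - 1)
  have hc' : (c : ℂ) ≠ 0 := by exact_mod_cast hc
  refine ⟨k1 / (2 * c), k2 / (2 * c), ?_, ?_⟩
  · push_cast at *
    field_simp
    linear_combination h1 + h2
  · push_cast at *
    field_simp
    linear_combination h1 - h2
end Hyp
end S18

namespace S18
namespace Hyp
variable {p l m r1 r2 N f : ℕ} [hF : Fact l.Prime] (D : Hyp p l m r1 r2 N f)
include D

lemma powB : (m ^ r2 : ℕ) ∣ p ^ (Nat.totient (m ^ r2) / 2) + 1 := by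
  obtain ⟨B, hB0, hB, hB2⟩ := D.totB
  rw [hB2]
  have ho := D.ho2
  rw [hB] at ho
  have h1 : (p : ZMod (m ^ r2)) ^ (2 * B) = 1 := by rw [← ho, pow_orderOf_eq_one]
  have hp1 : 1 ≤ p ^ B := Nat.one_le_pow _ _ D.hp.pos
  have h2 : m ^ r2 ∣ (p ^ B - 1) * (p ^ B + 1) := by
    rw [← ZMod.natCast_eq_zero_iff]
    push_cast [hp1]
    linear_combination h1
  have h3 : ¬ m ^ r2 ∣ p ^ B - 1 := by
    intro h
    rw [← ZMod.natCast_eq_zero_iff] at h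
    push_cast [hp1] at h
    have := orderOf_dvd_of_pow_eq_one (sub_eq_zero.mp h)
    rw [ho] at this
    have := Nat.le_of_dvd hB0 this
    omega
  have hm3 := D.m3
  by_cases h4 : m ∣ p ^ B - 1
  · have h5 : ¬ m ∣ p ^ B + 1 := by
      intro h
      have : m ∣ 2 := by
        have := Nat.dvd_sub h h4
        rwa [show p ^ B + 1 - (p ^ B - 1) = 2 by omega] at this
      have := Nat.le_of_dvd (by norm_num) this
      omega
    have : Nat.Coprime (m ^ r2) (p ^ B + 1) :=
      Nat.Coprime.pow_left _ ((D.hm.coprime_iff_not_dvd).mpr h5)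
    exact absurd (this.dvd_of_dvd_mul_right h2) h3
  · have : Nat.Coprime (m ^ r2) (p ^ B - 1) :=
      Nat.Coprime.pow_left _ ((D.hm.coprime_iff_not_dvd).mpr h4)
    exact this.dvd_of_dvd_mul_left h2

lemma f_half : f / 2 = (Nat.totient (l ^ r1) / 2) * (Nat.totient (m ^ r2) / 2) := by
  have := D.f_AB; omega

lemma p_half_m : (m : ℤ) ∣ (p : ℤ) ^ (f / 2) + 1 := by
  obtain ⟨A, hA, -, hA2⟩ := D.totA
  have h : m ∣ p ^ (Nat.totient (m ^ r2) / 2) + 1 :=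
    (dvd_pow_self m (by have := D.hr2; omega)).trans D.powB
  have h' : (m : ℤ) ∣ (p : ℤ) ^ (Nat.totient (m ^ r2) / 2) + 1 := by exact_mod_cast h
  rw [D.f_half, hA2, mul_comm, pow_mul]
  have := hA.add_dvd_pow_add_pow ((p : ℤ) ^ (Nat.totient (m ^ r2) / 2)) 1
  rw [one_pow] at this
  exact h'.trans this

lemma p_half_l : (l : ℤ) ∣ (p : ℤ) ^ (f / 2) - 1 := by
  have h := D.pow1l
  have h' : (p : ZMod l) ^ (f / 2) = 1 := by rw [D.f_half, pow_mul, h, one_pow]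
  rw [← ZMod.intCast_zmod_eq_zero_iff_dvd]
  push_cast; rw [h', sub_self]

variable [hpF : Fact p.Prime] {F : Type} [Field F] [Fintype F] [Algebra (ZMod p) F]
    {χ : MulChar F ℂ} (hχ : orderOf χ = N)
include hχ

lemma G_cong {q : ℕ} (hq : q.Prime) (hqN : q ∣ N) {V : ValuationSubring ℂ}
    (hV : V.valuation (q:ℂ) < 1) (k n : ℕ) :
    V.valuation (G p (χ ^ k) ^ q ^ n - G p (χ ^ (k * q ^ n))) < 1 := by
  have hqp : (q : ZMod p) ≠ 0 := by
    rw [Ne, ZMod.natCast_eq_zero_iff]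
    intro h
    have := (Nat.prime_dvd_prime_iff_eq D.hp hq).mp h
    subst this
    exact hq.one_lt.ne' (Nat.eq_one_of_dvd_coprimes D.hcop hqN dvd_rfl)
  have h := frob_sum hq hV Finset.univ (fun x : F => (χ ^ k) x * psi p F x)
    (fun x _ => val_le_one ((chi_integral _ x).mul (psi_integral p F x))) n
  have e : ∑ x : F, ((χ ^ k) x * psi p F x) ^ q ^ n = G p (χ ^ (k * q ^ n)) := by
    rw [← D.G_shift hχ (k * q ^ n) (a := (q : ZMod p) ^ n) (pow_ne_zero _ hqp)]
    refine Finset.sum_congr rfl fun x _ => ?_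
    rw [mul_pow, pow_mul χ, MulChar.pow_apply' _ (pow_ne_zero _ hq.ne_zero), ← AddChar.map_nsmul_eq_pow]
    congr 2
    simp
  rw [e] at h
  exact h

lemma ord_odd (k : ℕ) : Odd (orderOf (χ ^ k)) := by
  refine Odd.of_dvd_nat D.N_odd ?_
  rw [← hχ]; exact orderOf_pow_dvd k

lemma case3 (hcard : Fintype.card F = p ^ f) {lam : ℕ} (h1 : l ^ r1 ∣ lam) (h2 : ¬ N ∣ lam) :
    G p (χ ^ lam) = (p : ℂ) ^ (f / 2) := by
  have hne : χ ^ lam ≠ 1 := fun h => h2 (hχ ▸ orderOf_dvd_of_pow_eq_one h)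
  have hmul := G_mul_inv p (D.ord_odd hχ lam) hne
  have hinv : (χ ^ lam)⁻¹ = (χ ^ lam) ^ p ^ (Nat.totient (m ^ r2) / 2) := by
    symm
    rw [eq_inv_iff_mul_eq_one, ← pow_succ, ← pow_mul]
    refine orderOf_dvd_iff_pow_eq_one.mp ?_
    rw [hχ, D.hN]
    exact mul_dvd_mul h1 D.powB
  rw [hinv, G_pow_p_pow, hcard] at hmul
  have hf2 : f = f / 2 + f / 2 := by have := D.f_AB; omega
  have hsq : G p (χ ^ lam) * G p (χ ^ lam) = (p : ℂ) ^ (f / 2) * (p : ℂ) ^ (f / 2) := by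
    rw [hmul, ← pow_add, ← hf2]; push_cast; rfl
  rcases mul_self_eq_mul_self_iff.mp hsq with h | h
  · exact h
  exfalso
  obtain ⟨V, hV⟩ := exists_val D.hm
  have hc := D.G_cong hχ D.hm D.m_dvd hV lam r2
  have h0 : χ ^ (lam * m ^ r2) = 1 := by
    refine orderOf_dvd_iff_pow_eq_one.mp ?_
    rw [hχ, D.hN]
    exact mul_dvd_mul h1 dvd_rfl
  rw [h0, G_one, h] at hc
  have e : (-(p : ℂ) ^ (f / 2)) ^ m ^ r2 - -1 = (((-(p : ℤ) ^ (f / 2)) ^ m ^ r2 + 1 : ℤ) : ℂ) := by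
    push_cast; ring
  rw [e, val_lt_iff D.hm hV] at hc
  have h5 : (m : ℤ) ∣ (-(p : ℤ) ^ (f / 2)) ^ m ^ r2 - 1 := by
    have := sub_dvd_pow_sub_pow (-(p : ℤ) ^ (f / 2)) 1 (m ^ r2)
    rw [one_pow] at this
    refine Dvd.dvd.trans ?_ this
    have h6 := D.p_half_m
    rw [← dvd_neg, neg_add] at h6
    exact h6
  have h6 : (m : ℤ) ∣ 2 := by
    have := dvd_sub hc h5
    rwa [add_sub_sub_cancel, one_add_one_eq_two] at this
  have := Int.le_of_dvd (by norm_num) h6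
  have := D.m3
  omega
end Hyp
end S18

namespace S18

lemma no_sol {l : ℕ} (hl : l.Prime) (hl3 : 3 < l) (k : ℤ) (r : ℚ) (h : (k:ℚ) ^ 2 + l * r ^ 2 = 4) :
    r = 0 := by
  by_contra hr
  haveI := Fact.mk hl
  have hl0 : (l:ℚ) ≠ 0 := by exact_mod_cast hl.ne_zero
  have hlp : (0:ℚ) < l := by exact_mod_cast hl.pos
  have hr2 : 0 < r ^ 2 := by positivity
  have hk : k ^ 2 < 4 := by
    have : (k:ℚ) ^ 2 < 4 := by nlinarith [mul_pos hlp hr2]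
    exact_mod_cast this
  have e : (l:ℚ) * r ^ 2 = ((4 - k ^ 2 : ℤ) : ℚ) := by push_cast; linarith
  have h1 : padicValRat l ((l:ℚ) * r ^ 2) = 1 + 2 * padicValRat l r := by
    rw [padicValRat.mul hl0 (pow_ne_zero _ hr), padicValRat.self hl.one_lt, padicValRat.pow]
    push_cast; ring
  have h2 : padicValRat l ((4 - k ^ 2 : ℤ) : ℚ) = 0 := by
    rw [padicValRat.of_int]
    have : ¬ (l:ℤ) ∣ 4 - k ^ 2 := by
      intro hd
      have h3 := Int.le_of_dvd (by omega) hd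
      have hk0 := sq_nonneg k
      have h4 : l = 4 := by omega
      rw [h4] at hl; revert hl; decide
    rw [padicValInt.eq_zero_of_not_dvd this]; rfl
  rw [e, h2] at h1
  omega

section
variable {V : ValuationSubring ℂ}

lemma cong_pow {x y : ℂ} (hx : V.valuation x ≤ 1) (hy : V.valuation y ≤ 1)
    (h : V.valuation (x - y) < 1) (n : ℕ) : V.valuation (x ^ n - y ^ n) < 1 := by
  rw [← (Commute.all x y).mul_geom_sum₂, map_mul]
  refine mul_lt_one_of_lt_of_le h ?_
  refine V.valuation.map_sum_le fun i _ => ?_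
  rw [map_mul, map_pow, map_pow]
  exact mul_le_one' (pow_le_one' hx _) (pow_le_one' hy _)

lemma cong_trans {x y z : ℂ} (h : V.valuation (x - y) < 1) (h' : V.valuation (y - z) < 1) :
    V.valuation (x - z) < 1 := by
  rw [← sub_add_sub_cancel x y z]
  exact V.valuation.map_add_lt h h'

lemma cong_symm {x y : ℂ} (h : V.valuation (x - y) < 1) : V.valuation (y - x) < 1 := by
  rwa [← Valuation.map_neg, neg_sub]

lemma cong_mul {x y c : ℂ} (hc : V.valuation c ≤ 1) (h : V.valuation (x - y) < 1) :
    V.valuation (c * x - c * y) < 1 := by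
  rw [← mul_sub, map_mul]; exact (mul_le_of_le_one_left' hc).trans_lt h
end

section
variable {l p h : ℕ} {a b : ℤ} (hab : 4 * (p:ℤ) ^ h = a ^ 2 + l * b ^ 2)

/-- the quadratic integer -/
noncomputable def Pi (l : ℕ) (a b : ℤ) : ℂ := ((a:ℂ) + (b:ℂ) * sqrtNeg l) / 2

include hab

lemma Pi_mul : Pi l a b * Pi l a (-b) = (p:ℂ) ^ h := by
  have hc := congrArg (fun x : ℤ => (x : ℂ)) hab
  push_cast at hc
  unfold Pi
  push_cast
  linear_combination (-1/4 : ℂ) * hc - (b:ℂ) ^ 2 / 4 * sqrtNeg_sq l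

omit hab in
lemma Pi_add : Pi l a b + Pi l a (-b) = a := by
  unfold Pi; push_cast; ring

lemma Pi_integral : IsIntegral ℤ (Pi l a b) := by
  refine ⟨Polynomial.X ^ 2 - C a * Polynomial.X + C ((p:ℤ) ^ h), ?_, ?_⟩
  · monicity!
  · have h1 := Pi_mul hab
    have h2 := Pi_add (l := l) (a := a) (b := b)
    rw [eval₂_add, eval₂_sub, eval₂_mul, eval₂_pow, eval₂_X, eval₂_C, eval₂_C, algebraMap_int_eq,
      eq_intCast, eq_intCast, Int.cast_pow, Int.cast_natCast]
    rw [← h1, ← h2]; ring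

omit hab in
lemma Pi_quad (n : ℕ) : ∃ r s : ℚ, Pi l a b ^ n = r + s * sqrtNeg l ∧
    Pi l a (-b) ^ n = r - s * sqrtNeg l := by
  induction n with
  | zero => exact ⟨1, 0, by simp, by simp⟩
  | succ n ih =>
    obtain ⟨r, s, h1, h2⟩ := ih
    have hs := sqrtNeg_sq l
    refine ⟨(r * a - l * s * b) / 2, (r * b + s * a) / 2, ?_, ?_⟩
    · rw [pow_succ, h1, Pi]; push_cast
      linear_combination (s:ℂ) * b / 2 * hs
    · rw [pow_succ, h2, Pi]; push_cast
      linear_combination (s:ℂ) * b / 2 * hs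

lemma hab_neg : 4 * (p:ℤ) ^ h = a ^ 2 + l * (-b) ^ 2 := by rw [hab]; ring

lemma orient1 {V : ValuationSubring ℂ} (hp : p.Prime) (hV : V.valuation (p:ℂ) < 1)
    (ha : ¬ (p:ℤ) ∣ a) : ∃ b' : ℤ, b' ^ 2 = b ^ 2 ∧ V.valuation (Pi l a b') = V.valuation (p:ℂ) ^ h ∧
      V.valuation (Pi l a (-b')) = 1 := by
  have h1 := val_le_one (V := V) (Pi_integral hab)
  have h2 := val_le_one (V := V) (Pi_integral (hab_neg hab))
  have h3 := val_int_eq_one hp hV ha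
  have h4 := congrArg V.valuation (Pi_mul hab)
  rw [map_mul, map_pow] at h4
  by_cases h5 : V.valuation (Pi l a (-b)) = 1
  · exact ⟨b, rfl, by rwa [h5, mul_one] at h4, h5⟩
  · have h6 : V.valuation (Pi l a b) = 1 := by
      by_contra h7
      have := V.valuation.map_add_lt (lt_of_le_of_ne h1 h7) (lt_of_le_of_ne h2 h5)
      rw [Pi_add, h3] at this
      exact lt_irrefl _ this
    refine ⟨-b, by ring, by rwa [h6, one_mul] at h4, by rwa [neg_neg]⟩

lemma orient {V : ValuationSubring ℂ} (hp : p.Prime) (hV : V.valuation (p:ℂ) < 1)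
    (ha : ¬ (p:ℤ) ∣ a) {ε : ℤ} (hε : ε = 1 ∨ ε = -1) :
    ∃ b' : ℤ, b' ^ 2 = b ^ 2 ∧ V.valuation (Pi l a b') ^ 2 = V.valuation (p:ℂ) ^ ((h:ℤ) + ε * h) := by
  obtain ⟨b', h1, h2, h3⟩ := orient1 hab hp hV ha
  rcases hε with rfl | rfl
  · refine ⟨b', h1, ?_⟩
    rw [h2, ← pow_mul, show (h:ℤ) + 1 * h = ((h * 2 : ℕ) : ℤ) by push_cast; ring, zpow_natCast]
  · refine ⟨-b', by rw [← h1]; ring, ?_⟩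
    rw [h3]; simp
end
end S18

namespace S18
namespace Hyp
variable {p l m r1 r2 N f : ℕ} [hF : Fact l.Prime] (D : Hyp p l m r1 r2 N f)
variable [hpF : Fact p.Prime] {F : Type} [Field F] [Fintype F] [Algebra (ZMod p) F]
    {χ : MulChar F ℂ} (hχ : orderOf χ = N) (hcard : Fintype.card F = p ^ f)
include D hχ hcard

lemma core {V : ValuationSubring ℂ} (hV : V.valuation (p:ℂ) < 1) {ε : ℤ} {a b : ℤ} {h : ℕ}
    (hab : 4 * (p:ℤ) ^ h = a ^ 2 + l * b ^ 2)
    (hπ : V.valuation (Pi l a b) ^ 2 = V.valuation (p:ℂ) ^ ((h:ℤ) + ε * h))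
    {lam k e : ℕ} (hlam : ¬ N ∣ lam)
    (hG : V.valuation (G p (χ ^ lam)) ^ 2 = V.valuation (p:ℂ) ^ ((f:ℤ) + ε * (h * (2 * k) : ℕ)))
    (he : 2 * e + h * (2 * k) = f) :
    G p (χ ^ lam) = (p:ℂ) ^ e * Pi l a b ^ (2 * k) ∨
      G p (χ ^ lam) = -((p:ℂ) ^ e * Pi l a b ^ (2 * k)) := by
  have hp := D.hp
  have hp0 : (p:ℂ) ≠ 0 := by exact_mod_cast hp.ne_zero
  have hpq : (p:ℚ) ≠ 0 := by exact_mod_cast hp.ne_zero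
  have hne : χ ^ lam ≠ 1 := fun h => hlam (hχ ▸ orderOf_dvd_of_pow_eq_one h)
  have hmul := G_mul_inv p (D.ord_odd hχ lam) hne
  rw [hcard] at hmul
  push_cast at hmul
  obtain ⟨r, s, hr, hs⟩ := D.quad hχ lam
  obtain ⟨x0, y0, hx0, hy0⟩ := Pi_quad (l := l) (a := a) (b := b) (2 * k)
  set g := G p (χ ^ lam) with hg
  set g' := G p (χ ^ lam)⁻¹ with hg'
  set X := (p:ℂ) ^ e * Pi l a b ^ (2 * k) with hX
  set X' := (p:ℂ) ^ e * Pi l a (-b) ^ (2 * k) with hX'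
  have hXX : X * X' = (p:ℂ) ^ f := by
    rw [hX, hX', ← he]
    have : (Pi l a b * Pi l a (-b)) ^ (2 * k) = ((p:ℂ) ^ h) ^ (2 * k) := by rw [Pi_mul hab]
    rw [mul_pow, ← pow_mul] at this
    rw [pow_add, ← this]; ring
  have gi : IsIntegral ℤ g := G_integral p _
  have gi' : IsIntegral ℤ g' := G_integral p _
  have pint : IsIntegral ℤ ((p:ℂ) ^ e) := by
    have := isIntegral_algebraMap (R := ℤ) (A := ℂ) (x := (p:ℤ) ^ e)
    simpa using this
  have Xi : IsIntegral ℤ X := pint.mul ((Pi_integral hab).pow _)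
  have Xi' : IsIntegral ℤ X' := pint.mul ((Pi_integral (hab_neg hab)).pow _)
  have hvp := val_p_ne (V := V) hp
  have hvX : V.valuation X = V.valuation g := by
    refine (pow_left_inj₀ zero_le zero_le two_ne_zero).mp ?_
    rw [hG, hX, map_mul, map_pow, map_pow, mul_pow, ← pow_mul, pow_right_comm, hπ,
      ← zpow_natCast, ← zpow_natCast, ← zpow_mul, ← zpow_add₀ hvp]
    congr 1
    rw [← he]; push_cast; ring
  have v1 : V.valuation (g * X') = V.valuation (p:ℂ) ^ f := by
    rw [map_mul, ← hvX, ← map_mul, hXX, map_pow]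
  have v2 : V.valuation (g' * X) = V.valuation (p:ℂ) ^ f := by
    rw [map_mul, hvX, ← map_mul, mul_comm, hmul, map_pow]
  have v3 : V.valuation (g * X' + g' * X) ≤ V.valuation (p:ℂ) ^ f :=
    (V.valuation.map_add _ _).trans (by rw [v1, v2, max_self])
  have hsq := sqrtNeg_sq l
  have e1 : g * X' + g' * X = ((2 * (p:ℚ) ^ e * (r * x0 + l * s * y0) : ℚ) : ℂ) := by
    rw [hr, hs, hX, hX', hx0, hy0]; push_cast
    linear_combination (-2 * (p:ℂ) ^ e * s * y0) * hsq
  have e2 : g * X' - g' * X = ((2 * (p:ℚ) ^ e * (s * x0 - r * y0) : ℚ) : ℂ) * sqrtNeg l := by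
    rw [hr, hs, hX, hX', hx0, hy0]; push_cast
    ring
  set t := 2 * (p:ℚ) ^ e * (s * x0 - r * y0) with ht
  obtain ⟨n, hn⟩ := int_of_rat_of_complex_integral
    (e1 ▸ ((gi.mul Xi').add (gi'.mul Xi)))
  rw [← hn, Rat.cast_intCast] at e1
  rw [e1] at v3
  obtain ⟨c, hc⟩ := dvd_of_val_le hp hV f v3
  have key : (n:ℂ) ^ 2 + l * (t:ℂ) ^ 2 = 4 * ((p:ℂ) ^ f) ^ 2 := by
    have h1 : (g * X' + g' * X) ^ 2 - (g * X' - g' * X) ^ 2 = 4 * ((p:ℂ) ^ f) ^ 2 := by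
      linear_combination 4 * (X * X') * hmul + 4 * (p:ℂ) ^ f * hXX
    rw [e1, e2] at h1
    linear_combination h1 + (t:ℂ) ^ 2 * hsq
  have keyq : (n:ℚ) ^ 2 + l * t ^ 2 = 4 * ((p:ℚ) ^ f) ^ 2 := by exact_mod_cast key
  have hpf : (p:ℚ) ^ f ≠ 0 := pow_ne_zero _ hpq
  have hc' : (n:ℚ) = (p:ℚ) ^ f * c := by rw [hc]; push_cast; rfl
  have k2 : (c:ℚ) ^ 2 + l * (t / (p:ℚ) ^ f) ^ 2 = 4 := by
    rw [hc'] at keyq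
    field_simp
    linear_combination keyq
  have ht0 := no_sol D.hl D.hl3 c _ k2
  have ht1 : t = 0 := by
    rcases div_eq_zero_iff.mp ht0 with h | h
    · exact h
    · exact absurd h hpf
  rw [ht0] at k2
  have hc2 : (c:ℤ) ^ 2 = 2 ^ 2 := by
    have : (c:ℚ) ^ 2 = 4 := by linear_combination k2
    have : c ^ 2 = 4 := by exact_mod_cast this
    rw [this]; norm_num
  rw [ht1] at e2
  have hX0 : X' ≠ 0 := fun h0 => by
    rw [h0, mul_zero] at hXX; exact pow_ne_zero f hp0 hXX.symm
  have hnC : (n:ℂ) = (p:ℂ) ^ f * c := by rw [hc]; push_cast; rfl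
  have fin : 2 * g * X' = c * X * X' := by
    have e2' : g * X' - g' * X = 0 := by rw [e2]; simp
    linear_combination e1 + e2' + hnC - c * hXX
  have fin' := mul_right_cancel₀ hX0 fin
  rcases sq_eq_sq_iff_eq_or_eq_neg.mp hc2 with h | h
  · left; rw [h] at fin'; push_cast at fin'; linear_combination fin' / 2
  · right; rw [h] at fin'; push_cast at fin'; linear_combination fin' / 2

omit hχ hcard in
lemma X_cong {V : ValuationSubring ℂ} (hV : V.valuation (l:ℂ) < 1) {a b : ℤ} {h : ℕ}
    (hab : 4 * (p:ℤ) ^ h = a ^ 2 + l * b ^ 2) {k e : ℕ} (he : 2 * e + h * (2 * k) = f) :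
    V.valuation ((p:ℂ) ^ e * Pi l a b ^ (2 * k) - 1) < 1 := by
  have hs : V.valuation (sqrtNeg l) < 1 := by
    have h1 := congrArg V.valuation (sqrtNeg_sq l)
    rw [map_pow, Valuation.map_neg] at h1
    rw [← h1] at hV
    exact (pow_lt_one_iff two_ne_zero).mp hV
  have hP := val_le_one (V := V) (Pi_integral hab)
  have c1 : V.valuation (Pi l a b ^ 2 - (p:ℂ) ^ h) < 1 := by
    have : Pi l a b ^ 2 - (p:ℂ) ^ h = (Pi l a b * b) * sqrtNeg l := by
      rw [← Pi_mul hab]; unfold Pi; push_cast; ring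
    rw [this, map_mul, map_mul]
    exact (mul_le_of_le_one_left' (mul_le_one' hP (val_int b))).trans_lt hs
  have c2 := cong_pow (by rw [map_pow]; exact pow_le_one' hP _)
    (by rw [map_pow]; exact pow_le_one' (val_nat p) _) c1 k
  have c3 := cong_mul (c := (p:ℂ) ^ e) (by rw [map_pow]; exact pow_le_one' (val_nat p) _) c2
  have e3 : (p:ℂ) ^ e * ((p:ℂ) ^ h) ^ k = (p:ℂ) ^ (f / 2) := by
    have : f / 2 = e + h * k := by
      have : f = 2 * (e + h * k) := by rw [← he]; ring
      omega
    rw [this, pow_add, pow_mul]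
  rw [← pow_mul, e3] at c3
  refine cong_trans c3 ?_
  have := (val_lt_iff D.hl hV (m := (p:ℤ) ^ (f / 2) - 1)).mpr D.p_half_l
  push_cast at this
  exact this

omit hχ hcard in
lemma two_not {V : ValuationSubring ℂ} (hV : V.valuation (l:ℂ) < 1) : ¬ V.valuation ((2:ℂ)) < 1 := by
  intro h
  have h2 := (val_lt_iff D.hl hV (m := 2)).mp (by exact_mod_cast h)
  have := Int.le_of_dvd (by norm_num) h2
  have := D.hl3
  omega

/-- sign determination: common part -/
lemma sgn {V : ValuationSubring ℂ} (hV : V.valuation (l:ℂ) < 1) {X : ℂ}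
    (hX : V.valuation (X - 1) < 1) {s u : ℂ} (hs : s = 1 ∨ s = -1) (hu : u = 1 ∨ u = -1) {lam : ℕ}
    (hG : G p (χ ^ lam) = s * X)
    (hG' : V.valuation (G p (χ ^ (lam * l ^ r1)) - u) < 1) : s = u := by
  have h1 := D.G_cong hχ D.hl D.l_dvd hV lam r1
  have h2 := cong_trans h1 hG'
  rw [hG, mul_pow] at h2
  have hlo : Odd (l ^ r1) := (Nat.odd_iff.mpr (by have := D.hl4; omega) : Odd l).pow
  have hsp : s ^ l ^ r1 = s := by
    rcases hs with rfl | rfl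
    · simp
    · exact hlo.neg_one_pow
  have hsv : V.valuation s ≤ 1 := by
    rcases hs with rfl | rfl <;> simp
  have hXv : V.valuation X ≤ 1 := by
    have := V.valuation.map_add (X - 1) 1
    rw [sub_add_cancel, map_one] at this
    exact this.trans (max_le hX.le le_rfl)
  rw [hsp] at h2
  have h3 := cong_mul hsv (cong_pow hXv (by simp) hX (l ^ r1))
  rw [one_pow, mul_one] at h3
  have h4 := cong_trans (cong_symm h3) h2
  rcases hs with rfl | rfl <;> rcases hu with rfl | rfl
  · rfl
  · exact absurd (by convert h4 using 2; norm_num) (D.two_not hV)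
  · exact absurd (by rw [← Valuation.map_neg] at h4; convert h4 using 2; norm_num) (D.two_not hV)
  · rfl
end Hyp
end S18

namespace S18
namespace Hyp
variable {p l m r1 r2 N f : ℕ} [hF : Fact l.Prime] (D : Hyp p l m r1 r2 N f)
include D

lemma not_dvd_B {t2 : ℕ} (h2 : t2 < r2) (c : ℕ) : ¬ N ∣ l ^ c * m ^ t2 := by
  intro h
  have h2 : m ^ r2 ∣ l ^ c * m ^ t2 := (by rw [D.hN]; exact dvd_mul_left _ _ : m ^ r2 ∣ N).trans h
  have h3 := (D.cop_lm.symm.pow r2 c).dvd_of_dvd_mul_left h2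
  exact absurd ((Nat.pow_dvd_pow_iff_le_right D.hm.one_lt).mp h3) (by omega)

variable [hpF : Fact p.Prime] {F : Type} [Field F] [Fintype F] [Algebra (ZMod p) F]
    {χ : MulChar F ℂ} (hχ : orderOf χ = N) (hcard : Fintype.card F = p ^ f)
include hχ hcard

lemma final : ∃ a b : ℤ,
    4 * (p : ℤ) ^ classNumSqrtNeg l = a ^ 2 + (l : ℤ) * b ^ 2 ∧
    a ≡ -2 * (p : ℤ) ^ ((l - 1 + 2 * classNumSqrtNeg l) / 4) [ZMOD (l : ℤ)] ∧
    ∀ t1 t2 : ℕ, t1 < r1 → t2 < r2 →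
      (quadraticChar (ZMod l) (m : ZMod l) = 1 → G p (χ ^ (l ^ t1 * m ^ t2)) = (p:ℂ) ^ (f / 2)) ∧
      (quadraticChar (ZMod l) (m : ZMod l) = -1 → ∃ e, e + classNumSqrtNeg l * (l ^ t1 * m ^ t2) = f / 2 ∧
        G p (χ ^ (l ^ t1 * m ^ t2)) = (p:ℂ) ^ e * Pi l a b ^ (2 * (l ^ t1 * m ^ t2))) ∧
      G p (χ ^ (l ^ r1 * m ^ t2)) = (p:ℂ) ^ (f / 2) ∧
      ∃ e, 2 * e + classNumSqrtNeg l * l ^ t1 * Nat.totient (m ^ r2) = f ∧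
        G p (χ ^ (l ^ t1 * m ^ r2)) = -((p:ℂ) ^ e * Pi l a b ^ (l ^ t1 * Nat.totient (m ^ r2))) := by
  obtain ⟨a, b0, hab0, hcong, hpa⟩ := exists_ab D.hl4 D.hl3 D.hp D.eta_p
  obtain ⟨V, ε, hV, hε, hval⟩ := D.val_G hcard hχ
  obtain ⟨b, hb, hπ⟩ := orient hab0 D.hp hV hpa hε
  have hab : 4 * (p : ℤ) ^ classNumSqrtNeg l = a ^ 2 + (l : ℤ) * b ^ 2 := by rw [hb]; exact hab0
  obtain ⟨W, hW⟩ := exists_val D.hl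
  set h := classNumSqrtNeg l with hh
  have hf2 : f = 2 * (f / 2) := by have := D.f_AB; omega
  have hone : W.valuation ((p:ℂ) ^ (f / 2) - 1) < 1 := by
    have := (val_lt_iff D.hl hW (m := (p:ℤ) ^ (f / 2) - 1)).mpr D.p_half_l
    push_cast at this
    exact this
  have hA : ∀ t1 t2 k e : ℕ, t1 < r1 → t2 < r2 → GD l N (l ^ t1 * m ^ t2) (2 * k) →
      2 * e + h * (2 * k) = f →
      G p (χ ^ (l ^ t1 * m ^ t2)) = (p:ℂ) ^ e * Pi l a b ^ (2 * k) := by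
    intro t1 t2 k e h1 h2 hGD he
    have hc := D.core hχ hcard hV hab hπ hGD.1 (hval _ _ hGD).2 he
    have hX := D.X_cong hW hab he
    have hG' : W.valuation (G p (χ ^ (l ^ t1 * m ^ t2 * l ^ r1)) - 1) < 1 := by
      rw [D.case3 hχ hcard (dvd_mul_left _ _)]
      · exact hone
      · rw [mul_right_comm, ← pow_add]; exact D.not_dvd_B h2 _
    rcases hc with hc | hc
    · exact hc
    · have := D.sgn hχ hcard hW hX (s := -1) (u := 1) (Or.inr rfl) (Or.inl rfl)
        (by rw [hc, neg_one_mul]) hG'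
      norm_num at this
  refine ⟨a, b, hab, hcong, fun t1 t2 h1 h2 => ⟨fun hη => ?_, fun hη => ?_, ?_, ?_⟩⟩
  · have := hA t1 t2 0 (f / 2) h1 h2 (D.GD_A1 h1 h2 hη) (by omega)
    simpa using this
  · have hGD := D.GD_A2 h1 h2 hη
    have hle := (hval _ _ hGD).1
    have e1 : h * (2 * (l ^ t1 * m ^ t2)) = 2 * (h * (l ^ t1 * m ^ t2)) := by ring
    refine ⟨f / 2 - h * (l ^ t1 * m ^ t2), by omega, hA t1 t2 _ _ h1 h2 hGD (by omega)⟩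
  · exact D.case3 hχ hcard (dvd_mul_right _ _) (D.not_dvd_B h2 _)
  · obtain ⟨B, -, hB, -⟩ := D.totB
    have hGD := D.GD_B h1
    have e0 : l ^ t1 * Nat.totient (m ^ r2) = 2 * (l ^ t1 * B) := by rw [hB]; ring
    rw [mul_assoc, e0]
    rw [e0] at hGD
    have hle := (hval _ _ hGD).1
    have e1 : h * (2 * (l ^ t1 * B)) = 2 * (h * (l ^ t1 * B)) := by ring
    have he : 2 * (f / 2 - h * (l ^ t1 * B)) + h * (2 * (l ^ t1 * B)) = f := by omega
    refine ⟨_, he, ?_⟩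
    have hc := D.core hχ hcard hV hab hπ hGD.1 (hval _ _ hGD).2 he
    have hX := D.X_cong hW hab he
    rcases hc with hc | hc
    · have hG' : W.valuation (G p (χ ^ (l ^ t1 * m ^ r2 * l ^ r1)) - -1) < 1 := by
        have : χ ^ (l ^ t1 * m ^ r2 * l ^ r1) = 1 := by
          rw [← orderOf_dvd_iff_pow_eq_one, hχ, D.hN]
          exact ⟨l ^ t1, by ring⟩
        rw [this, G_one]; simp
      have := D.sgn hχ hcard hW hX (s := 1) (u := -1) (Or.inl rfl) (Or.inr rfl)
        (by rw [hc, one_mul]) hG'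
      norm_num at this
    · exact hc
end Hyp
end S18

theorem statement18 (p l1 l2 r1 r2 N f : ℕ) (hp : p.Prime)
    (hl1 : l1.Prime) (hl2 : l2.Prime) (hne : l1 ≠ l2)
    (hl1m : l1 % 4 = 3) (hl1gt : 3 < l1) (hl2odd : l2 % 2 = 1)
    (hr1 : 1 ≤ r1) (hr2 : 1 ≤ r2) (hN : N = l1 ^ r1 * l2 ^ r2) (hNp : Nat.gcd N p = 1)
    (hord1 : orderOf (p : ZMod (l1 ^ r1)) = Nat.totient (l1 ^ r1) / 2)
    (hord2 : orderOf (p : ZMod (l2 ^ r2)) = Nat.totient (l2 ^ r2))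
    (hf : orderOf (p : ZMod N) = f) (hind : f = Nat.totient N / 2)
    (F : Type) [Field F] [Fintype F] [Algebra (ZMod p) F]
    (hcard : Fintype.card F = p ^ f)
    (χ : MulChar F ℂ) (hχord : orderOf χ = N) :
    ∃ a b : ℤ,
      4 * (p : ℤ) ^ classNumSqrtNeg l1 = a ^ 2 + (l1 : ℤ) * b ^ 2 ∧
      a ≡ -2 * (p : ℤ) ^ ((l1 - 1 + 2 * classNumSqrtNeg l1) / 4) [ZMOD (l1 : ℤ)] ∧
      ∀ t1 t2 : ℕ, t1 < r1 → t2 < r2 →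
        (@legendreSym l1 ⟨hl1⟩ (l2 : ℤ) = 1 →
          gaussSumN p χ (l1 ^ t1 * l2 ^ t2) = (p : ℂ) ^ ((f : ℤ) / 2)) ∧
        (@legendreSym l1 ⟨hl1⟩ (l2 : ℤ) = -1 →
          gaussSumN p χ (l1 ^ t1 * l2 ^ t2) =
            (p : ℂ) ^ ((f : ℤ) / 2 - (classNumSqrtNeg l1 : ℤ) * ((l1 : ℤ) ^ t1 * (l2 : ℤ) ^ t2)) *
              (((a : ℂ) + (b : ℂ) * sqrtNeg l1) / 2) ^ (2 * (l1 ^ t1 * l2 ^ t2))) ∧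
        gaussSumN p χ (l1 ^ r1 * l2 ^ t2) = (p : ℂ) ^ ((f : ℤ) / 2) ∧
        gaussSumN p χ (l1 ^ t1 * l2 ^ r2) =
          -(p : ℂ) ^
              (((f : ℤ) - (classNumSqrtNeg l1 : ℤ) * (l1 : ℤ) ^ t1 * (Nat.totient (l2 ^ r2) : ℤ)) / 2) *
            (((a : ℂ) + (b : ℂ) * sqrtNeg l1) / 2) ^ (l1 ^ t1 * Nat.totient (l2 ^ r2)) := by
  haveI : Fact l1.Prime := ⟨hl1⟩
  haveI : Fact p.Prime := ⟨hp⟩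
  have D : S18.Hyp p l1 l2 r1 r2 N f :=
    ⟨hp, hl1, hl2, hne, hl1m, hl1gt, hl2odd, hr1, hr2, hN, hNp, hord1, hord2, hf, hind⟩
  obtain ⟨a, b, hab, hc, h⟩ := D.final hχord hcard
  have hf2 : f = 2 * (f / 2) := by have := D.f_AB; omega
  have hz : (f : ℤ) / 2 = ((f / 2 : ℕ) : ℤ) := by omega
  refine ⟨a, b, hab, hc, fun t1 t2 h1 h2 => ?_⟩
  obtain ⟨ha, hb, hc', hd⟩ := h t1 t2 h1 h2
  simp only [S18.gaussSumN_eq, legendreSym, Int.cast_natCast]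
  refine ⟨fun hη => ?_, fun hη => ?_, ?_, ?_⟩
  · rw [hz, zpow_natCast]; exact ha hη
  · obtain ⟨e, he, hg⟩ := hb hη
    have : (f : ℤ) / 2 - (classNumSqrtNeg l1 : ℤ) * ((l1 : ℤ) ^ t1 * (l2 : ℤ) ^ t2) = (e : ℤ) := by
      rw [hz, ← he]; push_cast; ring
    rw [this, zpow_natCast]; exact hg
  · rw [hz, zpow_natCast]; exact hc'
  · obtain ⟨e, he, hg⟩ := hd
    have : ((f : ℤ) - (classNumSqrtNeg l1 : ℤ) * (l1 : ℤ) ^ t1 * (Nat.totient (l2 ^ r2) : ℤ)) / 2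
        = (e : ℤ) := by
      have : (f : ℤ) - (classNumSqrtNeg l1 : ℤ) * (l1 : ℤ) ^ t1 * (Nat.totient (l2 ^ r2) : ℤ)
          = 2 * e := by
        conv_lhs => rw [← he]
        push_cast; ring
      omega
    rw [this, zpow_natCast, hg, S18.Pi]; ring
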